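/- arXiv:math/0608391 — 4 statements merged into one kernel-verified Lean document; each statement's English description precedes it below -/
import Mathlib

section
/- Let C be a wreath-closed permutation class containing only finitely many simple permutations, let 𝒫 be a finite query-complete set of properties, and let 𝒬 ⊆ 𝒫. Then the generating function of the set of involutions in C that satisfy every property in 𝒬 is algebraic over ℚ[x]. -/
/-- A permutation of length `n`. -/
abbrev Perm (n : ℕ) := Equiv.Perm (Fin n)

/-- `σ` is contained in `π`: there is a strictly increasing sequence of indices of `π`
on which `π` is order isomorphic to `σ`. -/
def Contains {m n : ℕ} (σ : Perm m) (π : Perm n) : Prop :=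
  ∃ f : Fin m → Fin n, StrictMono f ∧ ∀ s t : Fin m, π (f s) < π (f t) ↔ σ s < σ t

/-- A permutation class: a downset in the containment order. -/
def IsPermClass (C : ∀ n, Set (Perm n)) : Prop :=
  ∀ ⦃m n : ℕ⦄ (σ : Perm m) (π : Perm n), π ∈ C n → Contains σ π → σ ∈ C m

/-- A set of contiguous values. -/
def IsRange {n : ℕ} (I : Finset (Fin n)) : Prop :=
  ∀ ⦃i j l : Fin n⦄, i ∈ I → l ∈ I → i ≤ j → j ≤ l → j ∈ I

/-- An interval of `π`: a set of contiguous indices mapped to a set of contiguous values. -/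
def IsPermInterval {n : ℕ} (π : Perm n) (I : Finset (Fin n)) : Prop :=
  IsRange I ∧ IsRange (I.image π)

/-- A permutation is simple if its only intervals have size `0`, `1`, or `n`. -/
def IsSimple {n : ℕ} (π : Perm n) : Prop :=
  ∀ I : Finset (Fin n), IsPermInterval π I → I.card ≤ 1 ∨ I.card = n

/-- The set of simple permutations belonging to the class `C` is finite. -/
def FinitelyManySimples (C : ∀ n, Set (Perm n)) : Prop :=
  {p : Σ n : ℕ, Perm n | p.2 ∈ C p.1 ∧ IsSimple p.2}.Finite

/-- The generating function `∑_{n ≥ 1} |S_n| xⁿ` of a set of permutations. -/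
noncomputable def genFun (S : ∀ n, Set (Perm n)) : PowerSeries ℚ :=
  PowerSeries.mk fun n => if n = 0 then 0 else (Nat.card (S n) : ℚ)

/-- A power series `f` is algebraic over `ℚ[x]` if there is a nonzero polynomial
`P(x,y) ∈ ℚ[x][y]` with `P(x,f) = 0`. -/
def IsAlgebraicOverQx (f : PowerSeries ℚ) : Prop :=
  ∃ P : Polynomial (Polynomial ℚ), P ≠ 0 ∧
    Polynomial.eval₂ Polynomial.coeToPowerSeries.ringHom f P = 0

/-- `π` is the inflation `σ[α 0, …, α (m-1)]` of `σ` by the nonempty permutations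
`α i` (of lengths `k i ≥ 1`): `π` has length `∑ i, k i` and its value at position
`(∑_{t < i} k t) + j` equals `(∑_{t : σ t < σ i} k t) + α i j`. -/
def IsInflation {N m : ℕ} {k : Fin m → ℕ} (σ : Perm m) (α : ∀ i, Perm (k i))
    (π : Perm N) : Prop :=
  (∀ i, 0 < k i) ∧ N = ∑ i, k i ∧
    ∀ (i : Fin m) (j : Fin (k i)) (p : Fin N),
      (p : ℕ) = (∑ t ∈ Finset.univ.filter fun t => t < i, k t) + (j : ℕ) →
      (π p : ℕ) = (∑ t ∈ Finset.univ.filter fun t => σ t < σ i, k t) + (α i j : ℕ)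

/-- `C` is wreath-closed: any inflation of a member of `C` by members of `C`
lies in `C`. -/
def WreathClosed (C : ∀ n, Set (Perm n)) : Prop :=
  ∀ ⦃m N : ℕ⦄ (σ : Perm m) (k : Fin m → ℕ) (α : ∀ i, Perm (k i)) (π : Perm N),
    σ ∈ C m → (∀ i, α i ∈ C (k i)) → IsInflation σ α π → π ∈ C N

/-- A set `Ps` of properties (a property is a set of permutations) is query-complete:
whether an inflation `σ[α 0, …, α (m-1)]` satisfies a property `P ∈ Ps` depends only on
`σ` and on which properties of `Ps` each `α i` satisfies. -/
def QueryComplete (Ps : Set (∀ n, Set (Perm n))) : Prop :=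
  ∀ ⦃m : ℕ⦄ (σ : Perm m) (k k' : Fin m → ℕ)
    (α : ∀ i, Perm (k i)) (α' : ∀ i, Perm (k' i)),
    (∀ i : Fin m, ∀ Q ∈ Ps, α i ∈ Q (k i) ↔ α' i ∈ Q (k' i)) →
    ∀ P ∈ Ps, ∀ ⦃N N' : ℕ⦄ (π : Perm N) (π' : Perm N'),
      IsInflation σ α π → IsInflation σ α' π' → (π ∈ P N ↔ π' ∈ P N')

/-- A domain of finite type all of whose differentials vanish over its fraction field is
algebraic over the base. -/
theorem isAlgebraic_of_kaehler_eq_zero (R B : Type) [CommRing R] [IsDomain R] [CommRing B]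
    [IsDomain B] [Algebra R B] [FaithfulSMul R B] [Algebra.FiniteType R B]
    (h : ∀ b : B, KaehlerDifferential.D R (FractionRing B) (algebraMap B (FractionRing B) b) = 0) :
    Algebra.IsAlgebraic R B := by
  let K := FractionRing R
  let L := FractionRing B
  let _ : Algebra K L := FractionRing.liftAlgebra R L
  have : IsScalarTower R K L := FractionRing.isScalarTower_liftAlgebra R L
  have h0 : ∀ x : L, KaehlerDifferential.D R L x = 0 := by
    intro x
    obtain ⟨a, b, hb, rfl⟩ := IsFractionRing.div_surjective (A := B) x
    rw [Derivation.leibniz_div, h a, h b]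
    simp
  have hsub : Subsingleton (Ω[L⁄R]) := by
    rw [← Submodule.subsingleton_iff L, ← subsingleton_iff_bot_eq_top,
      ← KaehlerDifferential.span_range_derivation]
    symm
    rw [Submodule.span_eq_bot]
    rintro _ ⟨x, rfl⟩
    exact h0 x
  have : Algebra.FormallyUnramified R L := ⟨hsub⟩
  have : Algebra.FormallyUnramified K L := Algebra.FormallyUnramified.of_restrictScalars R K L
  have : Algebra.EssFiniteType B L := Algebra.EssFiniteType.of_isLocalization L (nonZeroDivisors B)
  have : Algebra.EssFiniteType R L := Algebra.EssFiniteType.comp R B L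
  have : Algebra.EssFiniteType K L := Algebra.EssFiniteType.of_comp R K L
  have : Algebra.IsSeparable K L := Algebra.FormallyUnramified.isSeparable K L
  have : Algebra.IsAlgebraic R L :=
    (IsFractionRing.comap_isAlgebraic_iff (K := K)).mpr inferInstance
  exact ⟨fun b => (isAlgebraic_algebraMap_iff
    (FaithfulSMul.algebraMap_injective B L)).mp (this.isAlgebraic (algebraMap B L b))⟩

/-- A solution of a polynomial system whose Jacobian is unipotent modulo an ideal `I` is
algebraic. -/
theorem isAlgebraic_of_mem_add_sq {R B ι : Type} [CommRing R] [IsDomain R] [CommRing B]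
    [IsDomain B] [Algebra R B] [FaithfulSMul R B] [Finite ι] (u : ι → B)
    (hu : Algebra.adjoin R (Set.range u) = ⊤) (I : Ideal B) (hI : I ≠ ⊤)
    (h : ∀ i, ∃ p : R, ∃ y ∈ I ^ 2, u i = algebraMap R B p + y) :
    Algebra.IsAlgebraic R B := by
  have : Algebra.FiniteType R B := ⟨⟨(Set.finite_range u).toFinset, by simpa using hu⟩⟩
  apply isAlgebraic_of_kaehler_eq_zero
  let L := FractionRing B
  let D : Derivation R B (Ω[L⁄R]) := (KaehlerDifferential.D R L).compAlgebraMap B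
  let N : Submodule B (Ω[L⁄R]) := Submodule.span B (Set.range fun i => D (u i))
  have hN : ∀ b, D b ∈ N := by
    intro b
    have hb : b ∈ Algebra.adjoin R (Set.range u) := by rw [hu]; trivial
    induction hb using Algebra.adjoin_induction with
    | mem x hx =>
      obtain ⟨i, rfl⟩ := hx
      exact Submodule.subset_span ⟨i, rfl⟩
    | algebraMap r => simp
    | add x y _ _ hx hy => rw [map_add]; exact N.add_mem hx hy
    | mul x y _ _ hx hy =>
      rw [Derivation.leibniz]; exact N.add_mem (N.smul_mem _ hy) (N.smul_mem _ hx)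
  have hsq : ∀ y ∈ I ^ 2, D y ∈ I • N := by
    intro y hy
    rw [pow_two] at hy
    induction hy using Submodule.mul_induction_on' with
    | mem_mul_mem a ha b hb =>
      rw [Derivation.leibniz]
      exact add_mem (Submodule.smul_mem_smul ha (hN b)) (Submodule.smul_mem_smul hb (hN a))
    | add x _ y _ hx hy => rw [map_add]; exact add_mem hx hy
  have hle : N ≤ I • N := by
    refine Submodule.span_le.mpr ?_
    rintro _ ⟨i, rfl⟩
    obtain ⟨p, y, hy, hi⟩ := h i
    have : D (u i) = D y := by rw [hi, map_add]; simp
    simpa [this] using hsq y hy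
  have hfg : N.FG := Submodule.fg_span (Set.finite_range _)
  obtain ⟨r, hr, hrN⟩ :=
    Submodule.exists_sub_one_mem_and_smul_eq_zero_of_fg_of_le_smul I N hfg hle
  have hr0 : r ≠ 0 := by
    rintro rfl
    apply hI
    rw [Ideal.eq_top_iff_one]
    simpa using I.neg_mem hr
  intro b
  have h1 := hrN (D b) (hN b)
  rw [← algebraMap_smul L r, smul_eq_zero] at h1
  rcases h1 with h1 | h1
  · exact absurd h1 (by simpa using hr0)
  · exact h1

open PowerSeries in
/-- A finite family of power series without constant term solving a polynomial system whose
right hand sides have no linear terms consists of algebraic power series. -/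
theorem PowerSeries.isAlgebraic_of_mem_add_mul {ι : Type} [Finite ι] (U : ι → ℚ⟦X⟧)
    (J : Submodule (Polynomial ℚ) ℚ⟦X⟧)
    (hJ : ∀ y ∈ J, y ∈ Algebra.adjoin (Polynomial ℚ) (Set.range U) ∧ constantCoeff y = 0)
    (hU : ∀ i, U i ∈ 1 ⊔ J * J) (i : ι) : IsAlgebraic (Polynomial ℚ) (U i) := by
  let B := Algebra.adjoin (Polynomial ℚ) (Set.range U)
  let I : Ideal B := RingHom.ker ((constantCoeff (R := ℚ)).comp B.val.toRingHom)
  have hsub : Set.range U ⊆ B := Algebra.subset_adjoin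
  let u : ι → B := fun i => ⟨U i, hsub ⟨i, rfl⟩⟩
  have hinj : Function.Injective (algebraMap (Polynomial ℚ) ℚ⟦X⟧) := by
    intro p q hpq
    exact Polynomial.coe_injective ℚ (by simpa [PowerSeries.algebraMap_apply'] using hpq)
  have : FaithfulSMul (Polynomial ℚ) B := by
    rw [faithfulSMul_iff_algebraMap_injective]
    intro p q hpq
    exact hinj (congrArg B.val hpq)
  have halg : Algebra.IsAlgebraic (Polynomial ℚ) B := by
    refine isAlgebraic_of_mem_add_sq u ?_ I ?_ ?_
    · have hr : Set.range u = Subtype.val ⁻¹' Set.range U := by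
        ext x
        simp [u, Subtype.ext_iff]
      rw [hr]
      exact Algebra.adjoin_adjoin_coe_preimage
    · rw [Ne, Ideal.eq_top_iff_one]
      simp [I, RingHom.mem_ker]
    · intro i
      obtain ⟨p, hp, y, hy, hpy⟩ := Submodule.mem_sup.mp (hU i)
      obtain ⟨p, rfl⟩ := Submodule.mem_one.mp hp
      have key : ∃ z ∈ I ^ 2, (z : ℚ⟦X⟧) = y := by
        clear hpy
        induction hy using Submodule.mul_induction_on' with
        | mem_mul_mem a ha b hb =>
          refine ⟨⟨a, (hJ a ha).1⟩ * ⟨b, (hJ b hb).1⟩, ?_, rfl⟩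
          rw [pow_two]
          exact Ideal.mul_mem_mul (hJ a ha).2 (hJ b hb).2
        | add x _ y _ hx hy =>
          obtain ⟨a, ha, rfl⟩ := hx
          obtain ⟨b, hb, rfl⟩ := hy
          exact ⟨a + b, add_mem ha hb, rfl⟩
      obtain ⟨z, hz, rfl⟩ := key
      exact ⟨p, z, hz, Subtype.ext hpy.symm⟩
  exact (isAlgebraic_algebraMap_iff (A := ℚ⟦X⟧) (a := u i) Subtype.val_injective).mpr
    (halg.isAlgebraic (u i))

open PowerSeries in
/-- The generating function of a type whose elements are weighted by `s`. -/
noncomputable def sizeGF {A : Type} (s : A → ℕ) : ℚ⟦X⟧ :=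
  PowerSeries.mk fun n => (Nat.card {a // s a = n} : ℚ)

theorem sizeGF_equiv {A B : Type} {s : A → ℕ} {t : B → ℕ} (e : A ≃ B) (h : ∀ a, t (e a) = s a) :
    sizeGF s = sizeGF t := by
  ext n
  simp only [sizeGF, PowerSeries.coeff_mk, Nat.cast_inj]
  exact Nat.card_congr (e.subtypeEquiv fun a => by rw [h])

theorem sizeGF_bijective {A B : Type} {s : A → ℕ} {t : B → ℕ} (f : A → B)
    (hf : Function.Bijective f) (h : ∀ a, t (f a) = s a) : sizeGF s = sizeGF t :=
  sizeGF_equiv (Equiv.ofBijective f hf) h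

theorem sizeGF_sum_fiber {A B : Type} [Fintype B] (s : A → ℕ) (hs : ∀ n, Finite {a // s a = n})
    (κ : A → B) : sizeGF s = ∑ b, sizeGF fun a : {a // κ a = b} => s a := by
  ext n
  simp only [sizeGF, PowerSeries.coeff_mk, map_sum]
  rw [← Nat.cast_sum, Nat.cast_inj]
  have := hs n
  have hfin : ∀ b, Finite {a : {a // κ a = b} // s a = n} := fun b =>
    Finite.of_injective (β := {a // s a = n}) (fun a => ⟨a.1.1, a.2⟩) fun a a' h =>
      Subtype.ext (Subtype.ext (Subtype.mk.inj h))
  rw [← Nat.card_sigma]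
  refine Nat.card_congr
    { toFun := fun a => ⟨κ a.1, ⟨⟨a.1, rfl⟩, a.2⟩⟩
      invFun := fun x => ⟨x.2.1.1, x.2.2⟩
      left_inv := fun a => rfl
      right_inv := ?_ }
  rintro ⟨b, ⟨⟨a, rfl⟩, ha⟩⟩
  rfl

theorem sizeGF_mem_of_classify (Z : AddSubmonoid (PowerSeries ℚ)) {A B : Type} [Finite B]
    (s : A → ℕ) (hs : ∀ n, Finite {a // s a = n}) (r : A → B → Prop) (hr : ∀ a, ∃! b, r a b)
    (h : ∀ b, (sizeGF fun a : {a // r a b} => s a) ∈ Z) : sizeGF s ∈ Z := by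
  have := Fintype.ofFinite B
  choose κ hκ hκ' using hr
  rw [sizeGF_sum_fiber s hs κ]
  refine Z.sum_mem fun b _ => ?_
  convert h b using 1
  refine sizeGF_equiv (Equiv.subtypeEquivRight fun a => ⟨?_, ?_⟩) fun a => rfl
  · rintro rfl
    exact hκ a
  · intro hb
    exact (hκ' a b hb).symm

theorem sizeGF_isEmpty {A : Type} [IsEmpty A] (s : A → ℕ) : sizeGF s = 0 := by
  ext n
  simp [sizeGF]

theorem sizeGF_finite {A : Type} [Finite A] (s : A → ℕ) :
    sizeGF s ∈ (1 : Submodule (Polynomial ℚ) (PowerSeries ℚ)) := by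
  refine sizeGF_mem_of_classify (Submodule.toAddSubmonoid 1) (B := A) s
    (fun n => inferInstance) (fun a b => a = b) (fun a => ⟨a, rfl, fun b h => h.symm⟩) fun b => ?_
  refine Submodule.mem_one.mpr ⟨Polynomial.X ^ s b, ?_⟩
  ext n
  simp only [sizeGF, PowerSeries.coeff_mk, PowerSeries.algebraMap_apply',
    Polynomial.coe_X, map_pow, PowerSeries.map_X, PowerSeries.coeff_X_pow]
  split_ifs with h
  · subst h
    have : Unique {a : {a // a = b} // s a = s b} :=
      ⟨⟨⟨⟨b, rfl⟩, rfl⟩⟩, fun x => by ext; exact x.1.2⟩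
    simp
  · have : IsEmpty {a : {a // a = b} // s a = n} := ⟨fun x => h (by rw [← x.2, x.1.2])⟩
    simp

theorem sizeGF_mul {A B : Type} (s : A → ℕ) (t : B → ℕ) (hs : ∀ n, Finite {a // s a = n})
    (ht : ∀ n, Finite {b // t b = n}) :
    sizeGF (fun x : A × B => s x.1 + t x.2) = sizeGF s * sizeGF t := by
  ext n
  rw [PowerSeries.coeff_mul]
  simp only [sizeGF, PowerSeries.coeff_mk]
  rw [← Finset.sum_coe_sort]
  simp only [← Nat.cast_mul, ← Nat.card_prod]
  rw [← Nat.cast_sum, Nat.cast_inj, ← Nat.card_sigma]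
  refine Nat.card_congr
    { toFun := fun x => ⟨⟨(s x.1.1, t x.1.2), by simpa using x.2⟩, ⟨x.1.1, rfl⟩, ⟨x.1.2, rfl⟩⟩
      invFun := fun x => ⟨(x.2.1, x.2.2), by
        rw [x.2.1.2, x.2.2.2]; exact Finset.HasAntidiagonal.mem_antidiagonal.mp x.1.2⟩
      left_inv := fun a => rfl
      right_inv := ?_ }
  rintro ⟨⟨⟨i, j⟩, h⟩, ⟨a, ha⟩, ⟨b, hb⟩⟩
  simp only at ha hb
  subst ha hb
  rfl

theorem sizeGF_pi {ι : Type} [Fintype ι] {A : ι → Type} (s : ∀ i, A i → ℕ)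
    (hs : ∀ i n, Finite {a // s i a = n}) :
    sizeGF (fun x : ∀ i, A i => ∑ i, s i (x i)) = ∏ i, sizeGF (s i) := by
  classical
  ext n
  rw [PowerSeries.coeff_prod]
  simp only [sizeGF, PowerSeries.coeff_mk]
  rw [← Finset.sum_coe_sort]
  simp only [← Nat.cast_prod, ← Nat.card_pi]
  have := fun (l : Finset.univ.finsuppAntidiag n) i => hs i (l.1 i)
  rw [← Nat.cast_sum, Nat.cast_inj, ← Nat.card_sigma]
  refine Nat.card_congr
    { toFun := fun x => ⟨⟨Finsupp.equivFunOnFinite.symm fun i => s i (x.1 i), by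
        simpa [Finset.mem_finsuppAntidiag] using x.2⟩, fun i => ⟨x.1 i, rfl⟩⟩
      invFun := fun x => ⟨fun i => x.2 i, by
        have h1 := (Finset.mem_finsuppAntidiag.mp x.1.2).1
        refine Eq.trans ?_ h1
        exact Finset.sum_congr rfl fun i _ => (x.2 i).2⟩
      left_inv := fun a => rfl
      right_inv := ?_ }
  rintro ⟨⟨l, h⟩, x⟩
  obtain ⟨y, hy, rfl⟩ : ∃ y : ∀ i, A i, ∃ hy : ∀ i, s i (y i) = l i, x = fun i => ⟨y i, hy i⟩ :=
    ⟨fun i => (x i).1, fun i => (x i).2, rfl⟩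
  have hl : l = Finsupp.equivFunOnFinite.symm fun i => s i (y i) := by
    ext i
    exact (hy i).symm
  subst hl
  rfl

theorem constantCoeff_sizeGF {A : Type} (s : A → ℕ) (hs : ∀ a, s a ≠ 0) :
    PowerSeries.constantCoeff (sizeGF s) = 0 := by
  have : IsEmpty {a // s a = 0} := ⟨fun a => hs _ a.2⟩
  rw [← PowerSeries.coeff_zero_eq_constantCoeff_apply]
  simp [sizeGF]

/-- A permutation of arbitrary length. -/
abbrev AnyPerm := Σ n, Perm n

/-- The inverse of a permutation of arbitrary length. -/
def anyInv (p : AnyPerm) : AnyPerm := ⟨p.1, p.2⁻¹⟩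

theorem anyInv_anyInv (p : AnyPerm) : anyInv (anyInv p) = p := by
  change (⟨p.1, p.2⁻¹⁻¹⟩ : AnyPerm) = p
  rw [inv_inv]

/-- `p` is the permutation obtained from a set of points with positions `u` and values `v`
by standardization. -/
def IsStd (p : AnyPerm) {X L₁ L₂ : Type} [LinearOrder L₁] [LinearOrder L₂]
    (u : X → L₁) (v : X → L₂) : Prop :=
  ∃ e : Fin p.1 ≃ X, StrictMono (fun i => u (e i)) ∧ StrictMono fun i => v (e (p.2⁻¹ i))

section IsStd

variable {X Y L₁ L₂ : Type} [LinearOrder L₁] [LinearOrder L₂] {u : X → L₁} {v : X → L₂}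

theorem enum_unique {n : ℕ} {e e' : Fin n ≃ X} (h : StrictMono fun i => u (e i))
    (h' : StrictMono fun i => u (e' i)) : e = e' := by
  have hu : Function.Injective u := fun x y hxy => by
    have := h.injective (a₁ := e.symm x) (a₂ := e.symm y) (by simpa using hxy)
    simpa using this
  have hr : (Set.range fun i => u (e i)) = Set.range fun i => u (e' i) := by
    have h1 := e.surjective.range_comp u
    have h2 := e'.surjective.range_comp u
    exact h1.trans h2.symm
  ext i
  exact hu (congrFun ((StrictMono.range_inj h h').mp hr) i)

theorem exists_enum [Finite X] (hu : Function.Injective u) :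
    ∃ e : Fin (Nat.card X) ≃ X, StrictMono fun i => u (e i) := by
  let _ : LinearOrder X := LinearOrder.lift' u hu
  have := Fintype.ofFinite X
  exact ⟨(Fintype.orderIsoFinOfCardEq X Nat.card_eq_fintype_card.symm).toEquiv,
    fun i j hij => (Fintype.orderIsoFinOfCardEq X Nat.card_eq_fintype_card.symm).strictMono hij⟩

theorem IsStd.unique {p p' : AnyPerm} (h : IsStd p u v) (h' : IsStd p' u v) : p = p' := by
  obtain ⟨n, π⟩ := p
  obtain ⟨n', π'⟩ := p'
  obtain ⟨e, hu, hv⟩ := h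
  obtain ⟨e', hu', hv'⟩ := h'
  obtain rfl : n = n' := Fin.equiv_iff_eq.mp ⟨e.trans e'.symm⟩
  obtain rfl := enum_unique hu hu'
  have := enum_unique (u := v) (e := (π⁻¹).trans e) (e' := (π'⁻¹).trans e) hv hv'
  have h2 : π⁻¹ = π'⁻¹ := by
    ext1 i
    simpa using Equiv.congr_fun this i
  rw [inv_inj.mp h2]

theorem exists_isStd [Finite X] (hu : Function.Injective u) (hv : Function.Injective v) :
    ∃ p, IsStd p u v := by
  obtain ⟨e, he⟩ := exists_enum hu
  obtain ⟨f, hf⟩ := exists_enum hv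
  refine ⟨⟨Nat.card X, (f.trans e.symm)⁻¹⟩, e, he, ?_⟩
  simpa using hf

theorem IsStd.inv {p : AnyPerm} (h : IsStd p u v) : IsStd (anyInv p) v u := by
  obtain ⟨e, hu, hv⟩ := h
  refine ⟨(p.2⁻¹).trans e, hv, ?_⟩
  intro i j hij
  have : ∀ i : Fin p.1, p.2⁻¹ (p.2⁻¹⁻¹ i) = i := fun i => by simp
  exact (congrArg (fun k => u (e k)) (this i)).trans_lt
    ((hu hij).trans_eq (congrArg (fun k => u (e k)) (this j)).symm)

theorem IsStd.comp {p : AnyPerm} (h : IsStd p u v) (f : Y ≃ X) :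
    IsStd p (fun y => u (f y)) (fun y => v (f y)) := by
  obtain ⟨e, hu, hv⟩ := h
  exact ⟨e.trans f.symm, by simpa using hu, by simpa using hv⟩

theorem IsStd.congr {p : AnyPerm} {u' : Y → L₁} {v' : Y → L₂} (h : IsStd p u v) (f : Y ≃ X)
    (hu : ∀ y, u' y = u (f y)) (hv : ∀ y, v' y = v (f y)) : IsStd p u' v' := by
  obtain rfl : u' = fun y => u (f y) := funext hu
  obtain rfl : v' = fun y => v (f y) := funext hv
  exact h.comp f

theorem IsStd.length_eq {p : AnyPerm} (h : IsStd p u v) : p.1 = Nat.card X := by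
  obtain ⟨e, -, -⟩ := h
  simpa using Nat.card_congr e

/-- If `g` identifies the point set of a standardization with that of another in a way
respecting both orders, the standardizations agree. -/
theorem IsStd.of_equiv {M₁ M₂ : Type} [LinearOrder M₁] [LinearOrder M₂] {p : AnyPerm}
    {u' : Y → M₁} {v' : Y → M₂} (h : IsStd p u v) (g : Y ≃ X)
    (hu' : Function.Injective u') (hv' : Function.Injective v')
    (hu : ∀ x y, u' x < u' y → u (g x) < u (g y)) (hv : ∀ x y, v' x < v' y → v (g x) < v (g y)) :
    IsStd p u' v' := by
  obtain ⟨e, heu, hev⟩ := h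
  refine ⟨e.trans g.symm, fun i j hij => ?_, fun i j hij => ?_⟩
  · have h1 := heu hij
    by_contra h2
    rcases (not_lt.mp h2).lt_or_eq with h3 | h3
    · have := hu _ _ h3
      simp at this
      exact lt_asymm h1 this
    · have := hu' h3
      simp at this
      exact hij.ne' this
  · have h1 := hev hij
    by_contra h2
    rcases (not_lt.mp h2).lt_or_eq with h3 | h3
    · have := hv _ _ h3
      simp at this
      exact lt_asymm h1 this
    · have := hv' h3
      simp at this
      exact hij.ne' this

end IsStd

/-- The position of a point of an inflation with `m` blocks. -/
def inflPos {m : ℕ} (α : Fin m → AnyPerm) (x : Σ i, Fin (α i).1) : Fin m ×ₗ ℕ :=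
  toLex (x.1, (x.2 : ℕ))

/-- The value of a point of the inflation of `σ` by the `α i`. -/
def inflVal {m : ℕ} (σ : Perm m) (α : Fin m → AnyPerm) (x : Σ i, Fin (α i).1) : Fin m ×ₗ ℕ :=
  toLex (σ x.1, ((α x.1).2 x.2 : ℕ))

theorem inflVal_injective {m : ℕ} (σ : Perm m) (α : Fin m → AnyPerm) :
    Function.Injective (inflVal σ α) := by
  rintro ⟨i, a⟩ ⟨j, b⟩ h
  simp only [inflVal, EmbeddingLike.apply_eq_iff_eq, Prod.mk.injEq] at h
  obtain ⟨rfl, h⟩ := h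
  simpa [Fin.val_inj] using h

theorem inflPos_injective {m : ℕ} (α : Fin m → AnyPerm) : Function.Injective (inflPos α) := by
  rintro ⟨i, a⟩ ⟨j, b⟩ h
  simp only [inflPos, EmbeddingLike.apply_eq_iff_eq, Prod.mk.injEq] at h
  obtain ⟨rfl, h⟩ := h
  simpa [Fin.val_inj] using h

/-- The inflation `σ[α 0, …, α (m-1)]`. -/
noncomputable def infl {m : ℕ} (σ : Perm m) (α : Fin m → AnyPerm) : AnyPerm :=
  (exists_isStd (inflPos_injective α) (inflVal_injective σ α)).choose

theorem isStd_infl {m : ℕ} (σ : Perm m) (α : Fin m → AnyPerm) :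
    IsStd (infl σ α) (inflPos α) (inflVal σ α) :=
  (exists_isStd (inflPos_injective α) (inflVal_injective σ α)).choose_spec

theorem infl_length {m : ℕ} (σ : Perm m) (α : Fin m → AnyPerm) :
    (infl σ α).1 = ∑ i, (α i).1 := by
  rw [(isStd_infl σ α).length_eq, Nat.card_eq_fintype_card, Fintype.card_sigma]
  simp

theorem anyInv_infl {m : ℕ} (σ : Perm m) (α : Fin m → AnyPerm) :
    anyInv (infl σ α) = infl σ⁻¹ fun i => anyInv (α (σ⁻¹ i)) := by
  refine IsStd.unique ((isStd_infl σ α).inv.congr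
    ((Equiv.sigmaCongrRight fun i => ((α (σ⁻¹ i)).2⁻¹ : Perm _)).trans
      (Equiv.sigmaCongrLeft (β := fun i => Fin (α i).1) σ⁻¹)) ?_ ?_)
    (isStd_infl σ⁻¹ fun i => anyInv (α (σ⁻¹ i)))
  · rintro ⟨i, a⟩
    simp only [inflPos, inflVal, Equiv.sigmaCongrRight, Equiv.sigmaCongrLeft, Equiv.trans_apply,
      Equiv.coe_fn_mk]
    have h1 : σ (σ⁻¹ i) = i := σ.apply_symm_apply i
    have h2 : (α (σ⁻¹ i)).2 ((α (σ⁻¹ i)).2⁻¹ a) = a := (α (σ⁻¹ i)).2.apply_symm_apply a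
    exact congrArg toLex (Prod.ext h1.symm (congrArg Fin.val h2.symm))
  · rintro ⟨i, a⟩
    simp only [inflPos, inflVal, anyInv, Equiv.sigmaCongrRight, Equiv.sigmaCongrLeft,
      Equiv.trans_apply, Equiv.coe_fn_mk]
    rfl

theorem card_inflVal_lt {m : ℕ} (σ : Perm m) (α : Fin m → AnyPerm) (i : Fin m)
    (j : Fin (α i).1) :
    (Finset.univ.filter fun x => inflVal σ α x < inflVal σ α ⟨i, j⟩).card
      = (∑ t ∈ Finset.univ.filter fun t => σ t < σ i, (α t).1) + ((α i).2 j : ℕ) := by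
  have hset : (Finset.univ.filter fun x => inflVal σ α x < inflVal σ α ⟨i, j⟩)
      = Finset.univ.sigma fun t => Finset.univ.filter fun s : Fin (α t).1 =>
          inflVal σ α ⟨t, s⟩ < inflVal σ α ⟨i, j⟩ := by
    ext x
    simp
  rw [hset, Finset.card_sigma, Finset.sum_filter,
    ← Finset.sum_erase_add _ _ (Finset.mem_univ i),
    ← Finset.sum_erase_add (a := i) _ (fun t => if σ t < σ i then (α t).1 else 0)
      (Finset.mem_univ i)]
  simp only [lt_irrefl, if_false, add_zero]
  congr 1
  · refine Finset.sum_congr rfl fun t ht => ?_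
    have hne : σ t ≠ σ i := by simpa using (Finset.mem_erase.mp ht).1
    simp only [inflVal, Prod.Lex.toLex_lt_toLex, hne, false_and, or_false]
    split_ifs with h <;> simp [h]
  · simp only [inflVal, Prod.Lex.toLex_lt_toLex, lt_irrefl, false_or, true_and, Fin.val_fin_lt]
    have : (Finset.univ.filter fun s => (α i).2 s < (α i).2 j)
        = (Finset.Iio ((α i).2 j)).map ((α i).2⁻¹ : Perm _).toEmbedding := by
      ext s
      simp [Equiv.Perm.inv_def]
    rw [this, Finset.card_map, Fin.card_Iio]

theorem card_inflPos_lt {m : ℕ} (α : Fin m → AnyPerm) (i : Fin m) (j : Fin (α i).1) :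
    (Finset.univ.filter fun x => inflPos α x < inflPos α ⟨i, j⟩).card
      = (∑ t ∈ Finset.univ.filter fun t => t < i, (α t).1) + (j : ℕ) :=
  card_inflVal_lt 1 (fun i => ⟨(α i).1, 1⟩) i j

theorem card_lt_of_strictMono {X L : Type} [LinearOrder L] [Fintype X] {n : ℕ} {u : X → L}
    {e : Fin n ≃ X} (h : StrictMono fun i => u (e i)) (x : X) :
    (Finset.univ.filter fun y => u y < u x).card = e.symm x := by
  have : (Finset.univ.filter fun y => u y < u x) = (Finset.Iio (e.symm x)).map e.toEmbedding := by
    ext y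
    have := h.lt_iff_lt (a := e.symm y) (b := e.symm x)
    simp only [Equiv.apply_symm_apply] at this
    simp [this]
  rw [this, Finset.card_map, Fin.card_Iio]

theorem isInflation_infl {m : ℕ} (σ : Perm m) (α : Fin m → AnyPerm) (h : ∀ i, 0 < (α i).1) :
    IsInflation σ (fun i => (α i).2) (infl σ α).2 := by
  refine ⟨h, infl_length σ α, fun i j p hp => ?_⟩
  obtain ⟨e, hu, hv⟩ := isStd_infl σ α
  have h1 := card_lt_of_strictMono hu ⟨i, j⟩
  rw [card_inflPos_lt, ← hp] at h1
  have h2 : p = e.symm ⟨i, j⟩ := Fin.ext h1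
  have h3 := card_lt_of_strictMono (e := ((infl σ α).2⁻¹).trans e) hv ⟨i, j⟩
  rw [card_inflVal_lt] at h3
  rw [h2, h3]
  simp [Equiv.Perm.inv_def]

/-- `q` maps the points of `π` with positions in `S` onto the points of `σ`, so that the points
in `S` form an inflation of `σ` by the fibres of `q`. -/
structure IsQuot {N m : ℕ} (π : Perm N) (S : Set (Fin N)) (σ : Perm m)
    (q : Fin N → Fin m) : Prop where
  surj : ∀ i, ∃ x ∈ S, q x = i
  pos : ∀ x ∈ S, ∀ y ∈ S, q x < q y → x < y
  val : ∀ x ∈ S, ∀ y ∈ S, σ (q x) < σ (q y) → π x < π y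

/-- The pattern of `π` on a set of positions. -/
noncomputable def pat {N : ℕ} (π : Perm N) (S : Set (Fin N)) : AnyPerm :=
  (exists_isStd (X := S) (u := fun x => x.1) (v := fun x => π x.1) Subtype.val_injective
    (π.injective.comp Subtype.val_injective)).choose

section Quotients

variable {N m n : ℕ} {π : Perm N} {S : Set (Fin N)} {σ : Perm m} {q : Fin N → Fin m}

theorem isStd_pat (π : Perm N) (S : Set (Fin N)) :
    IsStd (pat π S) (fun x : S => x.1) (fun x : S => π x.1) :=
  (exists_isStd (X := S) (u := fun x => x.1) (v := fun x => π x.1) Subtype.val_injective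
    (π.injective.comp Subtype.val_injective)).choose_spec

theorem pat_length (π : Perm N) (S : Set (Fin N)) : (pat π S).1 = Nat.card S :=
  (isStd_pat π S).length_eq

theorem pat_pos {x : Fin N} (hx : x ∈ S) : 0 < (pat π S).1 := by
  rw [pat_length]
  have : Nonempty S := ⟨⟨x, hx⟩⟩
  exact Nat.card_pos

theorem pat_univ (π : Perm N) : pat π Set.univ = ⟨N, π⟩ := by
  refine (isStd_pat π Set.univ).unique ⟨(Equiv.Set.univ (Fin N)).symm, ?_, ?_⟩
  · intro i j hij
    simpa using hij
  · intro i j hij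
    simpa using hij

theorem pat_eq_infl (h : IsQuot π S σ q) :
    pat π S = infl σ fun i => pat π {x | x ∈ S ∧ q x = i} := by
  choose e heu hev using fun i => isStd_pat π {x | x ∈ S ∧ q x = i}
  let f : (Σ i, {x | x ∈ S ∧ q x = i}) ≃ S :=
    { toFun := fun x => ⟨x.2.1, x.2.2.1⟩
      invFun := fun x => ⟨q x, ⟨x, x.2, rfl⟩⟩
      left_inv := by
        rintro ⟨i, ⟨x, hx, rfl⟩⟩
        rfl
      right_inv := fun x => rfl }
  refine IsStd.unique ((isStd_pat π S).of_equiv ((Equiv.sigmaCongrRight e).trans f)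
    (inflPos_injective _) (inflVal_injective σ _) ?_ ?_) (isStd_infl _ _)
  · rintro ⟨i, a⟩ ⟨j, b⟩ hab
    simp only [inflPos, Prod.Lex.toLex_lt_toLex] at hab
    have hi := (e i a).2
    have hj := (e j b).2
    rcases hab with hab | ⟨rfl, hab⟩
    · exact h.pos _ hi.1 _ hj.1 (hi.2.trans_lt (hab.trans_eq hj.2.symm))
    · exact heu i hab
  · rintro ⟨i, a⟩ ⟨j, b⟩ hab
    simp only [inflVal, Prod.Lex.toLex_lt_toLex] at hab
    have hi := (e i a).2
    have hj := (e j b).2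
    rcases hab with hab | ⟨hij, hab⟩
    · exact h.val _ hi.1 _ hj.1
        ((congrArg σ hi.2).trans_lt (hab.trans_eq (congrArg σ hj.2.symm)))
    · obtain rfl := σ.injective hij
      have := hev i (Fin.lt_def.mpr hab)
      simp only [Equiv.Perm.inv_def, Equiv.symm_apply_apply] at this
      exact this

theorem eq_infl (h : IsQuot π Set.univ σ q) :
    (⟨N, π⟩ : AnyPerm) = infl σ fun i => pat π {x | q x = i} := by
  rw [← pat_univ, pat_eq_infl h]
  simp

theorem exists_isQuot_infl (σ : Perm m) (α : Fin m → AnyPerm) (hα : ∀ i, 0 < (α i).1) :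
    ∃ q, IsQuot (infl σ α).2 Set.univ σ q ∧ ∀ i, α i = pat (infl σ α).2 {x | q x = i} := by
  obtain ⟨e, heu, hev⟩ := isStd_infl σ α
  have hval : ∀ x y, inflVal σ α (e x) < inflVal σ α (e y) ↔ (infl σ α).2 x < (infl σ α).2 y := by
    intro x y
    have := hev.lt_iff_lt (a := (infl σ α).2 x) (b := (infl σ α).2 y)
    simpa using this
  refine ⟨fun x => (e x).1, ⟨fun i => ⟨e.symm ⟨i, ⟨0, hα i⟩⟩, trivial, by simp⟩,
    fun x _ y _ hxy => heu.lt_iff_lt.mp ?_, fun x _ y _ hxy => (hval x y).mp ?_⟩, fun i => ?_⟩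
  · exact Prod.Lex.toLex_lt_toLex.mpr (Or.inl hxy)
  · exact Prod.Lex.toLex_lt_toLex.mpr (Or.inl hxy)
  · let g : Fin (α i).1 ≃ {x | (e x).1 = i} :=
      { toFun := fun a => ⟨e.symm ⟨i, a⟩, by simp⟩
        invFun := fun x => Fin.cast (by rw [x.2]) (e x.1).2
        left_inv := fun a => by
          have : ∀ y : Σ i, Fin (α i).1, y = ⟨i, a⟩ → (y.2 : ℕ) = a := by
            rintro _ rfl
            rfl
          exact Fin.ext (this _ (e.apply_symm_apply _))
        right_inv := by
          rintro ⟨x, hx⟩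
          ext1
          simp only [Equiv.symm_apply_eq]
          simp only [Set.mem_ofPred_eq] at hx
          subst hx
          rfl }
    refine IsStd.unique (u := fun x : {x | (e x).1 = i} => x.1)
      (v := fun x : {x | (e x).1 = i} => (infl σ α).2 x.1) ⟨g, ?_, ?_⟩ (isStd_pat _ _)
    · intro a b hab
      refine heu.lt_iff_lt.mp ?_
      change inflPos α (e (e.symm _)) < inflPos α (e (e.symm _))
      rw [e.apply_symm_apply, e.apply_symm_apply]
      exact Prod.Lex.toLex_lt_toLex.mpr (Or.inr ⟨rfl, hab⟩)
    · intro a b hab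
      refine (hval _ _).mp ?_
      change inflVal σ α (e (e.symm _)) < inflVal σ α (e (e.symm _))
      rw [e.apply_symm_apply, e.apply_symm_apply]
      refine Prod.Lex.toLex_lt_toLex.mpr (Or.inr ⟨rfl, ?_⟩)
      simpa using hab

theorem IsQuot.trans {τ : Perm n} {r : Fin m → Fin n} (h : IsQuot π S σ q)
    (h' : IsQuot σ Set.univ τ r) : IsQuot π S τ (r ∘ q) where
  surj i := by
    obtain ⟨j, -, rfl⟩ := h'.surj i
    obtain ⟨x, hx, rfl⟩ := h.surj j
    exact ⟨x, hx, rfl⟩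
  pos x hx y hy hxy := h.pos x hx y hy (h'.pos _ trivial _ trivial hxy)
  val x hx y hy hxy := h.val x hx y hy (h'.val _ trivial _ trivial hxy)

theorem isQuot_id (π : Perm N) : IsQuot π Set.univ π id where
  surj i := ⟨i, trivial, rfl⟩
  pos _ _ _ _ h := h
  val _ _ _ _ h := h

theorem IsQuot.le_of_le {x y : Fin N} (h : IsQuot π S σ q) (hx : x ∈ S) (hy : y ∈ S)
    (hxy : x ≤ y) : q x ≤ q y := by
  by_contra hlt
  exact hxy.not_gt (h.pos y hy x hx (not_le.mp hlt))

theorem IsQuot.val_le_of_le {x y : Fin N} (h : IsQuot π S σ q) (hx : x ∈ S) (hy : y ∈ S)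
    (hxy : π x ≤ π y) : σ (q x) ≤ σ (q y) := by
  by_contra hlt
  exact hxy.not_gt (h.val y hy x hx (not_le.mp hlt))

theorem IsQuot.eq_of_ker {m' : ℕ} {σ' : Perm m'} {q' : Fin N → Fin m'} (h : IsQuot π Set.univ σ q)
    (h' : IsQuot π Set.univ σ' q') (hker : ∀ x y, q x = q y ↔ q' x = q' y) :
    ∃ hm : m = m', hm ▸ σ = σ' ∧ ∀ x, Fin.cast hm (q x) = q' x := by
  choose s _ hs using h.surj
  choose s' _ hs' using h'.surj
  let f : Fin m ≃ Fin m' :=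
    { toFun := fun i => q' (s i)
      invFun := fun i => q (s' i)
      left_inv := fun i => by
        change q (s' (q' (s i))) = i
        rw [(hker _ (s i)).mpr (hs' _), hs]
      right_inv := fun i => by
        change q' (s (q (s' i))) = i
        rw [(hker _ (s' i)).mp (hs _), hs'] }
  obtain rfl : m = m' := Fin.equiv_iff_eq.mp ⟨f⟩
  have hf : StrictMono f := by
    intro i j hij
    have h1 := h.pos (s i) trivial (s j) trivial (by rwa [hs, hs])
    refine lt_of_le_of_ne (h'.le_of_le trivial trivial h1.le) fun h2 => ?_
    have := (hker _ _).mpr h2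
    rw [hs, hs] at this
    exact hij.ne this
  have hf1 : ⇑f = id := by
    refine (StrictMono.range_inj hf strictMono_id).mp ?_
    rw [f.surjective.range_eq, Set.range_id]
  have hq : ∀ x, q x = q' x := fun x => by
    have h1 : q' (s (q x)) = q x := congrFun hf1 (q x)
    have h2 := (hker (s (q x)) x).mp (hs _)
    rw [← h2, h1]
  refine ⟨rfl, ?_, hq⟩
  have hmono : StrictMono fun i => σ' (σ⁻¹ i) := by
    intro i j hij
    have h1 := h.val (s (σ⁻¹ i)) trivial (s (σ⁻¹ j)) trivial (by simpa [hs] using hij)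
    have h2 := h'.val_le_of_le trivial trivial h1.le
    rw [← hq, ← hq, hs, hs] at h2
    exact lt_of_le_of_ne h2 fun h3 => hij.ne (by simpa using h3)
  have h2 : (fun i => σ' (σ⁻¹ i)) = id := by
    refine (StrictMono.range_inj hmono strictMono_id).mp ?_
    rw [Set.range_id]
    exact (σ⁻¹.trans σ').surjective.range_eq
  ext1 i
  have := congrFun h2 (σ i)
  simpa using this.symm

end Quotients

/-- A set of positions is a block of `π` if both it and its image are contiguous. -/
structure IsBlock {n : ℕ} (π : Perm n) (K : Set (Fin n)) : Prop where
  pos : ∀ x ∈ K, ∀ z ∈ K, ∀ y, x ≤ y → y ≤ z → y ∈ K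
  val : ∀ x ∈ K, ∀ z ∈ K, ∀ y, π x ≤ π y → π y ≤ π z → y ∈ K

theorem isPermInterval_iff_isBlock {n : ℕ} {π : Perm n} {I : Finset (Fin n)} :
    IsPermInterval π I ↔ IsBlock π (I : Set (Fin n)) := by
  constructor
  · rintro ⟨h1, h2⟩
    refine ⟨fun x hx z hz y hxy hyz => h1 hx hz hxy hyz, fun x hx z hz y hxy hyz => ?_⟩
    have := h2 (Finset.mem_image_of_mem π hx) (Finset.mem_image_of_mem π hz) hxy hyz
    simpa using this
  · rintro ⟨h1, h2⟩
    refine ⟨fun x y z hx hz hxy hyz => h1 x hx z hz y hxy hyz, fun x y z hx hz hxy hyz => ?_⟩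
    obtain ⟨x', hx', rfl⟩ := Finset.mem_image.mp hx
    obtain ⟨z', hz', rfl⟩ := Finset.mem_image.mp hz
    obtain ⟨y', rfl⟩ := π.surjective y
    exact Finset.mem_image_of_mem π (h2 x' hx' z' hz' y' hxy hyz)

theorem isSimple_iff_isBlock {n : ℕ} {π : Perm n} :
    IsSimple π ↔ ∀ K, IsBlock π K → K.Subsingleton ∨ K = Set.univ := by
  classical
  have key : ∀ I : Finset (Fin n), (I.card ≤ 1 ∨ I.card = n) ↔
      ((I : Set (Fin n)).Subsingleton ∨ (I : Set (Fin n)) = Set.univ) := by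
    intro I
    have h1 := Finset.card_eq_iff_eq_univ I
    rw [Fintype.card_fin] at h1
    rw [h1, Finset.card_le_one_iff_subsingleton, Finset.coe_eq_univ]
  constructor
  · intro h K hK
    have := (key K.toFinset).mp (h _ (isPermInterval_iff_isBlock.mpr (by simpa using hK)))
    simpa using this
  · exact fun h I hI => (key I).mpr (h _ (isPermInterval_iff_isBlock.mp hI))

theorem IsSimple.not_extreme {m : ℕ} {σ : Perm m} (h : IsSimple σ) (hm : 3 ≤ m) (i : Fin m)
    (hi : (∀ k, i ≤ k) ∨ ∀ k, k ≤ i) (hσ : (∀ k, σ i ≤ σ k) ∨ ∀ k, σ k ≤ σ i) : False := by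
  have hb : IsBlock σ {i}ᶜ := by
    constructor
    · rintro x hx z hz y hxy hyz rfl
      rcases hi with hi | hi
      · exact hx (le_antisymm hxy (hi x))
      · exact hz (le_antisymm (hi z) hyz)
    · rintro x hx z hz y hxy hyz rfl
      rcases hσ with hσ | hσ
      · exact hx (σ.injective (le_antisymm hxy (hσ x)))
      · exact hz (σ.injective (le_antisymm (hσ z) hyz))
  rcases isSimple_iff_isBlock.mp h _ hb with h1 | h1
  · have h2 : ({i}ᶜ : Finset (Fin m)).card ≤ 1 := by
      rw [Finset.card_le_one_iff_subsingleton]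
      simpa using h1
    rw [Finset.card_compl, Fintype.card_fin, Finset.card_singleton] at h2
    omega
  · have : i ∈ ({i}ᶜ : Set (Fin m)) := h1 ▸ Set.mem_univ i
    exact this rfl

theorem isSimple_two (τ : Perm 2) : IsSimple τ := by
  intro I _
  have := Finset.card_le_univ I
  rw [Fintype.card_fin] at this
  omega

theorem IsSimple.inv {m : ℕ} {σ : Perm m} (h : IsSimple σ) : IsSimple σ⁻¹ := by
  rw [isSimple_iff_isBlock] at h ⊢
  intro K hK
  have hb : IsBlock σ (σ ⁻¹' K) := by
    constructor
    · intro x hx z hz y hxy hyz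
      exact hK.val _ hx _ hz _ (by simpa using hxy) (by simpa using hyz)
    · intro x hx z hz y hxy hyz
      exact hK.pos _ hx _ hz _ hxy hyz
  rcases h _ hb with h1 | h1
  · left
    intro x hx y hy
    have := h1 (x := σ⁻¹ x) (y := σ⁻¹ y) (by simpa using hx) (by simpa using hy)
    simpa using this
  · right
    refine Set.eq_univ_of_forall fun x => ?_
    have : σ⁻¹ x ∈ σ ⁻¹' K := h1 ▸ Set.mem_univ _
    simpa using this

section Uniqueness

variable {N m m' : ℕ} {π : Perm N} {σ : Perm m} {σ' : Perm m'} {q : Fin N → Fin m}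
  {q' : Fin N → Fin m'} {τ τ' : Perm 2} {r r' : Fin N → Fin 2}

theorem IsQuot.isBlock_fibre (h : IsQuot π Set.univ σ q) (j : Fin m) :
    IsBlock π {x | q x = j} := by
  constructor
  · rintro x rfl z hz y hxy hyz
    exact le_antisymm ((h.le_of_le trivial trivial hyz).trans_eq hz)
      (h.le_of_le trivial trivial hxy)
  · rintro x rfl z hz y hxy hyz
    exact σ.injective (le_antisymm ((h.val_le_of_le trivial trivial hyz).trans_eq (congrArg σ hz))
      (h.val_le_of_le trivial trivial hxy))

theorem IsQuot.isBlock_image (h : IsQuot π Set.univ σ q) {K : Set (Fin N)} (hK : IsBlock π K) :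
    IsBlock σ (q '' K) := by
  constructor
  · rintro _ ⟨x, hx, rfl⟩ _ ⟨z, hz, rfl⟩ i hxi hiz
    rcases hxi.eq_or_lt with rfl | hxi
    · exact ⟨x, hx, rfl⟩
    rcases hiz.eq_or_lt with rfl | hiz
    · exact ⟨z, hz, rfl⟩
    obtain ⟨y, -, rfl⟩ := h.surj i
    exact ⟨y, hK.pos x hx z hz y (h.pos _ trivial _ trivial hxi).le
      (h.pos _ trivial _ trivial hiz).le, rfl⟩
  · rintro _ ⟨x, hx, rfl⟩ _ ⟨z, hz, rfl⟩ i hxi hiz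
    rcases hxi.eq_or_lt with hxi | hxi
    · exact ⟨x, hx, σ.injective hxi⟩
    rcases hiz.eq_or_lt with hiz | hiz
    · exact ⟨z, hz, (σ.injective hiz).symm⟩
    obtain ⟨y, -, rfl⟩ := h.surj i
    exact ⟨y, hK.val x hx z hz y (h.val _ trivial _ trivial hxi).le
      (h.val _ trivial _ trivial hiz).le, rfl⟩

theorem IsQuot.const_on_block (h : IsQuot π Set.univ σ q) (hσ : IsSimple σ) (hm : 3 ≤ m)
    {K : Set (Fin N)} (hK : IsBlock π K) (hne : K ≠ Set.univ) : (q '' K).Subsingleton := by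
  rcases isSimple_iff_isBlock.mp hσ _ (h.isBlock_image hK) with h1 | h1
  · exact h1
  exfalso
  obtain ⟨x, hx⟩ := (Set.ne_univ_iff_exists_notMem K).mp hne
  have hs : ∀ i, ∃ y ∈ K, q y = i := fun i => (h1 ▸ Set.mem_univ i : i ∈ q '' K)
  refine hσ.not_extreme hm (q x) ?_ ?_
  · by_contra! hcon
    obtain ⟨⟨i, hi⟩, j, hj⟩ := hcon
    obtain ⟨y, hy, rfl⟩ := hs i
    obtain ⟨z, hz, rfl⟩ := hs j
    exact hx (hK.pos y hy z hz x (h.pos _ trivial _ trivial hi).le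
      (h.pos _ trivial _ trivial hj).le)
  · by_contra! hcon
    obtain ⟨⟨i, hi⟩, j, hj⟩ := hcon
    obtain ⟨y, hy, rfl⟩ := hs i
    obtain ⟨z, hz, rfl⟩ := hs j
    exact hx (hK.val y hy z hz x (h.val _ trivial _ trivial hi).le
      (h.val _ trivial _ trivial hj).le)

theorem IsQuot.ker_le (h : IsQuot π Set.univ σ q) (hσ : IsSimple σ) (hm : 3 ≤ m)
    (h' : IsQuot π Set.univ σ' q') (hm' : 2 ≤ m') {x y : Fin N} (hxy : q' x = q' y) :
    q x = q y := by
  refine h.const_on_block hσ hm (h'.isBlock_fibre (q' x)) ?_ ⟨x, rfl, rfl⟩ ⟨y, hxy.symm, rfl⟩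
  intro huniv
  have : Nontrivial (Fin m') := Fin.nontrivial_iff_two_le.mpr hm'
  obtain ⟨j, hj⟩ := exists_ne (q' x)
  obtain ⟨z, -, rfl⟩ := h'.surj j
  exact hj (huniv ▸ Set.mem_univ z : z ∈ {z | q' z = q' x})

/-- A quotient onto a simple permutation of length at least three is the only simple quotient
of length at least two. -/
theorem IsQuot.unique (h : IsQuot π Set.univ σ q) (hσ : IsSimple σ) (hm : 3 ≤ m)
    (h' : IsQuot π Set.univ σ' q') (hσ' : IsSimple σ') (hm' : 2 ≤ m') :
    ∃ hm : m = m', hm ▸ σ = σ' ∧ ∀ x, Fin.cast hm (q x) = q' x := by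
  have hle : m ≤ m' := by
    choose s _ hs using h'.surj
    have hsurj : Function.Surjective fun j => q (s j) := by
      intro i
      obtain ⟨x, -, rfl⟩ := h.surj i
      exact ⟨q' x, h.ker_le hσ hm h' hm' (hs _)⟩
    simpa using Fintype.card_le_of_surjective _ hsurj
  exact h.eq_of_ker h' fun x y =>
    ⟨fun hxy => h'.ker_le hσ' (hm.trans hle) h (by omega) hxy, fun hxy => h.ker_le hσ hm h' hm' hxy⟩

theorem IsQuot.unique_two (h : IsQuot π Set.univ τ r) (h' : IsQuot π Set.univ τ' r') : τ = τ' := by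
  have key : ∀ τ τ' : Perm 2, ¬ (τ 0 < τ 1 ∧ τ' 1 < τ' 0) → ¬ (τ 1 < τ 0 ∧ τ' 0 < τ' 1) →
      τ = τ' := by decide
  obtain ⟨x, -, hx⟩ := h.surj 0
  obtain ⟨x', -, hx'⟩ := h'.surj 0
  obtain ⟨y, -, hy⟩ := h.surj 1
  obtain ⟨y', -, hy'⟩ := h'.surj 1
  have h0 : r (min x x') = 0 :=
    Fin.le_zero_iff.mp ((h.le_of_le trivial trivial (min_le_left x x')).trans_eq hx)
  have h0' : r' (min x x') = 0 :=
    Fin.le_zero_iff.mp ((h'.le_of_le trivial trivial (min_le_right x x')).trans_eq hx')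
  have h1 : r (max y y') = 1 :=
    Fin.last_le_iff.mp (hy.symm.trans_le (h.le_of_le trivial trivial (le_max_left y y')))
  have h1' : r' (max y y') = 1 :=
    Fin.last_le_iff.mp (hy'.symm.trans_le (h'.le_of_le trivial trivial (le_max_right y y')))
  refine key τ τ' (fun hc => ?_) fun hc => ?_
  · rw [← h0, ← h1] at hc
    have h2 := h.val _ trivial _ trivial hc.1
    rw [h0, h1, ← h0', ← h1'] at hc
    exact lt_asymm h2 (h'.val _ trivial _ trivial hc.2)
  · rw [← h0, ← h1] at hc
    have h2 := h.val _ trivial _ trivial hc.1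
    rw [h0, h1, ← h0', ← h1'] at hc
    exact lt_asymm h2 (h'.val _ trivial _ trivial hc.2)

theorem exists_isQuot_of_eq {p : AnyPerm} {α : Fin m → AnyPerm} (hp : p = infl σ α)
    (hα : ∀ i, 0 < (α i).1) :
    ∃ q, IsQuot p.2 Set.univ σ q ∧ ∀ i, α i = pat p.2 {x | q x = i} := by
  subst hp
  exact exists_isQuot_infl σ α hα

theorem IsQuot.refine_two (h : IsQuot π Set.univ τ r) (h' : IsQuot π Set.univ τ r')
    (hle : ∀ x, r x = 0 → r' x = 0) (hne : ∃ x, r x = 1 ∧ r' x = 0) :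
    ∃ γ : AnyPerm, 0 < γ.1 ∧
      pat π {x | r' x = 0} = infl τ ![pat π {x | r x = 0}, γ] ∧
      pat π {x | r x = 1} = infl τ ![γ, pat π {x | r' x = 1}] := by
  obtain ⟨z, hz, hz'⟩ := hne
  have hge : ∀ x, r' x = 1 → r x = 1 := by
    intro x hx
    by_contra hcon
    have := hle x (by omega)
    omega
  have hQ : IsQuot π {x | r' x = 0} τ r := by
    refine ⟨Fin.forall_fin_two.mpr ⟨?_, ⟨z, hz', hz⟩⟩, fun x _ y _ => h.pos x trivial y trivial,
      fun x _ y _ => h.val x trivial y trivial⟩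
    obtain ⟨x, -, hx⟩ := h.surj 0
    exact ⟨x, hle x hx, hx⟩
  have hQ' : IsQuot π {x | r x = 1} τ r' := by
    refine ⟨Fin.forall_fin_two.mpr ⟨⟨z, hz, hz'⟩, ?_⟩, fun x _ y _ => h'.pos x trivial y trivial,
      fun x _ y _ => h'.val x trivial y trivial⟩
    obtain ⟨x, -, hx⟩ := h'.surj 1
    exact ⟨x, hge x hx, hx⟩
  refine ⟨pat π {x | r x = 1 ∧ r' x = 0}, pat_pos (x := z) ⟨hz, hz'⟩, ?_, ?_⟩
  · rw [pat_eq_infl hQ]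
    congr 1
    funext i
    revert i
    refine Fin.forall_fin_two.mpr ⟨congrArg (pat π) (Set.ext fun x => ?_),
      congrArg (pat π) (Set.ext fun x => ?_)⟩
    · exact ⟨fun hx => hx.2, fun hx => ⟨hle x hx, hx⟩⟩
    · exact and_comm
  · rw [pat_eq_infl hQ']
    congr 1
    funext i
    revert i
    refine Fin.forall_fin_two.mpr ⟨rfl, congrArg (pat π) (Set.ext fun x => ?_)⟩
    exact ⟨fun hx => hx.2, fun hx => ⟨hge x hx, hx⟩⟩

/-- Two decompositions of a permutation over the same permutation of length two have a common
refinement. -/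
theorem infl_two_eq_infl_two {a b c d : AnyPerm} (ha : 0 < a.1) (hb : 0 < b.1) (hc : 0 < c.1)
    (hd : 0 < d.1) (h : infl τ ![a, b] = infl τ ![c, d]) :
    (a = c ∧ b = d) ∨
      (∃ γ : AnyPerm, 0 < γ.1 ∧ c = infl τ ![a, γ] ∧ b = infl τ ![γ, d]) ∨
      ∃ γ : AnyPerm, 0 < γ.1 ∧ a = infl τ ![c, γ] ∧ d = infl τ ![γ, b] := by
  obtain ⟨p, hp⟩ : ∃ p, p = infl τ ![a, b] := ⟨_, rfl⟩
  obtain ⟨r, hr, hα⟩ := exists_isQuot_of_eq hp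
    (Fin.forall_fin_two.mpr ⟨ha, hb⟩)
  obtain ⟨r', hr', hα'⟩ := exists_isQuot_of_eq (hp.trans h) (Fin.forall_fin_two.mpr ⟨hc, hd⟩)
  clear h hp
  obtain rfl : a = _ := hα 0
  obtain rfl : b = _ := hα 1
  obtain rfl : c = _ := hα' 0
  obtain rfl : d = _ := hα' 1
  by_cases h1 : ∃ x, r x = 1 ∧ r' x = 0
  · right; left
    refine hr.refine_two hr' (fun x hx => ?_) h1
    obtain ⟨z, hz, hz'⟩ := h1
    have h2 : x < z := hr.pos _ trivial _ trivial (by rw [hx, hz]; decide)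
    exact Fin.le_zero_iff.mp ((hr'.le_of_le trivial trivial h2.le).trans_eq hz')
  · by_cases h2 : ∃ x, r' x = 1 ∧ r x = 0
    · right; right
      refine hr'.refine_two hr (fun x hx => ?_) h2
      obtain ⟨z, hz, hz'⟩ := h2
      have h3 : x < z := hr'.pos _ trivial _ trivial (by rw [hx, hz]; decide)
      exact Fin.le_zero_iff.mp ((hr.le_of_le trivial trivial h3.le).trans_eq hz')
    · left
      push Not at h1 h2
      have : r = r' := by
        funext x
        have := h1 x
        have := h2 x
        omega
      rw [this]
      exact ⟨rfl, rfl⟩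

end Uniqueness

/-- `p` is an inflation of `τ`. -/
def Dec (τ : Perm 2) (p : AnyPerm) : Prop := ∃ q, IsQuot p.2 Set.univ τ q

theorem fin_two_eq {A : Type} (α : Fin 2 → A) : α = ![α 0, α 1] := by
  funext i
  revert i
  exact Fin.forall_fin_two.mpr ⟨rfl, rfl⟩

theorem dec_iff {τ : Perm 2} {p : AnyPerm} :
    Dec τ p ↔ ∃ a b : AnyPerm, 0 < a.1 ∧ 0 < b.1 ∧ p = infl τ ![a, b] := by
  constructor
  · rintro ⟨q, hq⟩
    obtain ⟨x, -, hx⟩ := hq.surj 0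
    obtain ⟨y, -, hy⟩ := hq.surj 1
    exact ⟨pat p.2 {x | q x = 0}, pat p.2 {x | q x = 1}, pat_pos hx, pat_pos hy,
      (eq_infl hq).trans (congrArg _ (fin_two_eq _))⟩
  · rintro ⟨a, b, ha, hb, h⟩
    obtain ⟨q, hq, -⟩ := exists_isQuot_of_eq h (Fin.forall_fin_two.mpr ⟨ha, hb⟩)
    exact ⟨q, hq⟩

theorem anyInv_infl_two (τ : Perm 2) (α : Fin 2 → AnyPerm) :
    anyInv (infl τ α) = infl τ ![anyInv (α (τ 0)), anyInv (α (τ 1))] := by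
  have h : ∀ τ : Perm 2, τ⁻¹ = τ := by decide
  rw [anyInv_infl, h]
  exact congrArg _ (fin_two_eq _)

theorem dec_anyInv {τ : Perm 2} {p : AnyPerm} : Dec τ (anyInv p) ↔ Dec τ p := by
  have key : ∀ p, Dec τ p → Dec τ (anyInv p) := by
    intro p hp
    obtain ⟨a, b, ha, hb, rfl⟩ := dec_iff.mp hp
    have h : ∀ i, 0 < (![a, b] i).1 := Fin.forall_fin_two.mpr ⟨ha, hb⟩
    exact dec_iff.mpr ⟨anyInv (![a, b] (τ 0)), anyInv (![a, b] (τ 1)), h (τ 0), h (τ 1),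
      anyInv_infl_two τ _⟩
  refine ⟨fun h => ?_, key p⟩
  rw [← anyInv_anyInv p]
  exact key _ h

theorem dec_infl {m : ℕ} {σ : Perm m} {α : Fin m → AnyPerm} (hσ : IsSimple σ) (hm : 2 ≤ m)
    (hα : ∀ i, 0 < (α i).1) {τ : Perm 2} :
    Dec τ (infl σ α) ↔ ∃ h : m = 2, h ▸ σ = τ := by
  obtain ⟨q, hq, -⟩ := exists_isQuot_infl σ α hα
  constructor
  · rintro ⟨q', hq'⟩
    by_cases h3 : 3 ≤ m
    · obtain ⟨h, -⟩ := hq.unique hσ h3 hq' (isSimple_two τ) le_rfl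
      omega
    · obtain rfl : m = 2 := by omega
      exact ⟨rfl, hq.unique_two hq'⟩
  · rintro ⟨rfl, rfl⟩
    exact ⟨q, hq⟩

theorem IsQuot.mono {N m : ℕ} {π : Perm N} {σ : Perm m} {q : Fin N → Fin m}
    (h : IsQuot π Set.univ σ q) {S : Set (Fin N)} (hS : ∀ i, ∃ x ∈ S, q x = i) :
    IsQuot π S σ q :=
  ⟨hS, fun x _ y _ => h.pos x trivial y trivial, fun x _ y _ => h.val x trivial y trivial⟩

theorem exists_isQuot_three (τ : Perm 2) : ∃ θ : Perm 3,
    IsQuot θ Set.univ τ ![0, 0, 1] ∧ IsQuot θ Set.univ τ ![0, 1, 1] := by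
  have hs : (∀ i : Fin 2, ∃ x ∈ (Set.univ : Set (Fin 3)), ![(0 : Fin 2), 0, 1] x = i) ∧
      ∀ i : Fin 2, ∃ x ∈ (Set.univ : Set (Fin 3)), ![(0 : Fin 2), 1, 1] x = i := by
    simp only [Set.mem_univ, true_and]
    decide
  have hp : (∀ x y : Fin 3, ![(0 : Fin 2), 0, 1] x < ![(0 : Fin 2), 0, 1] y → x < y) ∧
      ∀ x y : Fin 3, ![(0 : Fin 2), 1, 1] x < ![(0 : Fin 2), 1, 1] y → x < y := by
    decide
  have hv : ∀ τ : Perm 2, ∃ θ : Perm 3,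
      (∀ x y : Fin 3, τ (![(0 : Fin 2), 0, 1] x) < τ (![(0 : Fin 2), 0, 1] y) → θ x < θ y) ∧
      ∀ x y : Fin 3, τ (![(0 : Fin 2), 1, 1] x) < τ (![(0 : Fin 2), 1, 1] y) → θ x < θ y := by
    decide
  obtain ⟨θ, h1, h2⟩ := hv τ
  exact ⟨θ, ⟨hs.1, fun x _ y _ => hp.1 x y, fun x _ y _ => h1 x y⟩,
    ⟨hs.2, fun x _ y _ => hp.2 x y, fun x _ y _ => h2 x y⟩⟩

theorem infl_two_assoc (τ : Perm 2) {a b c : AnyPerm} (ha : 0 < a.1) (hb : 0 < b.1)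
    (hc : 0 < c.1) : infl τ ![infl τ ![a, b], c] = infl τ ![a, infl τ ![b, c]] := by
  obtain ⟨θ, h1, h2⟩ := exists_isQuot_three τ
  have hpos : ∀ i, 0 < (![a, b, c] i).1 := by
    intro i
    fin_cases i <;> assumption
  obtain ⟨p, hp⟩ : ∃ p, p = infl θ ![a, b, c] := ⟨_, rfl⟩
  obtain ⟨q, hq, hα⟩ := exists_isQuot_of_eq hp hpos
  obtain ⟨x0, -, hx0⟩ := hq.surj 0
  obtain ⟨x1, -, hx1⟩ := hq.surj 1
  obtain ⟨x2, -, hx2⟩ := hq.surj 2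
  have e1 := eq_infl (hq.trans h1)
  have e2 := eq_infl (hq.trans h2)
  have f1 := pat_eq_infl ((hq.trans h2).mono
    (S := {x | (![(0 : Fin 2), 0, 1] ∘ q) x = 0})
    (Fin.forall_fin_two.mpr ⟨⟨x0, by simp [hx0], by simp [hx0]⟩,
      ⟨x1, by simp [hx1], by simp [hx1]⟩⟩))
  have f2 := pat_eq_infl ((hq.trans h1).mono
    (S := {x | (![(0 : Fin 2), 1, 1] ∘ q) x = 1})
    (Fin.forall_fin_two.mpr ⟨⟨x1, by simp [hx1], by simp [hx1]⟩,
      ⟨x2, by simp [hx2], by simp [hx2]⟩⟩))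
  have ea : pat p.2 {x | q x = 0} = a := (hα 0).symm
  have eb : pat p.2 {x | q x = 1} = b := (hα 1).symm
  have ec : pat p.2 {x | q x = 2} = c := (hα 2).symm
  have key : ∀ i : Fin 3, (![(0 : Fin 2), 0, 1] i = 1 ↔ i = 2) ∧
      (![(0 : Fin 2), 1, 1] i = 0 ↔ i = 0)
      ∧ (![(0 : Fin 2), 0, 1] i = 0 ∧ i = 0 ↔ i = 0)
      ∧ (![(0 : Fin 2), 0, 1] i = 0 ∧ ![(0 : Fin 2), 1, 1] i = 1 ↔ i = 1)
      ∧ (![(0 : Fin 2), 1, 1] i = 1 ∧ ![(0 : Fin 2), 0, 1] i = 0 ↔ i = 1)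
      ∧ (![(0 : Fin 2), 1, 1] i = 1 ∧ i = 2 ↔ i = 2) := by
    decide
  rw [fin_two_eq (fun i => pat p.2 _)] at e1 e2 f1 f2
  simp only [Set.mem_ofPred_eq, Function.comp_apply, key, ea, eb, ec] at e1 e2 f1 f2
  rw [f1] at e1
  rw [f2] at e2
  exact e1.symm.trans e2

/-- A decomposition of a permutation over a simple permutation `σ`; when `σ` has length two, the
first block is required not to decompose over `σ`. -/
structure Adm {m : ℕ} (σ : Perm m) (α : Fin m → AnyPerm) : Prop where
  simple : IsSimple σ
  two_le : 2 ≤ m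
  pos : ∀ i, 0 < (α i).1
  dec : ∀ h : m = 2, ∀ i : Fin m, (i : ℕ) = 0 → ¬ Dec (h ▸ σ) (α i)

theorem adm_two {τ : Perm 2} {a b : AnyPerm} :
    Adm τ ![a, b] ↔ 0 < a.1 ∧ 0 < b.1 ∧ ¬ Dec τ a := by
  constructor
  · exact fun h => ⟨h.pos 0, h.pos 1, h.dec rfl 0 rfl⟩
  · rintro ⟨ha, hb, hd⟩
    refine ⟨isSimple_two τ, le_rfl, Fin.forall_fin_two.mpr ⟨ha, hb⟩, fun _ i hi => ?_⟩
    obtain rfl : i = 0 := Fin.ext hi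
    exact hd

theorem Adm.unique {m m' : ℕ} {σ : Perm m} {σ' : Perm m'} {α : Fin m → AnyPerm}
    {α' : Fin m' → AnyPerm} (h : Adm σ α) (h' : Adm σ' α') (heq : infl σ α = infl σ' α') :
    (⟨m, σ, α⟩ : Σ m, Perm m × (Fin m → AnyPerm)) = ⟨m', σ', α'⟩ := by
  obtain ⟨p, hp⟩ : ∃ p, p = infl σ α := ⟨_, rfl⟩
  obtain ⟨q, hq, hα⟩ := exists_isQuot_of_eq hp h.pos
  obtain ⟨q', hq', hα'⟩ := exists_isQuot_of_eq (hp.trans heq) h'.pos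
  by_cases h3 : 3 ≤ m
  · obtain ⟨rfl, rfl, hqq⟩ := hq.unique h.simple h3 hq' h'.simple h'.two_le
    obtain rfl : q = q' := funext hqq
    obtain rfl : α = α' := funext fun i => (hα i).trans (hα' i).symm
    rfl
  by_cases h3' : 3 ≤ m'
  · obtain ⟨hm, -⟩ := hq'.unique h'.simple h3' hq h.simple h.two_le
    omega
  obtain rfl : m = 2 := by have := h.two_le; omega
  obtain rfl : m' = 2 := by have := h'.two_le; omega
  obtain rfl := hq.unique_two hq'
  rw [fin_two_eq α] at h heq ⊢
  rw [fin_two_eq α'] at h' heq ⊢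
  rw [adm_two] at h h'
  rcases infl_two_eq_infl_two h.1 h.2.1 h'.1 h'.2.1 heq
    with ⟨h1, h2⟩ | ⟨γ, hγ, h1, -⟩ | ⟨γ, hγ, h1, -⟩
  · rw [h1, h2]
  · exact absurd (dec_iff.mpr ⟨_, _, h.1, hγ, h1⟩) h'.2.2
  · exact absurd (dec_iff.mpr ⟨_, _, h'.1, hγ, h1⟩) h.2.2

/-- A permutation with a nontrivial block is a proper inflation. -/
theorem IsBlock.exists_isQuot {m : ℕ} {σ : Perm m} {K : Set (Fin m)} (hK : IsBlock σ K)
    (h1 : ¬ K.Subsingleton) (h2 : K ≠ Set.univ) :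
    ∃ p : AnyPerm, 2 ≤ p.1 ∧ p.1 < m ∧ ∃ r, IsQuot σ Set.univ p.2 r := by
  classical
  obtain ⟨i, hi, j, hj, hij⟩ := Set.not_subsingleton_iff.mp h1
  obtain ⟨k, hk⟩ := (Set.ne_univ_iff_exists_notMem K).mp h2
  let Y : Set (Fin m) := {x | x ∉ K ∨ x = i}
  obtain ⟨e, heu, hev⟩ := isStd_pat σ Y
  have hlen := pat_length σ Y
  let rep : Fin m → Y := fun x => if h : x ∈ K then ⟨i, Or.inr rfl⟩ else ⟨x, Or.inl h⟩
  have hin : ∀ x ∈ K, (rep x : Fin m) = i := fun x hx => by simp [rep, hx]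
  have hout : ∀ x, x ∉ K → (rep x : Fin m) = x := fun x hx => by simp [rep, hx]
  refine ⟨pat σ Y, ?_, ?_, fun x => e.symm (rep x), fun y => ⟨e y, trivial, ?_⟩, ?_, ?_⟩
  · have : Nontrivial Y := ⟨⟨i, Or.inr rfl⟩, ⟨k, Or.inl hk⟩, fun h => by
      simp only [Subtype.mk.injEq] at h
      exact hk (h ▸ hi)⟩
    rw [hlen]
    exact Finite.one_lt_card
  · rw [hlen]
    have hne : Y ≠ Set.univ := fun h => by
      rcases (h ▸ Set.mem_univ j : j ∈ Y) with h3 | h3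
      · exact h3 hj
      · exact hij h3.symm
    have := Set.ncard_lt_ncard (Set.ssubset_univ_iff.mpr hne)
    rw [Set.ncard_univ, Nat.card_eq_fintype_card, Fintype.card_fin] at this
    exact this
  · have : rep (e y) = e y := by
      ext1
      rcases (e y).2 with h3 | h3
      · exact hout _ h3
      · rw [h3, hin _ hi]
    simp [this]
  · intro x _ y _ hxy
    have hlt : (rep x : Fin m) < rep y := by
      have := heu hxy
      simpa using this
    by_cases hx : x ∈ K <;> by_cases hy : y ∈ K
    · rw [hin x hx, hin y hy] at hlt
      exact absurd hlt (lt_irrefl _)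
    · rw [hin x hx, hout y hy] at hlt
      by_contra hc
      exact hy (hK.pos i hi x hx y hlt.le (not_lt.mp hc))
    · rw [hout x hx, hin y hy] at hlt
      by_contra hc
      exact hx (hK.pos y hy i hi x (not_lt.mp hc) hlt.le)
    · rwa [hout x hx, hout y hy] at hlt
  · intro x _ y _ hxy
    have hlt : σ (rep x : Fin m) < σ (rep y) := by
      have := hev hxy
      simpa using this
    by_cases hx : x ∈ K <;> by_cases hy : y ∈ K
    · rw [hin x hx, hin y hy] at hlt
      exact absurd hlt (lt_irrefl _)
    · rw [hin x hx, hout y hy] at hlt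
      by_contra hc
      exact hy (hK.val i hi x hx y hlt.le (not_lt.mp hc))
    · rw [hout x hx, hin y hy] at hlt
      by_contra hc
      exact hx (hK.val y hy i hi x (not_lt.mp hc) hlt.le)
    · rwa [hout x hx, hout y hy] at hlt

theorem exists_simple_isQuot {n : ℕ} (π : Perm n) (hn : 2 ≤ n) :
    ∃ m, 2 ≤ m ∧ ∃ σ : Perm m, IsSimple σ ∧ ∃ q, IsQuot π Set.univ σ q := by
  classical
  have hex : ∃ m, 2 ≤ m ∧ ∃ σ : Perm m, ∃ q, IsQuot π Set.univ σ q :=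
    ⟨n, hn, π, id, isQuot_id π⟩
  obtain ⟨hm, σ, q, hq⟩ := Nat.find_spec hex
  refine ⟨_, hm, σ, isSimple_iff_isBlock.mpr fun K hK => ?_, q, hq⟩
  by_contra! hcon
  obtain ⟨p, hp, hlt, r, hr⟩ := hK.exists_isQuot (Set.not_subsingleton_iff.mpr hcon.1) hcon.2
  exact Nat.find_min hex hlt ⟨hp, p.2, _, hq.trans hr⟩

theorem exists_not_dec (τ : Perm 2) (a b : AnyPerm) (ha : 0 < a.1) (hb : 0 < b.1) :
    ∃ c d : AnyPerm, 0 < c.1 ∧ 0 < d.1 ∧ ¬ Dec τ c ∧ infl τ ![a, b] = infl τ ![c, d] := by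
  induction hn : a.1 using Nat.strong_induction_on generalizing a b with
  | _ n ih =>
    by_cases h : Dec τ a
    · obtain ⟨c, d, hc, hd, rfl⟩ := dec_iff.mp h
      rw [infl_length] at hn
      simp only [Fin.sum_univ_two, Matrix.cons_val_zero, Matrix.cons_val_one] at hn
      rw [infl_two_assoc τ hc hd hb]
      refine ih c.1 (by omega) c _ hc ?_ rfl
      rw [infl_length]
      simp only [Fin.sum_univ_two, Matrix.cons_val_zero, Matrix.cons_val_one]
      omega
    · exact ⟨a, b, ha, hb, h, rfl⟩

theorem exists_adm (p : AnyPerm) (hp : 2 ≤ p.1) :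
    ∃ (m : ℕ) (σ : Perm m) (α : Fin m → AnyPerm), Adm σ α ∧ p = infl σ α := by
  obtain ⟨m, hm, σ, hσ, q, hq⟩ := exists_simple_isQuot p.2 hp
  have hpos : ∀ i, 0 < (pat p.2 {x | q x = i}).1 := fun i => by
    obtain ⟨x, -, hx⟩ := hq.surj i
    exact pat_pos hx
  by_cases h : m = 2
  · subst h
    obtain ⟨c, d, hc, hd, hdec, heq⟩ := exists_not_dec σ _ _ (hpos 0) (hpos 1)
    exact ⟨2, σ, ![c, d], adm_two.mpr ⟨hc, hd, hdec⟩,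
      ((eq_infl hq).trans (congrArg _ (fin_two_eq _))).trans heq⟩
  · exact ⟨m, σ, _, ⟨hσ, hm, hpos, fun h' => absurd h' h⟩, eq_infl hq⟩

theorem Adm.anyInv_infl_eq_iff {m : ℕ} {σ : Perm m} {α : Fin m → AnyPerm} (h : Adm σ α)
    (h2 : ∀ hm : m = 2, hm ▸ σ = (1 : Perm 2)) :
    anyInv (infl σ α) = infl σ α ↔ σ⁻¹ = σ ∧ ∀ i, α (σ i) = anyInv (α i) := by
  rw [anyInv_infl]
  constructor
  · intro heq
    have hadm : Adm σ⁻¹ fun i => anyInv (α (σ⁻¹ i)) := by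
      refine ⟨h.simple.inv, h.two_le, fun i => h.pos _, fun hm i hi => ?_⟩
      subst hm
      obtain rfl := h2 rfl
      rw [dec_anyInv]
      exact h.dec rfl i hi
    have := hadm.unique h heq
    simp only [Sigma.mk.injEq, heq_eq_eq, Prod.mk.injEq, true_and] at this
    refine ⟨this.1, fun i => ?_⟩
    have h3 := congrFun this.2 (σ i)
    simpa using h3.symm
  · rintro ⟨h1, h2⟩
    rw [h1]
    congr 1
    funext i
    rw [← h2]
    congr 1
    have := σ.apply_symm_apply i
    rw [← Equiv.Perm.inv_def, h1] at this
    exact this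

theorem anyInv_infl_swap (a b : AnyPerm) :
    anyInv (infl (Equiv.swap 0 1) ![a, b]) = infl (Equiv.swap 0 1) ![anyInv b, anyInv a] := by
  rw [anyInv_infl_two]
  simp

theorem infl_two_length (τ : Perm 2) (a b : AnyPerm) : (infl τ ![a, b]).1 = a.1 + b.1 := by
  rw [infl_length]
  simp

theorem infl_two_left_cancel {τ : Perm 2} {a b c : AnyPerm} (ha : 0 < a.1) (hb : 0 < b.1)
    (hc : 0 < c.1) (h : infl τ ![a, c] = infl τ ![b, c]) : a = b := by
  have hlen := congrArg Sigma.fst h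
  simp only [infl_two_length] at hlen
  rcases infl_two_eq_infl_two ha hc hb hc h with h1 | ⟨γ, hγ, h1, -⟩ | ⟨γ, hγ, h1, -⟩
  · exact h1.1
  · have := congrArg Sigma.fst h1
    simp only [infl_two_length] at this
    omega
  · have := congrArg Sigma.fst h1
    simp only [infl_two_length] at this
    omega

theorem anyInv_infl_swap_eq {a b : AnyPerm} (ha : 0 < a.1) (hb : 0 < b.1)
    (hd : ¬ Dec (Equiv.swap 0 1) a)
    (h : anyInv (infl (Equiv.swap 0 1) ![a, b]) = infl (Equiv.swap 0 1) ![a, b]) :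
    b = anyInv a ∨ ∃ γ : AnyPerm, 0 < γ.1 ∧ anyInv γ = γ ∧
      b = infl (Equiv.swap 0 1) ![γ, anyInv a] := by
  rw [anyInv_infl_swap] at h
  rcases infl_two_eq_infl_two ha hb (c := anyInv b) (d := anyInv a) hb ha h.symm
    with h1 | ⟨γ, hγ, h1, h2⟩ | ⟨γ, hγ, h1, -⟩
  · exact Or.inl h1.2
  · refine Or.inr ⟨γ, hγ, ?_, h2⟩
    refine infl_two_left_cancel (τ := (Equiv.swap 0 1)) (c := anyInv a) hγ hγ ha ?_
    rw [← h2, ← anyInv_anyInv b, h1, anyInv_infl_swap]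
  · exact absurd (dec_iff.mpr ⟨anyInv b, γ, hb, hγ, h1⟩) hd

theorem anyInv_infl_swap_self (a : AnyPerm) :
    anyInv (infl (Equiv.swap 0 1) ![a, anyInv a]) = infl (Equiv.swap 0 1) ![a, anyInv a] := by
  rw [anyInv_infl_swap, anyInv_anyInv]

theorem anyInv_infl_swap_three {a γ : AnyPerm} (ha : 0 < a.1) (hγ : 0 < γ.1)
    (h : anyInv γ = γ) :
    anyInv (infl (Equiv.swap 0 1) ![a, infl (Equiv.swap 0 1) ![γ, anyInv a]]) =
      infl (Equiv.swap 0 1) ![a, infl (Equiv.swap 0 1) ![γ, anyInv a]] := by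
  rw [anyInv_infl_swap, anyInv_infl_swap, anyInv_anyInv, h]
  exact infl_two_assoc (Equiv.swap 0 1) ha hγ ha

theorem finite_of_length_le {B : Type} (f : B → AnyPerm) (hf : Function.Injective f) (n : ℕ)
    (h : ∀ b, (f b).1 ≤ n) : Finite B := by
  let g : B → Σ k : Fin (n + 1), Perm k := fun b => ⟨⟨(f b).1, Nat.lt_succ_of_le (h b)⟩, (f b).2⟩
  refine Finite.of_injective g fun a b hab => hf ?_
  have := congrArg (fun x : Σ k : Fin (n + 1), Perm k => (⟨x.1, x.2⟩ : AnyPerm)) hab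
  exact this

theorem finite_length_eq (P : AnyPerm → Prop) {k : ℕ} (hk : k ≠ 0) (n : ℕ) :
    Finite {a : {p // P p} // k * a.1.1 = n} :=
  finite_of_length_le (fun a => a.1.1) (Subtype.val_injective.comp Subtype.val_injective) n
    fun a => (Nat.le_mul_of_pos_left _ (Nat.pos_of_ne_zero hk)).trans_eq a.2

theorem prod_mem_mul_self {R S ι : Type} [CommSemiring R] [CommSemiring S] [Algebra R S]
    {J : Submodule R S} (hJ : J * J ≤ J) [Fintype ι] [Nontrivial ι] (f : ι → S)
    (hf : ∀ i, f i ∈ J) : ∏ i, f i ∈ J * J := by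
  classical
  obtain ⟨i, j, hij⟩ := exists_pair_ne ι
  rw [← Finset.mul_prod_erase _ _ (Finset.mem_univ i)]
  refine Submodule.mul_mem_mul (hf i) (Finset.prod_induction_nonempty f (· ∈ J)
    (fun a b ha hb => hJ (Submodule.mul_mem_mul ha hb)) ⟨j, ?_⟩ fun i _ => hf i)
  simpa using hij.symm

theorem Adm.two_le_length {m : ℕ} {σ : Perm m} {α : Fin m → AnyPerm} (h : Adm σ α) :
    2 ≤ (infl σ α).1 := by
  rw [infl_length]
  calc 2 ≤ m := h.two_le
    _ = ∑ _i : Fin m, 1 := by simp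
    _ ≤ _ := Finset.sum_le_sum fun i _ => h.pos i

/-- A set of permutations with finitely many simple members, closed under inversion, inflation
and passing to the constituents of inflations, together with a map `prof` whose value at an
inflation of a simple permutation depends only on its values at the blocks. -/
structure ProfiledClass {V : Type} (A : Set AnyPerm) (prof : AnyPerm → V) : Prop where
  pos : ∀ p ∈ A, 0 < p.1
  inv : ∀ p ∈ A, anyInv p ∈ A
  infl_mem : ∀ {m : ℕ} (σ : Perm m) (α : Fin m → AnyPerm), (∀ i, 0 < (α i).1) →
    (infl σ α ∈ A ↔ (⟨m, σ⟩ : AnyPerm) ∈ A ∧ ∀ i, α i ∈ A)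
  finite : {p ∈ A | IsSimple p.2}.Finite
  prof_infl : ∀ {m : ℕ} (σ : Perm m) (α α' : Fin m → AnyPerm), IsSimple σ → 2 ≤ m →
    (∀ i, 0 < (α i).1) → (∀ i, 0 < (α' i).1) → (∀ i, prof (α i) = prof (α' i)) →
    prof (infl σ α) = prof (infl σ α')
  prof_inv : ∀ p p', prof p = prof p' → prof (anyInv p) = prof (anyInv p')
  prof_dec : ∀ p p', prof p = prof p' → ∀ τ, Dec τ p → Dec τ p'

/-- `p` is an admissible inflation of `σ` whose blocks have profiles `w`. -/
def HasType {V : Type} (prof : AnyPerm → V) {m : ℕ} (σ : Perm m) (w : Fin m → V) (p : AnyPerm) :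
    Prop :=
  ∃ α, Adm σ α ∧ p = infl σ α ∧ ∀ i, prof (α i) = w i

namespace ProfiledClass

variable {V : Type} {A : Set AnyPerm} {prof : AnyPerm → V} (hA : ProfiledClass A prof)
include hA

theorem adm_of_prof_eq {m : ℕ} {σ : Perm m} {α α' : Fin m → AnyPerm} (h : Adm σ α)
    (hα' : ∀ i, α' i ∈ A) (hp : ∀ i, prof (α i) = prof (α' i)) : Adm σ α' :=
  ⟨h.simple, h.two_le, fun i => hA.pos _ (hα' i), fun hm i hi hd =>
    h.dec hm i hi (hA.prof_dec _ _ (hp i).symm _ hd)⟩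

/-- To bound the generating function of a subset of `A`, it suffices to bound it on permutations
of a given type. -/
theorem sizeGF_mem [Finite V] (Z : Submodule (Polynomial ℚ) (PowerSeries ℚ)) (hZ : 1 ≤ Z)
    (P : AnyPerm → Prop) (hP : ∀ p, P p → p ∈ A) {k : ℕ} (hk : k ≠ 0)
    (h : ∀ {m : ℕ} (σ : Perm m) (w : Fin m → V), (⟨m, σ⟩ : AnyPerm) ∈ A → IsSimple σ → 2 ≤ m →
      (sizeGF fun a : {p // P p ∧ HasType prof σ w p} => k * a.1.1) ∈ Z) :
    (sizeGF fun a : {p // P p} => k * a.1.1) ∈ Z := by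
  have := hA.finite.to_subtype
  let B := Unit ⊕ Σ s : {p ∈ A | IsSimple p.2}, (Fin s.1.1 → V)
  let r : {p // P p} → B → Prop := fun p b =>
    Sum.elim (fun _ => p.1.1 < 2) (fun s => 2 ≤ s.1.1.1 ∧ HasType prof s.1.1.2 s.2 p.1) b
  refine sizeGF_mem_of_classify Z.toAddSubmonoid (B := B) _ (finite_length_eq P hk) r ?_ ?_
  · rintro ⟨p, hp⟩
    rcases lt_or_ge p.1 2 with hlt | hge
    · refine ⟨Sum.inl (), hlt, ?_⟩
      rintro (_ | s) hr
      · rfl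
      · obtain ⟨-, α, hα, rfl, -⟩ := hr
        exact absurd hα.two_le_length (not_le.mpr hlt)
    · obtain ⟨m, σ, α, hα, rfl⟩ := exists_adm p hge
      have hmem := (hA.infl_mem σ α hα.pos).mp (hP _ hp)
      refine ⟨Sum.inr ⟨⟨⟨m, σ⟩, hmem.1, hα.simple⟩, fun i => prof (α i)⟩,
        ⟨hα.two_le, α, hα, rfl, fun i => rfl⟩, ?_⟩
      rintro (_ | ⟨⟨⟨m', σ'⟩, hs⟩, w⟩) hr
      · exact absurd hge (not_le.mpr hr)
      · change 2 ≤ m' ∧ HasType prof σ' w (infl σ α) at hr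
        obtain ⟨-, α', hα', heq, hw⟩ := hr
        obtain rfl : (fun i => prof (α' i)) = w := funext hw
        obtain ⟨rfl, hrest⟩ := Sigma.mk.inj (hα.unique hα' heq)
        obtain ⟨rfl, rfl⟩ := Prod.mk.inj (eq_of_heq hrest)
        rfl
  · rintro (u | ⟨⟨⟨m, σ⟩, hs⟩, w⟩)
    · have : Finite {a // r a (Sum.inl u)} :=
        finite_of_length_le (fun a => a.1.1) (Subtype.val_injective.comp Subtype.val_injective) 2
          fun a => le_of_lt a.2
      exact hZ (sizeGF_finite _)
    · by_cases hm : 2 ≤ m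
      · have := h σ w hs.1 hs.2 hm
        change _ ∈ Z
        convert this using 1
        refine sizeGF_bijective
          (fun a => (⟨a.1.1, a.1.2, a.2.2⟩ : {p // P p ∧ HasType prof σ w p})) ⟨?_, ?_⟩ fun a => rfl
        · intro a b hab
          exact Subtype.ext (Subtype.ext (congrArg (fun x => x.1) hab))
        · rintro ⟨p, hp, ht⟩
          exact ⟨⟨⟨p, hp⟩, hm, ht⟩, rfl⟩
      · have : IsEmpty {a // r a (Sum.inr ⟨⟨⟨m, σ⟩, hs⟩, w⟩)} := ⟨fun a => hm a.2.1⟩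
        rw [sizeGF_isEmpty]
        exact Z.zero_mem

/-- Permutations of a given profile. -/
theorem sizeGF_prof_mem [Finite V] {J : Submodule (Polynomial ℚ) (PowerSeries ℚ)}
    (hJ : J * J ≤ J)
    (hG : ∀ v, (sizeGF fun a : {p // p ∈ A ∧ prof p = v} => 2 * a.1.1) ∈ J) (v : V) :
    (sizeGF fun a : {p // p ∈ A ∧ prof p = v} => 2 * a.1.1) ∈ 1 ⊔ J * J := by
  refine hA.sizeGF_mem _ le_sup_left (fun p => p ∈ A ∧ prof p = v) (fun p hp => hp.1) two_ne_zero ?_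
  intro m σ w hσ hs hm
  rcases isEmpty_or_nonempty {p // (p ∈ A ∧ prof p = v) ∧ HasType prof σ w p} with hE | ⟨⟨p, hp⟩⟩
  · rw [sizeGF_isEmpty]
    exact Submodule.zero_mem _
  obtain ⟨⟨hpA, rfl⟩, α₀, hα₀, rfl, hw⟩ := hp
  have key : ∀ α : ∀ i, {p // p ∈ A ∧ prof p = w i}, Adm σ fun i => (α i).1 := fun α =>
    hA.adm_of_prof_eq hα₀ (fun i => (α i).2.1) fun i => (hw i).trans (α i).2.2.symm
  have hprod : ∏ i, (sizeGF fun a : {p // p ∈ A ∧ prof p = w i} => 2 * a.1.1) ∈ 1 ⊔ J * J := by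
    have : Nontrivial (Fin m) := Fin.nontrivial_iff_two_le.mpr hm
    exact le_sup_right (a := (1 : Submodule (Polynomial ℚ) (PowerSeries ℚ)))
      (prod_mem_mul_self hJ _ fun i => hG (w i))
  rw [← sizeGF_pi _ fun i => finite_length_eq _ two_ne_zero] at hprod
  convert hprod using 1
  symm
  refine sizeGF_bijective (fun α => ⟨infl σ fun i => (α i).1,
    ⟨(hA.infl_mem _ _ (key α).pos).mpr ⟨hσ, fun i => (α i).2.1⟩,
      hA.prof_infl _ _ _ hs hm (key α).pos hα₀.pos fun i => (α i).2.2.trans (hw i).symm⟩,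
    _, key α, rfl, fun i => (α i).2.2⟩) ⟨?_, ?_⟩ fun α => ?_
  · intro α β hab
    obtain ⟨-, hrest⟩ := Sigma.mk.inj ((key α).unique (key β) (congrArg Subtype.val hab))
    obtain ⟨-, heq⟩ := Prod.mk.inj (eq_of_heq hrest)
    funext i
    exact Subtype.ext (congrFun heq i)
  · rintro ⟨p, ⟨hpA', hpv⟩, α, hα, rfl, hαw⟩
    exact ⟨fun i => ⟨α i, ((hA.infl_mem _ _ hα.pos).mp hpA').2 i, hαw i⟩, rfl⟩
  · rw [infl_length, Finset.mul_sum]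

end ProfiledClass

/-- A function invariant under an involution is summed by summing over one point of each
orbit. -/
theorem sum_involution {m : ℕ} {σ : Perm m} (hσ : ∀ i, σ (σ i) = i) (l : Fin m → ℕ)
    (hl : ∀ i, l (σ i) = l i) :
    ∑ i : {i // i ≤ σ i}, (if σ i.1 = i.1 then l i.1 else 2 * l i.1) = ∑ i, l i := by
  rw [← Finset.sum_subtype (Finset.univ.filter fun i => i ≤ σ i) (by simp)
    fun i => if σ i = i then l i else 2 * l i, Finset.sum_filter]
  have h1 : ∑ i, (if i < σ i then l i else 0) = ∑ i, if σ i < i then l i else 0 := by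
    rw [← Equiv.sum_comp σ]
    simp only [hσ, hl]
  calc _ = ∑ i, ((if i ≤ σ i then l i else 0) + if i < σ i then l i else 0) := by
        refine Finset.sum_congr rfl fun i _ => ?_
        rcases lt_trichotomy i (σ i) with h | h | h
        · simp [h, h.le, h.ne', two_mul]
        · simp [← h]
        · simp [h.not_ge, h.not_gt]
    _ = ∑ i, ((if i ≤ σ i then l i else 0) + if σ i < i then l i else 0) := by
        rw [Finset.sum_add_distrib, h1, ← Finset.sum_add_distrib]
    _ = ∑ i, l i := by
        refine Finset.sum_congr rfl fun i _ => ?_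
        by_cases h : i ≤ σ i
        · simp [h]
        · simp [h, not_le.mp h]

theorem nontrivial_le_involution {m : ℕ} {σ : Perm m} (hσ : ∀ i, σ (σ i) = i) (hm : 2 ≤ m)
    (h2 : ∀ hm : m = 2, hm ▸ σ = (1 : Perm 2)) : Nontrivial {i // i ≤ σ i} := by
  have hne : ∃ i : Fin m, (i : ℕ) ≠ 0 ∧ i ≤ σ i := by
    by_cases hm2 : m = 2
    · subst hm2
      obtain rfl := h2 rfl
      exact ⟨1, by simp, le_rfl⟩
    · by_contra! hcon
      have h3 := hcon ⟨1, hm⟩ (by simp)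
      have h4 := hcon ⟨2, by omega⟩ (by simp)
      have h5 := hσ ⟨1, hm⟩
      have h6 := hσ ⟨2, by omega⟩
      have h7 : σ ⟨1, hm⟩ = ⟨0, by omega⟩ := Fin.ext (by simpa [Fin.lt_def] using h3)
      have h10 := Fin.lt_def.mp h4
      rcases Nat.le_one_iff_eq_zero_or_eq_one.mp (Nat.lt_succ_iff.mp h10) with h8 | h8
      · have h9 : σ ⟨2, by omega⟩ = σ ⟨1, hm⟩ := Fin.ext (by rw [h8, h7])
        simpa using congrArg Fin.val (σ.injective h9)
      · have h9 : σ ⟨2, by omega⟩ = ⟨1, hm⟩ := Fin.ext h8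
        rw [h9, h7] at h6
        simpa using congrArg Fin.val h6
  obtain ⟨i, hi, hle⟩ := hne
  refine ⟨⟨⟨0, by omega⟩, Fin.le_def.mpr (Nat.zero_le _)⟩, ⟨i, hle⟩, fun h => hi ?_⟩
  exact (congrArg (fun x => (x.1 : ℕ)) h).symm

/-- The blocks of an inflation of an involution `σ` which is itself an involution, reconstructed
from the blocks at one point of each orbit of `σ`. -/
def orbitExtend {m : ℕ} {σ : Perm m} (hσ : ∀ i, σ (σ i) = i) (β : {i // i ≤ σ i} → AnyPerm)
    (i : Fin m) : AnyPerm :=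
  if h : i ≤ σ i then β ⟨i, h⟩
  else anyInv (β ⟨σ i, (not_le.mp h).le.trans_eq (hσ i).symm⟩)

theorem orbitExtend_of_le {m : ℕ} {σ : Perm m} (hσ : ∀ i, σ (σ i) = i)
    (β : {i // i ≤ σ i} → AnyPerm) (i : {i // i ≤ σ i}) : orbitExtend hσ β i.1 = β i := by
  rw [orbitExtend, dif_pos i.2]

theorem orbitExtend_apply {m : ℕ} {σ : Perm m} (hσ : ∀ i, σ (σ i) = i)
    (β : {i // i ≤ σ i} → AnyPerm) (hβ : ∀ i, σ i.1 = i.1 → anyInv (β i) = β i) (i : Fin m) :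
    orbitExtend hσ β (σ i) = anyInv (orbitExtend hσ β i) := by
  rcases lt_trichotomy i (σ i) with h | h | h
  · rw [orbitExtend_of_le hσ β ⟨i, h.le⟩, orbitExtend, dif_neg (by rw [hσ]; exact not_le.mpr h)]
    congr 2
    exact Subtype.ext (hσ i)
  · rw [← h, orbitExtend_of_le hσ β ⟨i, h.le⟩, hβ _ h.symm]
  · rw [orbitExtend_of_le hσ β ⟨σ i, h.le.trans_eq (hσ i).symm⟩, orbitExtend,
      dif_neg (not_le.mpr h), anyInv_anyInv]

theorem eq_orbitExtend {m : ℕ} {σ : Perm m} (hσ : ∀ i, σ (σ i) = i) (α : Fin m → AnyPerm)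
    (hα : ∀ i, α (σ i) = anyInv (α i)) : orbitExtend hσ (fun i => α i.1) = α := by
  funext i
  rw [orbitExtend]
  split_ifs with h
  · rfl
  · rw [← hα, hσ]

namespace ProfiledClass

variable {V : Type} {A : Set AnyPerm} {prof : AnyPerm → V} (hA : ProfiledClass A prof)
include hA

theorem sizeGF_invol_infl_mem {J : Submodule (Polynomial ℚ) (PowerSeries ℚ)}
    (hJ : J * J ≤ J)
    (hG : ∀ v, (sizeGF fun a : {p // p ∈ A ∧ prof p = v} => 2 * a.1.1) ∈ J)
    (hH : ∀ v, (sizeGF fun a : {p // p ∈ A ∧ anyInv p = p ∧ prof p = v} => 1 * a.1.1) ∈ J) (v : V)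
    {m : ℕ} (σ : Perm m) (w : Fin m → V) (hσ : (⟨m, σ⟩ : AnyPerm) ∈ A) (hs : IsSimple σ)
    (hm : 2 ≤ m) (h2 : ∀ hm : m = 2, hm ▸ σ = (1 : Perm 2)) :
    (sizeGF fun a : {p // (p ∈ A ∧ anyInv p = p ∧ prof p = v) ∧ HasType prof σ w p} => 1 * a.1.1)
      ∈ J * J := by
  rcases isEmpty_or_nonempty {p // (p ∈ A ∧ anyInv p = p ∧ prof p = v) ∧ HasType prof σ w p}
    with hE | ⟨⟨p, hp⟩⟩
  · rw [sizeGF_isEmpty]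
    exact Submodule.zero_mem _
  obtain ⟨⟨hpA, hpi, rfl⟩, α₀, hα₀, rfl, hw⟩ := hp
  obtain ⟨hσi, hα₀i⟩ := (hα₀.anyInv_infl_eq_iff h2).mp hpi
  have hσσ : ∀ i, σ (σ i) = i := fun i => by
    have := σ.apply_symm_apply i
    rwa [← Equiv.Perm.inv_def, hσi] at this
  let D : {i // i ≤ σ i} → Type := fun i =>
    {p // p ∈ A ∧ (σ i.1 = i.1 → anyInv p = p) ∧ prof p = w i.1}
  let s : ∀ i, D i → ℕ := fun i p => if σ i.1 = i.1 then p.1.1 else 2 * p.1.1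
  have hDfin : ∀ i n, Finite {a // s i a = n} := fun i n =>
    finite_of_length_le (fun a => a.1.1) (Subtype.val_injective.comp Subtype.val_injective) n
      fun a => by
        have := a.2
        simp only [s] at this
        split_ifs at this <;> omega
  have hDmem : ∀ i, sizeGF (s i) ∈ J := by
    intro i
    by_cases hi : σ i.1 = i.1
    · convert hH (w i.1) using 1
      exact sizeGF_equiv (Equiv.subtypeEquivRight fun p => by simp [hi]) fun p => by
        simp [s, hi]; rfl
    · convert hG (w i.1) using 1
      exact sizeGF_equiv (Equiv.subtypeEquivRight fun p => by simp [hi]) fun p => by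
        simp [s, hi]; rfl
  have : Nontrivial {i // i ≤ σ i} := nontrivial_le_involution hσσ hm h2
  have hprod := prod_mem_mul_self hJ _ hDmem
  rw [← sizeGF_pi s hDfin] at hprod
  convert hprod using 1
  symm
  have hext : ∀ β : ∀ i, D i, ∀ i, orbitExtend hσσ (fun i => (β i).1) (σ i)
      = anyInv (orbitExtend hσσ (fun i => (β i).1) i) := fun β =>
    orbitExtend_apply hσσ _ fun i => (β i).2.2.1
  have hmem : ∀ β : ∀ i, D i, ∀ i, orbitExtend hσσ (fun i => (β i).1) i ∈ A := by
    intro β i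
    rw [orbitExtend]
    split_ifs with h
    · exact (β _).2.1
    · exact hA.inv _ (β _).2.1
  have hprof : ∀ β : ∀ i, D i, ∀ i, prof (orbitExtend hσσ (fun i => (β i).1) i) = w i := by
    intro β i
    rw [orbitExtend]
    split_ifs with h
    · exact (β _).2.2.2
    · rw [hA.prof_inv _ (α₀ (σ i)) ((β _).2.2.2.trans (hw (σ i)).symm), ← hα₀i, hσσ, hw]
  have key : ∀ β : ∀ i, D i, Adm σ (orbitExtend hσσ fun i => (β i).1) := fun β =>
    hA.adm_of_prof_eq hα₀ (hmem β) fun i => (hw i).trans (hprof β i).symm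
  refine sizeGF_bijective (fun β => ⟨infl σ (orbitExtend hσσ fun i => (β i).1),
    ⟨(hA.infl_mem _ _ (key β).pos).mpr ⟨hσ, hmem β⟩,
      ((key β).anyInv_infl_eq_iff h2).mpr ⟨hσi, hext β⟩,
      hA.prof_infl _ _ _ hs hm (key β).pos hα₀.pos fun i => (hprof β i).trans (hw i).symm⟩,
    _, key β, rfl, hprof β⟩) ⟨?_, ?_⟩ fun β => ?_
  · intro β γ hab
    obtain ⟨-, hrest⟩ := Sigma.mk.inj ((key β).unique (key γ) (congrArg Subtype.val hab))
    obtain ⟨-, heq⟩ := Prod.mk.inj (eq_of_heq hrest)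
    funext i
    have := congrFun heq i.1
    rw [orbitExtend_of_le, orbitExtend_of_le] at this
    exact Subtype.ext this
  · rintro ⟨p, ⟨hpA', hpi', hpv⟩, α, hα, rfl, hαw⟩
    have hα' := ((hα.anyInv_infl_eq_iff h2).mp hpi').2
    refine ⟨fun i => ⟨α i.1, ((hA.infl_mem _ _ hα.pos).mp hpA').2 i.1,
      fun hi => by rw [← hα', hi], hαw i.1⟩, Subtype.ext ?_⟩
    exact congrArg (infl σ) (eq_orbitExtend hσσ α hα')
  · change 1 * (infl σ (orbitExtend hσσ fun i => (β i).1)).1 = _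
    rw [infl_length, one_mul, ← sum_involution hσσ _ fun i => by rw [hext]; rfl]
    refine Finset.sum_congr rfl fun i _ => ?_
    rw [orbitExtend_of_le]

theorem sizeGF_invol_swap_mem [Finite V] {J : Submodule (Polynomial ℚ) (PowerSeries ℚ)}
    (hJ : J * J ≤ J)
    (hG : ∀ v, (sizeGF fun a : {p // p ∈ A ∧ prof p = v} => 2 * a.1.1) ∈ J)
    (hH : ∀ v, (sizeGF fun a : {p // p ∈ A ∧ anyInv p = p ∧ prof p = v} => 1 * a.1.1) ∈ J) (v : V)
    (w : Fin 2 → V) (hσ : (⟨2, Equiv.swap 0 1⟩ : AnyPerm) ∈ A) :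
    (sizeGF fun a : {p // (p ∈ A ∧ anyInv p = p ∧ prof p = v) ∧
      HasType prof (Equiv.swap 0 1 : Perm 2) w p} => 1 * a.1.1) ∈ 1 ⊔ J * J := by
  obtain ⟨sw, hsw⟩ : ∃ sw : Perm 2, sw = Equiv.swap 0 1 := ⟨_, rfl⟩
  rw [← hsw] at hσ ⊢
  have hmem2 : ∀ a b : AnyPerm, a ∈ A → b ∈ A → infl sw ![a, b] ∈ A := fun a b ha hb =>
    (hA.infl_mem _ _ (Fin.forall_fin_two.mpr ⟨hA.pos _ ha, hA.pos _ hb⟩)).mpr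
      ⟨hσ, Fin.forall_fin_two.mpr ⟨ha, hb⟩⟩
  have hmem2' : ∀ a b : AnyPerm, 0 < a.1 → 0 < b.1 → infl sw ![a, b] ∈ A → a ∈ A ∧ b ∈ A :=
    fun a b ha hb h => by
      have := ((hA.infl_mem _ _ (Fin.forall_fin_two.mpr ⟨ha, hb⟩)).mp h).2
      exact ⟨this 0, this 1⟩
  have hprof2 : ∀ a b a' b' : AnyPerm, 0 < a.1 → 0 < b.1 → 0 < a'.1 → 0 < b'.1 →
      prof a = prof a' → prof b = prof b' → prof (infl sw ![a, b]) = prof (infl sw ![a', b']) :=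
    fun a b a' b' ha hb ha' hb' h1 h2 => hA.prof_infl _ _ _ (isSimple_two sw) le_rfl
      (Fin.forall_fin_two.mpr ⟨ha, hb⟩) (Fin.forall_fin_two.mpr ⟨ha', hb'⟩)
      (Fin.forall_fin_two.mpr ⟨h1, h2⟩)
  have huniq : ∀ a b a' b' : AnyPerm, 0 < a.1 → 0 < b.1 → 0 < a'.1 → 0 < b'.1 → ¬ Dec sw a →
      ¬ Dec sw a' → infl sw ![a, b] = infl sw ![a', b'] → a = a' ∧ b = b' := by
    intro a b a' b' ha hb ha' hb' hd hd' h
    obtain ⟨-, hrest⟩ := Sigma.mk.inj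
      ((adm_two.mpr ⟨ha, hb, hd⟩).unique (adm_two.mpr ⟨ha', hb', hd'⟩) h)
    obtain ⟨-, heq⟩ := Prod.mk.inj (eq_of_heq hrest)
    exact ⟨congrFun heq 0, congrFun heq 1⟩
  have htype : ∀ a b : AnyPerm, 0 < a.1 → 0 < b.1 → ¬ Dec sw a →
      (HasType prof sw w (infl sw ![a, b]) ↔ prof a = w 0 ∧ prof b = w 1) := by
    intro a b ha hb hd
    constructor
    · rintro ⟨α, hα, heq, hαw⟩
      rw [fin_two_eq α] at hα heq
      obtain ⟨h1, h2, h3⟩ := adm_two.mp hα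
      obtain ⟨h4, h5⟩ := huniq _ _ _ _ ha hb h1 h2 hd h3 heq
      rw [h4, h5]
      exact ⟨hαw 0, hαw 1⟩
    · rintro ⟨h1, h2⟩
      exact ⟨_, adm_two.mpr ⟨ha, hb, hd⟩, rfl, Fin.forall_fin_two.mpr ⟨h1, h2⟩⟩
  let P : AnyPerm → Prop := fun p => (p ∈ A ∧ anyInv p = p ∧ prof p = v) ∧ HasType prof sw w p
  let r : {p // P p} → Option V → Prop := fun p o => match o with
    | none => ∃ a : AnyPerm, 0 < a.1 ∧ ¬ Dec sw a ∧ p.1 = infl sw ![a, anyInv a]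
    | some u => ∃ a γ : AnyPerm, 0 < a.1 ∧ 0 < γ.1 ∧ ¬ Dec sw a ∧ anyInv γ = γ ∧ prof γ = u ∧
        p.1 = infl sw ![a, infl sw ![γ, anyInv a]]
  have hlen : ∀ a b : AnyPerm, 0 < a.1 → 0 < (infl sw ![a, b]).1 := fun a b ha => by
    rw [infl_two_length]
    omega
  have hcontra : ∀ a a' γ : AnyPerm, 0 < a.1 → 0 < a'.1 → 0 < γ.1 → ¬ Dec sw a → ¬ Dec sw a' →
      infl sw ![a, anyInv a] ≠ infl sw ![a', infl sw ![γ, anyInv a']] := by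
    intro a a' γ ha ha' hγ hd hd' h
    obtain ⟨rfl, h2⟩ := huniq _ (anyInv a) _ _ ha ha ha' (hlen _ _ hγ) hd hd' h
    have := congrArg Sigma.fst h2
    rw [infl_two_length] at this
    omega
  change (sizeGF fun a : {p // P p} => 1 * a.1.1) ∈ _
  refine sizeGF_mem_of_classify (1 ⊔ J * J).toAddSubmonoid (B := Option V) _
    (finite_length_eq P one_ne_zero) r ?_ ?_
  · rintro ⟨p, ⟨hpA, hpi, hpv⟩, α, hα, rfl, hαw⟩
    rw [fin_two_eq α] at hα hpi
    obtain ⟨h1, h2, h3⟩ := adm_two.mp hα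
    have h4 : infl sw α = infl sw ![α 0, α 1] := congrArg _ (fin_two_eq α)
    have hcases : α 1 = anyInv (α 0) ∨ ∃ γ : AnyPerm, 0 < γ.1 ∧ anyInv γ = γ ∧
        α 1 = infl sw ![γ, anyInv (α 0)] := by
      rw [hsw] at h3 hpi ⊢
      exact anyInv_infl_swap_eq h1 h2 h3 hpi
    rcases hcases with h5 | ⟨γ, hγ, hγi, h5⟩
    · have h6 : infl sw α = infl sw ![α 0, anyInv (α 0)] := by rw [h4, h5]
      refine ⟨none, ⟨α 0, h1, h3, h6⟩, ?_⟩
      rintro (_ | u) hr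
      · rfl
      · obtain ⟨a', γ', ha', hγ', hd', -, -, heq⟩ := hr
        exact absurd (h6.symm.trans heq) (hcontra _ _ _ h1 ha' hγ' h3 hd')
    · have h6 : infl sw α = infl sw ![α 0, infl sw ![γ, anyInv (α 0)]] := by rw [h4, h5]
      refine ⟨some (prof γ), ⟨α 0, γ, h1, hγ, h3, hγi, rfl, h6⟩, ?_⟩
      rintro (_ | u) hr
      · obtain ⟨a', ha', hd', heq⟩ := hr
        exact absurd (heq.symm.trans h6) (hcontra _ _ _ ha' h1 hγ hd' h3)
      · obtain ⟨a', γ', ha', hγ', hd', -, rfl, heq⟩ := hr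
        obtain ⟨h7, h8⟩ := huniq _ _ _ _ h1 (hlen _ _ hγ) ha' (hlen _ _ hγ') h3 hd'
          (h6.symm.trans heq)
        rw [← h7] at h8
        rw [infl_two_left_cancel hγ hγ' (c := anyInv (α 0)) h1 h8]
  · intro o
    change _ ∈ 1 ⊔ J * J
    rcases isEmpty_or_nonempty {a // r a o} with hE | ⟨⟨⟨p, ⟨hpA, hpi, rfl⟩, hpt⟩, hpr⟩⟩
    · rw [sizeGF_isEmpty]
      exact Submodule.zero_mem _
    cases o with
    | none =>
      obtain ⟨a₀, ha₀, hd₀, rfl⟩ := hpr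
      obtain ⟨hw0, hw1⟩ := (htype _ (anyInv a₀) ha₀ ha₀ hd₀).mp hpt
      have hd : ∀ a : {p // p ∈ A ∧ prof p = w 0}, ¬ Dec sw a.1 := fun a h =>
        hd₀ (hA.prof_dec _ _ (a.2.2.trans hw0.symm) _ h)
      have hinv : ∀ a : {p // p ∈ A ∧ prof p = w 0}, prof (anyInv a.1) = prof (anyInv a₀) :=
        fun a => hA.prof_inv _ _ (a.2.2.trans hw0.symm)
      have hpos : ∀ a : {p // p ∈ A ∧ prof p = w 0}, 0 < a.1.1 := fun a => hA.pos _ a.2.1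
      convert hA.sizeGF_prof_mem hJ hG (w 0) using 1
      symm
      refine sizeGF_bijective (fun a => ⟨⟨infl sw ![a.1, anyInv a.1],
        ⟨hmem2 _ _ a.2.1 (hA.inv _ a.2.1), by rw [hsw]; exact anyInv_infl_swap_self _,
          hprof2 _ (anyInv a.1) _ (anyInv a₀) (hpos a) (hpos a) ha₀ ha₀
            (a.2.2.trans hw0.symm) (hinv a)⟩,
        (htype _ (anyInv a.1) (hpos a) (hpos a) (hd a)).mpr ⟨a.2.2, (hinv a).trans hw1⟩⟩,
        a.1, hpos a, hd a, rfl⟩) ⟨?_, ?_⟩ fun a => ?_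
      · intro a b hab
        have h1 : infl sw ![a.1, anyInv a.1] = infl sw ![b.1, anyInv b.1] :=
          congrArg (fun x => x.1.1) hab
        exact Subtype.ext
          (huniq _ (anyInv a.1) _ (anyInv b.1) (hpos a) (hpos a) (hpos b) (hpos b)
            (hd a) (hd b) h1).1
      · rintro ⟨⟨p, ⟨hp1, hpi', hpv'⟩, hp2⟩, hr⟩
        obtain ⟨a, ha, hda, h⟩ := id hr
        replace h : p = infl sw ![a, anyInv a] := h
        subst h
        exact ⟨⟨a, (hmem2' _ (anyInv a) ha ha hp1).1,
          ((htype _ (anyInv a) ha ha hda).mp hp2).1⟩, rfl⟩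
      · change 1 * (infl sw ![a.1, anyInv a.1]).1 = _
        rw [infl_two_length]
        change 1 * (a.1.1 + a.1.1) = _
        ring
    | some u =>
      obtain ⟨a₀, γ₀, ha₀, hγ₀, hd₀, hγ₀i, rfl, rfl⟩ := hpr
      obtain ⟨hw0, hw1⟩ := (htype _ _ ha₀ (hlen _ _ hγ₀) hd₀).mp hpt
      have hd : ∀ a : {p // p ∈ A ∧ prof p = w 0}, ¬ Dec sw a.1 := fun a h =>
        hd₀ (hA.prof_dec _ _ (a.2.2.trans hw0.symm) _ h)
      have hinv : ∀ a : {p // p ∈ A ∧ prof p = w 0}, prof (anyInv a.1) = prof (anyInv a₀) :=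
        fun a => hA.prof_inv _ _ (a.2.2.trans hw0.symm)
      have hpos : ∀ a : {p // p ∈ A ∧ prof p = w 0}, 0 < a.1.1 := fun a => hA.pos _ a.2.1
      have hpos' : ∀ γ : {p // p ∈ A ∧ anyInv p = p ∧ prof p = prof γ₀}, 0 < γ.1.1 :=
        fun γ => hA.pos _ γ.2.1
      have hin : ∀ (a : {p // p ∈ A ∧ prof p = w 0})
          (γ : {p // p ∈ A ∧ anyInv p = p ∧ prof p = prof γ₀}),
          prof (infl sw ![γ.1, anyInv a.1]) = prof (infl sw ![γ₀, anyInv a₀]) := fun a γ =>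
        hprof2 _ (anyInv a.1) _ (anyInv a₀) (hpos' γ) (hpos a) hγ₀ ha₀ γ.2.2.2 (hinv a)
      have hmul := le_sup_right (a := (1 : Submodule (Polynomial ℚ) (PowerSeries ℚ)))
        (Submodule.mul_mem_mul (hG (w 0)) (hH (prof γ₀)))
      rw [← sizeGF_mul _ _ (finite_length_eq _ two_ne_zero)
        (finite_length_eq _ one_ne_zero)] at hmul
      convert hmul using 1
      symm
      refine sizeGF_bijective (fun x => ⟨⟨infl sw ![x.1.1, infl sw ![x.2.1, anyInv x.1.1]],
        ⟨hmem2 _ _ x.1.2.1 (hmem2 _ _ x.2.2.1 (hA.inv _ x.1.2.1)),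
          by rw [hsw]; exact anyInv_infl_swap_three (hpos x.1) (hpos' x.2) x.2.2.2.1,
          hprof2 _ _ _ _ (hpos x.1) (hlen _ _ (hpos' x.2)) ha₀ (hlen _ _ hγ₀)
            (x.1.2.2.trans hw0.symm) (hin x.1 x.2)⟩,
        (htype _ _ (hpos x.1) (hlen _ _ (hpos' x.2)) (hd x.1)).mpr
          ⟨x.1.2.2, (hin x.1 x.2).trans hw1⟩⟩,
        x.1.1, x.2.1, hpos x.1, hpos' x.2, hd x.1, x.2.2.2.1, x.2.2.2.2, rfl⟩) ⟨?_, ?_⟩ fun x => ?_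
      · rintro ⟨a, γ⟩ ⟨b, δ⟩ hab
        have h1 : infl sw ![a.1, infl sw ![γ.1, anyInv a.1]] =
            infl sw ![b.1, infl sw ![δ.1, anyInv b.1]] :=
          congrArg (fun x => x.1.1) hab
        obtain ⟨h2, h3⟩ := huniq _ _ _ _ (hpos a) (hlen _ _ (hpos' γ)) (hpos b)
          (hlen _ _ (hpos' δ)) (hd a) (hd b) h1
        rw [← h2] at h3
        exact Prod.ext (Subtype.ext h2)
          (Subtype.ext (infl_two_left_cancel (hpos' γ) (hpos' δ) (c := anyInv a.1) (hpos a) h3))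
      · rintro ⟨⟨p, ⟨hp1, hpi', hpv'⟩, hp2⟩, hr⟩
        obtain ⟨a, γ, ha, hγ, hda, hγi, hγp, h⟩ := id hr
        replace h : p = infl sw ![a, infl sw ![γ, anyInv a]] := h
        subst h
        obtain ⟨h1, h2⟩ := hmem2' _ _ ha (hlen _ _ hγ) hp1
        exact ⟨⟨⟨a, h1, ((htype _ _ ha (hlen _ _ hγ) hda).mp hp2).1⟩,
          ⟨γ, (hmem2' _ (anyInv a) hγ ha h2).1, hγi, hγp⟩⟩, rfl⟩
      · change 1 * (infl sw ![x.1.1, infl sw ![x.2.1, anyInv x.1.1]]).1 = _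
        rw [infl_two_length, infl_two_length]
        change 1 * (x.1.1.1 + (x.2.1.1 + x.1.1.1)) = _
        ring

/-- Involutions of a given profile. -/
theorem sizeGF_invol_mem [Finite V] {J : Submodule (Polynomial ℚ) (PowerSeries ℚ)}
    (hJ : J * J ≤ J)
    (hG : ∀ v, (sizeGF fun a : {p // p ∈ A ∧ prof p = v} => 2 * a.1.1) ∈ J)
    (hH : ∀ v, (sizeGF fun a : {p // p ∈ A ∧ anyInv p = p ∧ prof p = v} => 1 * a.1.1) ∈ J)
    (v : V) :
    (sizeGF fun a : {p // p ∈ A ∧ anyInv p = p ∧ prof p = v} => 1 * a.1.1) ∈ 1 ⊔ J * J := by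
  refine hA.sizeGF_mem _ le_sup_left (fun p => p ∈ A ∧ anyInv p = p ∧ prof p = v)
    (fun p hp => hp.1) one_ne_zero ?_
  intro m σ w hσ hs hm
  by_cases h2 : ∀ hm : m = 2, hm ▸ σ = (1 : Perm 2)
  · exact le_sup_right (a := (1 : Submodule (Polynomial ℚ) (PowerSeries ℚ)))
      (hA.sizeGF_invol_infl_mem hJ hG hH v σ w hσ hs hm h2)
  · push Not at h2
    obtain ⟨rfl, h2⟩ := h2
    have key : ∀ τ : Perm 2, τ ≠ 1 → τ = Equiv.swap 0 1 := by decide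
    obtain rfl := key σ h2
    exact hA.sizeGF_invol_swap_mem hJ hG hH v w hσ

end ProfiledClass

theorem contains_infl {m : ℕ} (σ : Perm m) (α : Fin m → AnyPerm) {n : ℕ} (τ : Perm n)
    (f : Fin n → Σ i, Fin (α i).1) (hp : ∀ s t, s < t → inflPos α (f s) < inflPos α (f t))
    (hv : ∀ s t, inflVal σ α (f s) < inflVal σ α (f t) ↔ τ s < τ t) :
    Contains τ (infl σ α).2 := by
  obtain ⟨e, heu, hev⟩ := isStd_infl σ α
  refine ⟨fun s => e.symm (f s), fun s t hst => ?_, fun s t => ?_⟩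
  · refine heu.lt_iff_lt.mp ?_
    simpa using hp s t hst
  · have := hev.lt_iff_lt (a := (infl σ α).2 (e.symm (f s))) (b := (infl σ α).2 (e.symm (f t)))
    rw [← this, ← hv]
    simp

theorem contains_infl_block {m : ℕ} (σ : Perm m) (α : Fin m → AnyPerm) (i : Fin m) :
    Contains (α i).2 (infl σ α).2 :=
  contains_infl σ α _ (fun s => ⟨i, s⟩)
    (fun s t hst => by simpa [inflPos, Prod.Lex.toLex_lt_toLex] using hst)
    fun s t => by simp [inflVal, Prod.Lex.toLex_lt_toLex]

theorem contains_infl_quot {m : ℕ} (σ : Perm m) (α : Fin m → AnyPerm) (hα : ∀ i, 0 < (α i).1) :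
    Contains σ (infl σ α).2 := by
  refine contains_infl σ α _ (fun i => ⟨i, ⟨0, hα i⟩⟩)
    (fun s t hst => by simp [inflPos, Prod.Lex.toLex_lt_toLex, hst]) fun s t => ?_
  simp only [inflVal, Prod.Lex.toLex_lt_toLex, EmbeddingLike.apply_eq_iff_eq]
  refine ⟨fun h => h.resolve_right ?_, Or.inl⟩
  rintro ⟨rfl, h⟩
  exact lt_irrefl _ h

/-- The members of a class all of whose inverses are in the class too. -/
def symmPart (C : ∀ n, Set (Perm n)) : Set AnyPerm :=
  {p | 0 < p.1 ∧ p.2 ∈ C p.1 ∧ (anyInv p).2 ∈ C (anyInv p).1}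

/-- The properties of a permutation and of its inverse, along with its decompositions as a sum or
as a skew sum. -/
def profile (Ps : Set (∀ n, Set (Perm n))) (p : AnyPerm) : Set Ps × Set Ps × Set (Perm 2) :=
  ({P | p.2 ∈ P.1 p.1}, {P | (anyInv p).2 ∈ P.1 (anyInv p).1}, {τ | Dec τ p})

theorem infl_mem_iff {C : ∀ n, Set (Perm n)} (hC : IsPermClass C) (hwc : WreathClosed C) {m : ℕ}
    (σ : Perm m) (α : Fin m → AnyPerm) (hα : ∀ i, 0 < (α i).1) :
    (infl σ α).2 ∈ C (infl σ α).1 ↔ σ ∈ C m ∧ ∀ i, (α i).2 ∈ C (α i).1 :=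
  ⟨fun h => ⟨hC _ _ h (contains_infl_quot σ α hα), fun i => hC _ _ h (contains_infl_block σ α i)⟩,
    fun h => hwc σ _ _ _ h.1 h.2 (isInflation_infl σ α hα)⟩

theorem QueryComplete.infl_mem_iff {Ps : Set (∀ n, Set (Perm n))} (hqc : QueryComplete Ps) {m : ℕ}
    (σ : Perm m) {α α' : Fin m → AnyPerm} (hα : ∀ i, 0 < (α i).1) (hα' : ∀ i, 0 < (α' i).1)
    (h : ∀ i, ∀ Q ∈ Ps, (α i).2 ∈ Q (α i).1 ↔ (α' i).2 ∈ Q (α' i).1) {P} (hP : P ∈ Ps) :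
    (infl σ α).2 ∈ P (infl σ α).1 ↔ (infl σ α').2 ∈ P (infl σ α').1 :=
  hqc σ _ _ _ _ h P hP _ _ (isInflation_infl σ α hα) (isInflation_infl σ α' hα')

theorem profile_eq_iff {Ps : Set (∀ n, Set (Perm n))} {p p' : AnyPerm} :
    profile Ps p = profile Ps p' ↔ (∀ P ∈ Ps, p.2 ∈ P p.1 ↔ p'.2 ∈ P p'.1) ∧
      (∀ P ∈ Ps, (anyInv p).2 ∈ P (anyInv p).1 ↔ (anyInv p').2 ∈ P (anyInv p').1) ∧
      ∀ τ, Dec τ p ↔ Dec τ p' := by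
  simp only [profile, Prod.mk.injEq, Set.ext_iff, Subtype.forall, Set.mem_ofPred_eq]

theorem profiledClass_symmPart {C : ∀ n, Set (Perm n)} (hC : IsPermClass C) (hwc : WreathClosed C)
    (hfin : FinitelyManySimples C) {Ps : Set (∀ n, Set (Perm n))} (hqc : QueryComplete Ps) :
    ProfiledClass (symmPart C) (profile Ps) where
  pos p hp := hp.1
  inv p hp := ⟨hp.1, hp.2.2, by rw [anyInv_anyInv]; exact hp.2.1⟩
  infl_mem {m} σ α hα := by
    have hα' : ∀ i, 0 < (anyInv (α (σ⁻¹ i))).1 := fun i => hα _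
    have hpos : 0 < (infl σ α).1 ↔ 0 < m := by
      rw [infl_length]
      refine ⟨fun h => Nat.pos_of_ne_zero ?_, fun h => ?_⟩
      · rintro rfl
        simp at h
      · exact Finset.sum_pos (fun i _ => hα i) ⟨⟨0, h⟩, Finset.mem_univ _⟩
    simp only [symmPart, Set.mem_ofPred_eq]
    rw [anyInv_infl, infl_mem_iff hC hwc σ α hα, infl_mem_iff hC hwc σ⁻¹ _ hα', hpos]
    have h3 : (∀ i, (anyInv (α (σ⁻¹ i))).2 ∈ C (anyInv (α (σ⁻¹ i))).1) ↔
        ∀ i, (anyInv (α i)).2 ∈ C (anyInv (α i)).1 :=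
      ⟨fun h i => by
        have h1 := h (σ i)
        rwa [show σ⁻¹ (σ i) = i from σ.symm_apply_apply i] at h1, fun h i => h _⟩
    rw [h3]
    constructor
    · rintro ⟨h1, ⟨h4, h5⟩, h6, h7⟩
      exact ⟨⟨h1, h4, h6⟩, fun i => ⟨hα i, h5 i, h7 i⟩⟩
    · rintro ⟨⟨h1, h4, h6⟩, h⟩
      exact ⟨h1, ⟨h4, fun i => (h i).2.1⟩, h6, fun i => (h i).2.2⟩
  finite := hfin.subset fun p hp => ⟨hp.1.2.1, hp.2⟩
  prof_infl {m} σ α α' hσ hm hα hα' h := by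
    simp only [profile_eq_iff] at h
    refine profile_eq_iff.mpr ⟨fun P hP => hqc.infl_mem_iff σ hα hα' (fun i => (h i).1) hP,
      fun P hP => ?_, fun τ => by rw [dec_infl hσ hm hα, dec_infl hσ hm hα']⟩
    rw [anyInv_infl, anyInv_infl]
    exact hqc.infl_mem_iff σ⁻¹ (α := fun i => anyInv (α (σ⁻¹ i)))
      (α' := fun i => anyInv (α' (σ⁻¹ i))) (fun i => hα _) (fun i => hα' _)
      (fun i => (h _).2.1) hP
  prof_inv p p' h := by
    simp only [profile_eq_iff, dec_anyInv] at h ⊢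
    exact ⟨h.2.1, h.1, h.2.2⟩
  prof_dec p p' h τ := ((profile_eq_iff.mp h).2.2 τ).mp

namespace ProfiledClass

theorem isAlgebraic_sizeGF_invol {V : Type} [Finite V] {A : Set AnyPerm} {prof : AnyPerm → V}
    (hA : ProfiledClass A prof) (v : V) : IsAlgebraic (Polynomial ℚ)
      (sizeGF fun a : {p // p ∈ A ∧ anyInv p = p ∧ prof p = v} => 1 * a.1.1) := by
  let G : V → PowerSeries ℚ := fun v => sizeGF fun a : {p // p ∈ A ∧ prof p = v} => 2 * a.1.1
  let H : V → PowerSeries ℚ := fun v =>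
    sizeGF fun a : {p // p ∈ A ∧ anyInv p = p ∧ prof p = v} => 1 * a.1.1
  let U : V ⊕ V → PowerSeries ℚ := Sum.elim G H
  let J : Submodule (Polynomial ℚ) (PowerSeries ℚ) :=
    { carrier := {y | y ∈ Algebra.adjoin (Polynomial ℚ) (Set.range U) ∧
        PowerSeries.constantCoeff y = 0}
      add_mem' := fun {x y} hx hy => ⟨add_mem hx.1 hy.1, by rw [map_add, hx.2, hy.2, add_zero]⟩
      zero_mem' := ⟨zero_mem _, map_zero _⟩
      smul_mem' := fun c x hx => ⟨Subalgebra.smul_mem _ hx.1 c, by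
        rw [Algebra.smul_def, map_mul, hx.2, mul_zero]⟩ }
  have hJ : J * J ≤ J := Submodule.mul_le.mpr fun x hx y hy =>
    ⟨mul_mem hx.1 hy.1, by rw [map_mul, hx.2, zero_mul]⟩
  have hG : ∀ v, G v ∈ J := fun v => ⟨Algebra.subset_adjoin ⟨Sum.inl v, rfl⟩,
    constantCoeff_sizeGF _ fun a => mul_ne_zero two_ne_zero (hA.pos _ a.2.1).ne'⟩
  have hH : ∀ v, H v ∈ J := fun v => ⟨Algebra.subset_adjoin ⟨Sum.inr v, rfl⟩,
    constantCoeff_sizeGF _ fun a => mul_ne_zero one_ne_zero (hA.pos _ a.2.1).ne'⟩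
  refine PowerSeries.isAlgebraic_of_mem_add_mul U J (fun y hy => hy) ?_ (Sum.inr v)
  rintro (u | u)
  · exact hA.sizeGF_prof_mem hJ hG u
  · exact hA.sizeGF_invol_mem hJ hG hH u

/-- Involutions whose profile lies in a given set. -/
theorem isAlgebraic_sizeGF_invol_mem {V : Type} [Finite V] {A : Set AnyPerm} {prof : AnyPerm → V}
    (hA : ProfiledClass A prof) (W : Set V) : IsAlgebraic (Polynomial ℚ)
      (sizeGF fun a : {p // p ∈ A ∧ anyInv p = p ∧ prof p ∈ W} => 1 * a.1.1) := by
  let Z : Subalgebra (Polynomial ℚ) (PowerSeries ℚ) := Subalgebra.algebraicClosure _ _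
  change _ ∈ Z.toSubsemiring.toAddSubmonoid
  refine sizeGF_mem_of_classify _ (B := V) _ (finite_length_eq _ one_ne_zero)
    (fun p v => prof p.1 = v) (fun p => ⟨_, rfl, fun _ h => h.symm⟩) fun v => ?_
  by_cases hv : v ∈ W
  · change IsAlgebraic _ _
    convert hA.isAlgebraic_sizeGF_invol v using 1
    refine sizeGF_bijective (fun a => (⟨a.1.1, a.1.2.1, a.1.2.2.1, a.2⟩ :
      {p // p ∈ A ∧ anyInv p = p ∧ prof p = v})) ⟨?_, ?_⟩ fun a => rfl
    · intro a b hab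
      exact Subtype.ext (Subtype.ext (congrArg (fun x => x.1) hab))
    · rintro ⟨p, h1, h2, rfl⟩
      exact ⟨⟨⟨p, h1, h2, hv⟩, rfl⟩, rfl⟩
  · have : IsEmpty {a : {p // p ∈ A ∧ anyInv p = p ∧ prof p ∈ W} // prof a.1 = v} :=
      ⟨fun a => hv (a.2 ▸ a.1.2.2.2)⟩
    rw [sizeGF_isEmpty]
    exact zero_mem _

end ProfiledClass

theorem genFun_eq_sizeGF (S : ∀ n, Set (Perm n)) :
    genFun S = sizeGF fun a : {p : AnyPerm // 0 < p.1 ∧ p.2 ∈ S p.1} => 1 * a.1.1 := by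
  ext n
  simp only [genFun, sizeGF, PowerSeries.coeff_mk]
  split_ifs with hn
  · subst hn
    have : IsEmpty {a : {p : AnyPerm // 0 < p.1 ∧ p.2 ∈ S p.1} // 1 * a.1.1 = 0} :=
      ⟨fun a => by have := a.1.2.1; have := a.2; omega⟩
    rw [Nat.card_of_isEmpty, Nat.cast_zero]
  · rw [Nat.cast_inj]
    refine Nat.card_congr (Equiv.ofBijective
      (fun π => ⟨⟨⟨n, π.1⟩, Nat.pos_of_ne_zero hn, π.2⟩, one_mul n⟩) ⟨?_, ?_⟩)
    · intro π π' h
      have := congrArg (fun x => x.1.1) h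
      simpa [Subtype.ext_iff] using this
    · rintro ⟨⟨⟨k, π⟩, h1, h2⟩, h3⟩
      obtain rfl : k = n := by simpa using h3
      exact ⟨⟨π, h2⟩, rfl⟩

theorem isAlgebraicOverQx_of_isAlgebraic {f : PowerSeries ℚ} (h : IsAlgebraic (Polynomial ℚ) f) :
    IsAlgebraicOverQx f := by
  obtain ⟨P, hP, h0⟩ := h
  refine ⟨P, hP, ?_⟩
  rw [Polynomial.aeval_def] at h0
  have key : algebraMap (Polynomial ℚ) (PowerSeries ℚ) = Polynomial.coeToPowerSeries.ringHom :=
    RingHom.ext fun p => by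
      rw [PowerSeries.algebraMap_apply']
      simp
  rwa [key] at h0

/-- Let `C` be a wreath-closed permutation class containing only finitely many simple
permutations, `Ps` a finite query-complete set of properties, and `Qs ⊆ Ps`.  Then the
generating function of the set of involutions in `C` satisfying every property in `Qs`
is algebraic over `ℚ[x]`. -/
theorem statement7 (C : ∀ n, Set (Perm n)) (hC : IsPermClass C) (hwc : WreathClosed C)
    (hfin : FinitelyManySimples C)
    (Ps : Set (∀ n, Set (Perm n))) (hPs : Ps.Finite) (hqc : QueryComplete Ps)
    (Qs : Set (∀ n, Set (Perm n))) (hQs : Qs ⊆ Ps) :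
    IsAlgebraicOverQx (genFun fun n =>
      {π : Perm n | π ∈ C n ∧ π⁻¹ = π ∧ ∀ P ∈ Qs, π ∈ P n}) := by
  have := hPs.to_subtype
  refine isAlgebraicOverQx_of_isAlgebraic ?_
  convert (profiledClass_symmPart hC hwc hfin hqc).isAlgebraic_sizeGF_invol_mem
    {v | ∀ P (hP : P ∈ Qs), ⟨P, hQs hP⟩ ∈ v.1} using 1
  rw [genFun_eq_sizeGF]
  refine sizeGF_equiv (Equiv.subtypeEquivRight fun p => ?_) fun p => rfl
  have h1 : anyInv p = p ↔ p.2⁻¹ = p.2 := by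
    obtain ⟨n, π⟩ := p
    simp [anyInv]
  simp only [Set.mem_ofPred_eq, h1, symmPart, profile]
  constructor
  · rintro ⟨h2, h3, h4, h5⟩
    exact ⟨⟨h2, h3, by rw [h1.mpr h4]; exact h3⟩, h4, h5⟩
  · rintro ⟨⟨h2, h3, -⟩, h4, h5⟩
    exact ⟨h2, h3, h4, h5⟩
end

section
/- Let k ≥ 1 and let C be a permutation class in which every simple permutation has length at most k. Then every element of the basis of the wreath closure W(C) is a simple permutation of length at most k + 2. -/
/-- The wreath closure of `C`: all permutations all of whose simple patterns lie in
`C`.  It is the largest permutation class whose simple permutations are exactly the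
simple permutations of `C`. -/
def WreathClosure (C : ∀ n, Set (Perm n)) : ∀ n, Set (Perm n) := fun _ =>
  {π | ∀ (m : ℕ) (σ : Perm m), IsSimple σ → Contains σ π → σ ∈ C m}

/-- `β` is in the basis of `D`: `β ∉ D`, and every permutation strictly contained in
`β` lies in `D`. -/
def InBasis (D : ∀ n, Set (Perm n)) {n : ℕ} (β : Perm n) : Prop :=
  β ∉ D n ∧ ∀ (m : ℕ) (σ : Perm m), Contains σ β → ¬ Contains β σ → σ ∈ D m

/-- `M` is a module of the induced substructure on `S` of the binary structure `c`: no element of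
`S` outside `M` distinguishes two elements of `M`. -/
def IsModule {α K : Type*} (c : α → α → K) (S M : Finset α) : Prop :=
  ∀ s ∈ S, s ∉ M → ∀ x ∈ M, ∀ y ∈ M, c s x = c s y

/-- The induced substructure on `S` has only trivial modules. -/
def IsPrimeOn {α K : Type*} (c : α → α → K) (S : Finset α) : Prop :=
  ∀ M ⊆ S, IsModule c S M → (∀ x ∈ M, ∀ y ∈ M, x = y) ∨ M = S

/-- The relation of `x` to two other points determines, and is determined by, their relation
to `x`. -/
def IsReversible {α K : Type*} (c : α → α → K) : Prop :=
  ∀ s x y, s ≠ x → s ≠ y → (c s x = c s y ↔ c x s = c y s)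

section Modules

variable {α K : Type*} [DecidableEq α] {c : α → α → K} {X S M : Finset α}

theorem IsModule.inter (hM : IsModule c S M) (hX : X ⊆ S) : IsModule c X (M ∩ X) := by
  intro s hs hsM x hx y hy
  simp only [Finset.mem_inter] at *
  exact hM s (hX hs) (by tauto) x hx.1 y hy.1

theorem IsPrimeOn.inter_cases (hX : IsPrimeOn c X) (hM : IsModule c S M) (hXS : X ⊆ S) :
    (∀ z ∈ X, z ∉ M) ∨ (∃ z ∈ X, ∀ w ∈ X, w ∈ M ↔ w = z) ∨ ∀ z ∈ X, z ∈ M := by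
  rcases hX (M ∩ X) Finset.inter_subset_right (hM.inter hXS) with h | h
  · by_cases hz : ∃ z ∈ X, z ∈ M
    · obtain ⟨z, hzX, hzM⟩ := hz
      refine Or.inr (Or.inl ⟨z, hzX, fun w hw => ⟨fun hwM => ?_, fun e => e ▸ hzM⟩⟩)
      exact h w (by simp [*]) z (by simp [*])
    · push Not at hz
      exact Or.inl hz
  · exact Or.inr (Or.inr fun z hz => (Finset.mem_inter.1 (h.symm ▸ hz)).1)

/-- No element of a prime substructure with at least three elements is related uniformly to all
the others. -/
theorem IsPrimeOn.exists_ne (hX : IsPrimeOn c X) (h3 : 3 ≤ X.card) {z : α} (hz : z ∈ X) :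
    ∃ x ∈ X, ∃ y ∈ X, x ≠ z ∧ y ≠ z ∧ c z x ≠ c z y := by
  by_contra! h
  have hcard := Finset.card_erase_of_mem hz
  rcases hX (X.erase z) (Finset.erase_subset _ _) (by
    intro s hs hsz x hx y hy
    have : s = z := by by_contra hne; exact hsz (Finset.mem_erase.2 ⟨hne, hs⟩)
    subst this
    simp only [Finset.mem_erase] at hx hy
    exact h x hx.2 y hy.2 hx.1 hy.1) with h | h
  · have := Finset.card_le_one.2 h
    omega
  · rw [h] at hcard
    omega

/-- Distinct elements of a prime substructure with at least three elements are distinguished by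
a third one. -/
theorem IsPrimeOn.exists_distinguishing (hX : IsPrimeOn c X) (h3 : 3 ≤ X.card) {u z : α}
    (hu : u ∈ X) (hz : z ∈ X) (huz : u ≠ z) : ∃ s ∈ X, s ≠ u ∧ s ≠ z ∧ c s u ≠ c s z := by
  by_contra! h
  rcases hX {u, z} (by grind) (by
    intro s hs hsM
    simp only [Finset.mem_insert, Finset.mem_singleton, not_or] at hsM
    have := h s hs hsM.1 hsM.2
    grind) with h | h
  · exact huz (h u (by simp) z (by simp))
  · have := Finset.card_le_two (a := u) (b := z)
    rw [h] at this
    omega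

/-- If `x` does not distinguish elements of `X` but `y` does, and `X ∪ {x, y}` is not prime, then
`x` does not distinguish `y` from `X`. -/
theorem eq_of_not_isPrimeOn_of_const (hc : IsReversible c) (hX : IsPrimeOn c X)
    (h3 : 3 ≤ X.card) {x y : α} (hx : x ∉ X) (hy : y ∉ X)
    (hxX : ∀ a ∈ X, ∀ b ∈ X, c x a = c x b) (hyX : ¬ ∀ a ∈ X, ∀ b ∈ X, c y a = c y b)
    (hnot : ¬ IsPrimeOn c (insert x (insert y X))) : ∀ a ∈ X, c x a = c x y := by
  unfold IsPrimeOn at hnot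
  push Not at hnot
  obtain ⟨M, hMS, hM, ⟨p, hp, q, hq, hpq⟩, hne⟩ := hnot
  have hsub : X ⊆ insert x (insert y X) := by grind
  rcases hX.inter_cases hM hsub with h | ⟨z, hz, h⟩ | h
  · have hxM : x ∈ M := by grind
    have hyM : y ∈ M := by grind
    refine absurd (fun a ha b hb => ?_) hyX
    have h1 := (hc a x y (by grind) (by grind)).1 (hM a (by grind) (h a ha) x hxM y hyM)
    have h2 := (hc b x y (by grind) (by grind)).1 (hM b (by grind) (h b hb) x hxM y hyM)
    rw [← h1, ← h2, hxX a ha b hb]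
  · by_cases hxM : x ∈ M
    · obtain ⟨a, ha, b, hb, haz, hbz, hab⟩ := hX.exists_ne h3 hz
      have h1 := (hc a x z (by grind) (by grind)).1 (hM a (by grind) (by grind) x hxM z (by grind))
      have h2 := (hc b x z (by grind) (by grind)).1 (hM b (by grind) (by grind) x hxM z (by grind))
      exact absurd (by rw [← h1, ← h2, hxX a ha b hb]) hab
    · intro a ha
      rw [hxX a ha z hz]
      exact hM x (by grind) hxM z (by grind) y (by grind)
  · by_cases hyM : y ∈ M
    · have hxM : x ∉ M := fun hxM => hne (hMS.antisymm (by grind))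
      exact fun a ha => hM x (by grind) hxM a (h a ha) y hyM
    · exact absurd (fun a ha b hb => hM y (by grind) hyM a (h a ha) b (h b hb)) hyX

/-- If `x` is a twin of `u ∈ X` over `X` but `y` is not, and `X ∪ {x, y}` is not prime, then `y`
does not distinguish `u` from `x`. -/
theorem eq_of_not_isPrimeOn_of_twin (hc : IsReversible c) (hX : IsPrimeOn c X)
    (h3 : 3 ≤ X.card) {u x y : α} (hu : u ∈ X) (hx : x ∉ X) (hy : y ∉ X) (hxy : x ≠ y)
    (hxu : ∀ s ∈ X, s ≠ u → c s x = c s u) (hyu : ¬ ∀ s ∈ X, s ≠ u → c s y = c s u)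
    (hnot : ¬ IsPrimeOn c (insert x (insert y X))) : c y x = c y u := by
  have hunique : ∀ z ∈ X, (∀ s ∈ X, s ≠ z → c s x = c s z) → z = u := by
    intro z hz hxz
    by_contra hzu
    obtain ⟨s, hs, hsz, hsu, hne⟩ := hX.exists_distinguishing h3 hz hu hzu
    exact hne (by rw [← hxz s hs hsz, hxu s hs hsu])
  have hconst : ¬ ∀ a ∈ X, ∀ b ∈ X, c x a = c x b := by
    intro h
    obtain ⟨a, ha, b, hb, hau, hbu, hab⟩ := hX.exists_ne h3 hu
    have h1 := (hc a x u (by grind) (by grind)).1 (hxu a ha hau)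
    have h2 := (hc b x u (by grind) (by grind)).1 (hxu b hb hbu)
    exact hab (by rw [← h1, ← h2, h a ha b hb])
  unfold IsPrimeOn at hnot
  push Not at hnot
  obtain ⟨M, hMS, hM, ⟨p, hp, q, hq, hpq⟩, hne⟩ := hnot
  have hsub : X ⊆ insert x (insert y X) := by grind
  rcases hX.inter_cases hM hsub with h | ⟨z, hz, h⟩ | h
  · have hxM : x ∈ M := by grind
    have hyM : y ∈ M := by grind
    refine absurd (fun s hs hsu => ?_) hyu
    rw [← hM s (by grind) (h s hs) x hxM y hyM, hxu s hs hsu]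
  · have hzM : z ∈ M := by grind
    by_cases hxM : x ∈ M
    · have hzu := hunique z hz fun s hs hsz => hM s (by grind) (by grind) x hxM z hzM
      subst hzu
      by_cases hyM : y ∈ M
      · exact absurd (fun s hs hsz => hM s (by grind) (by grind) y hyM z hzM) hyu
      · exact hM y (by grind) hyM x hxM z hzM
    · have hyM : y ∈ M := by clear hunique hconst hxu hyu hM; grind
      by_cases hzu : z = u
      · subst hzu
        exact absurd (fun s hs hsz => hM s (by grind) (by grind) y hyM z hzM) hyu
      · have h1 := hM u (by grind) (by grind) y hyM z hzM
        have h2 := hM x (by grind) hxM y hyM z hzM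
        have h3 := (hc z x u (by grind) hzu).1 (hxu z hz hzu)
        exact (hc y x u hxy.symm (by grind)).2 (by rw [h2, h3, h1])
  · by_cases hxM : x ∈ M
    · have hyM : y ∉ M := fun hyM => hne (hMS.antisymm (by grind))
      exact hM y (by grind) hyM x hxM u (h u hu)
    · exact absurd (fun a ha b hb => hM x (by grind) hxM a (h a ha) b (h b hb)) hconst

/-- If `x` and `y` both extend `X` to a prime substructure but `X ∪ {x, y}` is not prime, then `x`
and `y` are twins over `X`. -/
theorem eq_of_not_isPrimeOn_of_isPrimeOn_insert (h2 : 2 ≤ X.card) {x y : α}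
    (hxX : IsPrimeOn c (insert x X)) (hyX : IsPrimeOn c (insert y X))
    (hnot : ¬ IsPrimeOn c (insert x (insert y X))) : ∀ s ∈ X, c s x = c s y := by
  obtain ⟨a, ha, b, hb, hab⟩ := Finset.one_lt_card.1 h2
  unfold IsPrimeOn at hnot
  push Not at hnot
  obtain ⟨M, hMS, hM, ⟨p, hp, q, hq, hpq⟩, hne⟩ := hnot
  have hx' := hxX.inter_cases hM (by grind)
  have hy' := hyX.inter_cases hM (by grind)
  have hfull : ¬ ∀ z ∈ X, z ∈ M := by
    intro h
    have hxM : x ∈ M := by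
      rcases hx' with h' | ⟨z, hz, h'⟩ | h' <;> grind
    have hyM : y ∈ M := by
      rcases hy' with h' | ⟨z, hz, h'⟩ | h' <;> grind
    exact hne (hMS.antisymm (by grind))
  have hxM : x ∈ M := by
    rcases hx' with h' | ⟨z, hz, h'⟩ | h' <;> rcases hy' with h'' | ⟨w, hw, h''⟩ | h'' <;> grind
  have hyM : y ∈ M := by
    rcases hx' with h' | ⟨z, hz, h'⟩ | h' <;> rcases hy' with h'' | ⟨w, hw, h''⟩ | h'' <;> grind
  have hdisj : ∀ s ∈ X, s ∉ M := by
    rcases hx' with h' | ⟨z, hz, h'⟩ | h' <;> rcases hy' with h'' | ⟨w, hw, h''⟩ | h'' <;> grind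
  exact fun s hs => hM s (by grind) (hdisj s hs) x hxM y hyM

/-- An element which is neither uniform on `X` nor a twin of an element of `X` extends `X` to a
prime substructure. -/
theorem IsPrimeOn.insert (hX : IsPrimeOn c X) {x : α}
    (hconst : ¬ ∀ a ∈ X, ∀ b ∈ X, c x a = c x b)
    (htwin : ∀ u ∈ X, ¬ ∀ s ∈ X, s ≠ u → c s x = c s u) : IsPrimeOn c (insert x X) := by
  intro M hMS hM
  by_contra! hcon
  obtain ⟨⟨p, hp, q, hq, hpq⟩, hne⟩ := hcon
  rcases hX.inter_cases hM (Finset.subset_insert _ _) with h | ⟨z, hz, h⟩ | h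
  · grind
  · have hxM : x ∈ M := by grind
    exact htwin z hz fun s hs hsz => hM s (by grind) (by grind) x hxM z (by grind)
  · have hxM : x ∉ M := fun hxM => hne (hMS.antisymm (by grind))
    exact hconst fun a ha b hb => hM x (by grind) hxM a (h a ha) b (h b hb)

/-- A prime substructure `X` of a prime structure, with at least three elements and missing at
least two, extends to a prime substructure by adding two elements. -/
theorem IsPrimeOn.exists_insert_insert [Fintype α] (hc : IsReversible c)
    (hV : IsPrimeOn c (Finset.univ : Finset α)) (hX : IsPrimeOn c X) (h3 : 3 ≤ X.card)
    (hcard : X.card + 2 ≤ Fintype.card α) :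
    ∃ x y, x ∉ X ∧ y ∉ X ∧ x ≠ y ∧ IsPrimeOn c (Insert.insert x (Insert.insert y X)) := by
  by_contra! hcon
  obtain ⟨a, ha, b, hb, hab⟩ := Finset.one_lt_card.1 (by omega : 1 < X.card)
  have htwin : ∀ x ∉ X, ∀ u ∈ X, ¬ ∀ s ∈ X, s ≠ u → c s x = c s u := by
    intro x hx u hu hxu
    classical
    rcases hV {z | z = u ∨ z ∉ X ∧ ∀ s ∈ X, s ≠ u → c s z = c s u} (Finset.subset_univ _) (by
      intro y _ hyM
      suffices h : ∀ z, (z = u ∨ z ∉ X ∧ ∀ s ∈ X, s ≠ u → c s z = c s u) → c y z = c y u by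
        intro p hp q hq
        rw [h p (by simpa using hp), h q (by simpa using hq)]
      rintro z (rfl | ⟨hz, hzu⟩)
      · rfl
      simp only [Finset.mem_filter, Finset.mem_univ, true_and, not_or] at hyM
      by_cases hy : y ∈ X
      · exact hzu y hy hyM.1
      · have hyu : ¬ ∀ s ∈ X, s ≠ u → c s y = c s u := fun h => hyM.2 ⟨hy, h⟩
        have hzy : z ≠ y := by rintro rfl; exact hyu hzu
        exact eq_of_not_isPrimeOn_of_twin hc hX h3 hu hz hy hzy hzu hyu (hcon z y hz hy hzy))
      with h | h
    · have := h x (by simp [hx]; exact Or.inr hxu) u (by simp)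
      exact hx (this ▸ hu)
    · have h1 : ∀ z ∈ X, z = u := by
        intro z hz
        have := h.symm ▸ Finset.mem_univ z
        simpa [hz] using this
      exact hab ((h1 a ha).trans (h1 b hb).symm)
  have hconst : ∀ x ∉ X, ¬ ∀ a ∈ X, ∀ b ∈ X, c x a = c x b := by
    intro x hx hxX
    classical
    rcases hV {z | z ∈ X ∨ ¬ ∀ a ∈ X, ∀ b ∈ X, c z a = c z b} (Finset.subset_univ _) (by
      intro y _ hyM
      simp only [Finset.mem_filter, Finset.mem_univ, true_and, not_or, not_not] at hyM
      suffices h : ∀ z, (z ∈ X ∨ ¬ ∀ a ∈ X, ∀ b ∈ X, c z a = c z b) → c y z = c y a by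
        intro p hp q hq
        rw [h p (by simpa using hp), h q (by simpa using hq)]
      intro z hz
      by_cases hzX : z ∈ X
      · exact hyM.2 z hzX a ha
      · have hz' := hz.resolve_left hzX
        have hyz : y ≠ z := by rintro rfl; exact hz' hyM.2
        exact (eq_of_not_isPrimeOn_of_const hc hX h3 hyM.1 hzX hyM.2 hz'
          (hcon y z hyM.1 hzX hyz) a ha).symm) with h | h
    · exact hab (h a (by simp [ha]) b (by simp [hb]))
    · have := h.symm ▸ Finset.mem_univ x
      simp only [Finset.mem_filter, Finset.mem_univ, true_and] at this
      exact this.elim hx fun h => h hxX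
  have hprime : ∀ x ∉ X, IsPrimeOn c (Insert.insert x X) := fun x hx =>
    hX.insert (hconst x hx) (htwin x hx)
  have hcompl := Finset.card_compl X
  rcases hV Xᶜ (Finset.subset_univ _) (by
    intro s _ hs x hx y hy
    simp only [Finset.mem_compl, not_not] at hs hx hy
    by_cases hxy : x = y
    · rw [hxy]
    · exact eq_of_not_isPrimeOn_of_isPrimeOn_insert (by omega) (hprime x hx) (hprime y hy)
        (hcon x y hx hy hxy) s hs) with h | h
  · have := Finset.card_le_one.2 h
    omega
  · have := h.symm ▸ Finset.mem_univ a
    exact Finset.mem_compl.1 this ha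

/-- A prime structure with a proper prime substructure on at least three elements has a prime
substructure missing exactly one or two elements. -/
theorem IsPrimeOn.exists_card_add_two [Fintype α] (hc : IsReversible c)
    (hV : IsPrimeOn c (Finset.univ : Finset α)) (hX : IsPrimeOn c X) (h3 : 3 ≤ X.card)
    (hcard : X.card < Fintype.card α) :
    ∃ Y : Finset α, IsPrimeOn c Y ∧ Fintype.card α ≤ Y.card + 2 ∧ Y.card < Fintype.card α := by
  classical
  obtain ⟨Y, hY, hmax⟩ := Finset.exists_max_image
    {Y : Finset α | IsPrimeOn c Y ∧ 3 ≤ Y.card ∧ Y.card < Fintype.card α} Finset.card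
    ⟨X, by simp [hX, h3, hcard]⟩
  simp only [Finset.mem_filter, Finset.mem_univ, true_and] at hY hmax
  refine ⟨Y, hY.1, ?_, hY.2.2⟩
  by_contra! hlt
  obtain ⟨x, y, hx, hy, hxy, hp⟩ := hV.exists_insert_insert hc hY.1 hY.2.1 (by omega)
  have hc2 : (Insert.insert x (Insert.insert y Y)).card = Y.card + 2 := by
    rw [Finset.card_insert_of_notMem (by simp [hxy, hx]), Finset.card_insert_of_notMem hy]
  have := hmax _ ⟨hp, by omega, by omega⟩
  omega

end Modules

section Cographs

variable {α : Type*} [DecidableEq α] {e : α → α → Prop}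

/-- `b`, `a`, `v`, `w` induce a path in the graph `e`, in this order. -/
def IsInducedPath (e : α → α → Prop) (b a v w : α) : Prop :=
  e b a ∧ e a v ∧ e v w ∧ ¬ e b v ∧ ¬ e b w ∧ ¬ e a w

/-- `S` is split into two nonempty parts with no edge of `e` between them. -/
def IsDisconnectedOn (e : α → α → Prop) (S : Finset α) : Prop :=
  ∃ A B : Finset α, A.Nonempty ∧ B.Nonempty ∧ Disjoint A B ∧ A ∪ B = S ∧
    ∀ a ∈ A, ∀ b ∈ B, ¬ e a b

/-- Adding a vertex to a disconnected graph without induced path on four vertices leaves a graph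
which is disconnected or whose complement is. -/
theorem IsDisconnectedOn.insert (he : ∀ x y, e x y → e y x)
    (hP : ∀ b a v w, b ≠ v → b ≠ w → a ≠ w → ¬ IsInducedPath e b a v w) {S : Finset α} {v : α}
    (hv : v ∉ S) (hS : IsDisconnectedOn e S) :
    IsDisconnectedOn e (insert v S) ∨ IsDisconnectedOn (fun x y => ¬ e x y) (insert v S) := by
  classical
  obtain ⟨A, B, hA, hB, hAB, rfl, hno⟩ := hS
  have key : ∀ A B : Finset α, A.Nonempty → B.Nonempty → Disjoint A B → v ∉ A → v ∉ B →
      (∀ a ∈ A, ∀ b ∈ B, ¬ e a b) → (∃ a ∈ A, ¬ e v a) →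
      IsDisconnectedOn e (Insert.insert v (A ∪ B)) := by
    intro A B hA hB hAB hvA hvB hno ⟨b, hb, hvb⟩
    rw [Finset.disjoint_left] at hAB
    by_cases hw : ∃ w ∈ B, e v w
    · obtain ⟨w, hw, hvw⟩ := hw
      refine ⟨A.filter fun a => ¬ e v a, Insert.insert v (A.filter (fun a => e v a) ∪ B),
        ⟨b, by simp [*]⟩, ⟨v, by simp⟩, ?_, ?_, ?_⟩
      · rw [Finset.disjoint_left]; grind
      · ext z; by_cases h : e v z <;> grind
      · intro x hx y hy hxy
        simp only [Finset.mem_filter, Finset.mem_insert, Finset.mem_union] at hx hy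
        rcases hy with rfl | hy | hy
        · exact hx.2 (he _ _ hxy)
        · refine hP x y v w ?_ ?_ ?_ ⟨hxy, he _ _ hy.2, hvw, fun h => hx.2 (he _ _ h),
            hno x hx.1 w hw, hno y hy.1 w hw⟩ <;> grind
        · exact hno x hx.1 y hy hxy
    · push Not at hw
      refine ⟨Insert.insert v A, B, ⟨v, by simp⟩, hB, ?_, by grind, by grind⟩
      rw [Finset.disjoint_left]; grind
  by_cases h1 : ∃ a ∈ A, ¬ e v a
  · exact Or.inl (key A B hA hB hAB (by grind) (by grind) hno h1)
  by_cases h2 : ∃ a ∈ B, ¬ e v a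
  · rw [Finset.union_comm]
    exact Or.inl (key B A hB hA hAB.symm (by grind) (by grind)
      (fun b hb a ha h => hno a ha b hb (he _ _ h)) h2)
  push Not at h1 h2
  refine Or.inr ⟨{v}, A ∪ B, by simp, hA.mono Finset.subset_union_left, by simpa using hv,
    by grind, by grind⟩

/-- A graph with at least two vertices and no induced path on four vertices is disconnected or has
a disconnected complement. -/
theorem isDisconnectedOn_or_compl (he : ∀ x y, e x y → e y x)
    (hP : ∀ b a v w, b ≠ v → b ≠ w → a ≠ w → ¬ IsInducedPath e b a v w) (S : Finset α)
    (hS : 2 ≤ S.card) : IsDisconnectedOn e S ∨ IsDisconnectedOn (fun x y => ¬ e x y) S := by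
  induction S using Finset.induction_on with
  | empty => simp at hS
  | insert v S hv ih =>
    by_cases h2 : 2 ≤ S.card
    · rcases ih h2 with h | h
      · exact h.insert he hP hv
      · have := h.insert (fun x y hxy hyx => hxy (he _ _ hyx)) (fun b a v w h1 h2 h3 hp => by
          obtain ⟨p1, p2, p3, p4, p5, p6⟩ := hp
          simp only [not_not] at p4 p5 p6
          exact hP v b w a (by grind) (by grind) (by grind)
            ⟨he _ _ p4, p5, he _ _ p6, p3, fun h => p2 (he _ _ h), fun h => p1 h⟩) hv
        simpa only [not_not, or_comm] using this
    · rw [Finset.card_insert_of_notMem hv] at hS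
      obtain ⟨a, rfl⟩ := Finset.card_eq_one.1 (by omega : S.card = 1)
      have hva : v ≠ a := by simpa using hv
      by_cases h : e v a
      · exact Or.inr ⟨{v}, {a}, by simp, by simp, by simpa using hva, by grind, by simpa using h⟩
      · exact Or.inl ⟨{v}, {a}, by simp, by simp, by simpa using hva, by grind, by simpa using h⟩

end Cographs

theorem isPrimeOn_of_card_eq_two {α K : Type*} {c : α → α → K} {S : Finset α}
    (hS : S.card = 2) : IsPrimeOn c S := by
  intro M hMS _
  by_cases h : M.card ≤ 1
  · exact Or.inl (Finset.card_le_one.1 h)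
  · exact Or.inr (Finset.eq_of_subset_of_card_le hMS (by omega))

/-- A structure refining a reflexive graph is prime on every induced path on four vertices. -/
theorem IsInducedPath.isPrimeOn {α K : Type*} [DecidableEq α] {c : α → α → K} {e : α → α → Prop}
    (hrefl : ∀ x, e x x) (he : ∀ x y, e x y → e y x)
    (hce : ∀ s x y, c s x = c s y → (e s x ↔ e s y)) {b a v w : α}
    (h : IsInducedPath e b a v w) :
    IsPrimeOn c {b, a, v, w} ∧ ({b, a, v, w} : Finset α).card = 4 := by
  obtain ⟨hba, hav, hvw, hbv, hbw, haw⟩ := h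
  have hab := he _ _ hba
  have hva := he _ _ hav
  have hwv := he _ _ hvw
  have hvb : ¬ e v b := fun h => hbv (he _ _ h)
  have hwb : ¬ e w b := fun h => hbw (he _ _ h)
  have hwa : ¬ e w a := fun h => haw (he _ _ h)
  have n1 : b ≠ a := by rintro rfl; exact hbv hav
  have n2 : b ≠ v := by rintro rfl; exact hbv (hrefl _)
  have n3 : b ≠ w := by rintro rfl; exact hbw (hrefl _)
  have n4 : a ≠ v := by rintro rfl; exact hbv hba
  have n5 : a ≠ w := by rintro rfl; exact haw (hrefl _)
  have n6 : v ≠ w := by rintro rfl; exact haw hav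
  refine ⟨fun M hMS hM => ?_, by simp [*]⟩
  have hm : ∀ s ∈ ({b, a, v, w} : Finset α), s ∉ M → ∀ x ∈ M, ∀ y ∈ M, (e s x ↔ e s y) :=
    fun s hs hsM x hx y hy => hce s x y (hM s hs hsM x hx y hy)
  have hb : b ∉ M → a ∈ M → v ∉ M ∧ w ∉ M := fun hs hx =>
    ⟨fun hy => hbv ((hm b (by simp) hs a hx v hy).1 hba),
      fun hy => hbw ((hm b (by simp) hs a hx w hy).1 hba)⟩
  have ha : a ∉ M → w ∈ M → b ∉ M ∧ v ∉ M := fun hs hx =>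
    ⟨fun hy => haw ((hm a (by simp) hs w hx b hy).2 hab),
      fun hy => haw ((hm a (by simp) hs w hx v hy).2 hav)⟩
  have hv : v ∉ M → b ∈ M → a ∉ M ∧ w ∉ M := fun hs hx =>
    ⟨fun hy => hvb ((hm v (by simp) hs b hx a hy).2 hva),
      fun hy => hvb ((hm v (by simp) hs b hx w hy).2 hvw)⟩
  have hw : w ∉ M → v ∈ M → b ∉ M ∧ a ∉ M := fun hs hx =>
    ⟨fun hy => hwb ((hm w (by simp) hs v hx b hy).1 hwv),
      fun hy => hwa ((hm w (by simp) hs v hx a hy).1 hwv)⟩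
  have hmem : ∀ x ∈ M, x = b ∨ x = a ∨ x = v ∨ x = w := fun x hx => by simpa using hMS hx
  by_contra! hcon
  obtain ⟨⟨p, hp, q, hq, hpq⟩, hne⟩ := hcon
  have hall : b ∈ M ∧ a ∈ M ∧ v ∈ M ∧ w ∈ M := by
    have key : ∀ B A V W : Prop, (¬B → A → ¬V ∧ ¬W) → (¬A → W → ¬B ∧ ¬V) → (¬V → B → ¬A ∧ ¬W) →
        (¬W → V → ¬B ∧ ¬A) → (B ∧ A ∨ B ∧ V ∨ B ∧ W ∨ A ∧ V ∨ A ∧ W ∨ V ∧ W) →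
        B ∧ A ∧ V ∧ W := by
      intro B A V W
      by_cases B <;> by_cases A <;> by_cases V <;> by_cases W <;> simp [*]
    refine key _ _ _ _ hb ha hv hw ?_
    rcases hmem p hp with rfl | rfl | rfl | rfl <;> rcases hmem q hq with rfl | rfl | rfl | rfl <;>
      first | exact absurd rfl hpq | simp only [hp, hq, true_and, and_self, true_or, or_true]
  refine hne (hMS.antisymm fun x hx => ?_)
  simp only [Finset.mem_insert, Finset.mem_singleton] at hx
  obtain ⟨h1, h2, h3, h4⟩ := hall
  rcases hx with rfl | rfl | rfl | rfl <;> assumption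

/-- The binary structure of a permutation, recording the relative order of two indices and of
their values. -/
def permStructure {n : ℕ} (π : Perm n) (s t : Fin n) : Prop × Prop :=
  (s < t, π s < π t)

section Permutations

variable {n : ℕ} {π : Perm n}

theorem permStructure_eq_iff {s x y : Fin n} :
    permStructure π s x = permStructure π s y ↔
      (s < x ↔ s < y) ∧ (π s < π x ↔ π s < π y) := by
  simp [permStructure]

theorem isReversible_permStructure : IsReversible (permStructure π) := by
  intro s x y hx hy
  have hx' : π s ≠ π x := π.injective.ne hx
  have hy' : π s ≠ π y := π.injective.ne hy
  simp only [permStructure, Prod.mk.injEq, eq_iff_iff]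
  omega

theorem IsSimple.isPrimeOn (hπ : IsSimple π) : IsPrimeOn (permStructure π) Finset.univ := by
  intro M _ hM
  have hM' : ∀ s, s ∉ M → ∀ x ∈ M, ∀ y ∈ M, (s < x ↔ s < y) ∧ (π s < π x ↔ π s < π y) :=
    fun s hs x hx y hy => permStructure_eq_iff.1 (hM s (Finset.mem_univ _) hs x hx y hy)
  suffices hI : IsPermInterval π M by
    rcases hπ M hI with h | h
    · exact Or.inl (Finset.card_le_one.1 h)
    · exact Or.inr ((Finset.card_eq_iff_eq_univ M).1 (by simpa using h))
  constructor
  · intro i j l hi hl hij hjl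
    by_contra hj
    have hne : j ≠ l := by rintro rfl; exact hj hl
    have := (hM' j hj i hi l hl).1
    omega
  · intro i j l hi hl hij hjl
    obtain ⟨i, hiM, rfl⟩ := Finset.mem_image.1 hi
    obtain ⟨l, hlM, rfl⟩ := Finset.mem_image.1 hl
    obtain ⟨j, rfl⟩ := π.surjective j
    by_contra hj
    have hjM : j ∉ M := fun h => hj (Finset.mem_image_of_mem _ h)
    have hne : π j ≠ π l := by
      intro h
      exact hjM (π.injective h ▸ hlM)
    have := (hM' j hjM i hiM l hlM).2
    omega

/-- A prime substructure of a permutation gives a simple pattern. -/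
theorem IsPrimeOn.exists_isSimple_contains {X : Finset (Fin n)}
    (hX : IsPrimeOn (permStructure π) X) :
    ∃ σ : Perm X.card, IsSimple σ ∧ Contains σ π := by
  let f := X.orderEmbOfFin rfl
  have hY : (X.image π).card = X.card := Finset.card_image_of_injective _ π.injective
  let g := (X.image π).orderIsoOfFin hY
  let σ₀ : Fin X.card → Fin X.card := fun i =>
    g.symm ⟨π (f i), Finset.mem_image_of_mem _ (X.orderEmbOfFin_mem rfl i)⟩
  have hlt : ∀ s t, σ₀ s < σ₀ t ↔ π (f s) < π (f t) := by
    intro s t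
    simp only [σ₀, g.symm.lt_iff_lt, Subtype.mk_lt_mk]
  have hinj : Function.Injective σ₀ := by
    intro s t hst
    have := congrArg Subtype.val (g.symm.injective hst)
    exact f.injective (π.injective this)
  let σ : Perm X.card := Equiv.ofBijective σ₀ (Finite.injective_iff_bijective.1 hinj)
  have hσ : ∀ s t, π (f s) < π (f t) ↔ σ s < σ t := fun s t => (hlt s t).symm
  refine ⟨σ, ?_, f, f.strictMono, hσ⟩
  intro I ⟨hI, hσI⟩
  have hcard : (I.map f.toEmbedding).card = I.card := Finset.card_map _
  rcases hX (I.map f.toEmbedding) (by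
    intro x hx
    obtain ⟨i, _, rfl⟩ := Finset.mem_map.1 hx
    exact X.orderEmbOfFin_mem rfl i) (by
    intro s hs hsI x hx y hy
    obtain ⟨i, hi, rfl⟩ := Finset.mem_map.1 hx
    obtain ⟨l, hl, rfl⟩ := Finset.mem_map.1 hy
    obtain ⟨j, rfl⟩ : s ∈ Set.range f := by
      rw [Finset.range_orderEmbOfFin]; exact hs
    have hj : j ∉ I := fun h => hsI (Finset.mem_map_of_mem _ h)
    have hσj : σ j ∉ I.image σ := by
      intro h
      obtain ⟨j', hj', e⟩ := Finset.mem_image.1 h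
      exact hj (σ.injective e ▸ hj')
    have hσi := Finset.mem_image_of_mem σ hi
    have hσl := Finset.mem_image_of_mem σ hl
    refine permStructure_eq_iff.2 ⟨?_, ?_⟩
    · change f j < f i ↔ f j < f l
      rw [f.lt_iff_lt, f.lt_iff_lt]
      constructor
      · exact fun h => lt_of_not_ge fun h' => hj (hI hl hi h' h.le)
      · exact fun h => lt_of_not_ge fun h' => hj (hI hi hl h' h.le)
    · change π (f j) < π (f i) ↔ π (f j) < π (f l)
      rw [hσ, hσ]
      constructor
      · exact fun h => lt_of_not_ge fun h' => hσj (hσI hσl hσi h' h.le)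
      · exact fun h => lt_of_not_ge fun h' => hσj (hσI hσi hσl h' h.le)) with h | h
  · exact Or.inl (hcard ▸ Finset.card_le_one.2 h)
  · exact Or.inr (by rw [← hcard, h])

/-- If `R` is a strict total order agreeing with `<` between two complementary nonempty sets, then
some proper nonempty initial segment lies below its complement for both orders. -/
theorem exists_cut {α : Type*} [LinearOrder α] [Fintype α] {R : α → α → Prop}
    (htrans : ∀ x y z, R x y → R y z → R x z) (htot : ∀ x y, x ≠ y → (R x y ↔ ¬ R y x))
    {A B : Finset α} (hA : A.Nonempty) (hB : B.Nonempty) (hAB : Disjoint A B)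
    (hunion : A ∪ B = Finset.univ) (h : ∀ a ∈ A, ∀ b ∈ B, (a < b ↔ R a b)) :
    ∃ D : Finset α, D.Nonempty ∧ Dᶜ.Nonempty ∧ ∀ d ∈ D, ∀ x ∉ D, d < x ∧ R d x := by
  have key : ∀ A B : Finset α, ∀ (hA : A.Nonempty) (hB : B.Nonempty), Disjoint A B →
      A ∪ B = Finset.univ → (∀ a ∈ A, ∀ b ∈ B, (a < b ↔ R a b)) → A.min' hA < B.min' hB →
      ∃ D : Finset α, D.Nonempty ∧ Dᶜ.Nonempty ∧ ∀ d ∈ D, ∀ x ∉ D, d < x ∧ R d x := by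
    intro A B hA hB hAB hunion h hlt
    have hmem : ∀ x, x ∈ A ∨ x ∈ B := fun x => Finset.mem_union.1 (hunion ▸ Finset.mem_univ x)
    have hb := B.min'_mem hB
    have hmin : ∀ x ∈ B, B.min' hB ≤ x := fun x hx => B.min'_le x hx
    set b := B.min' hB
    refine ⟨Finset.univ.filter fun x => x < b, ⟨A.min' hA, by simpa using hlt⟩, ⟨b, by simp⟩,
      fun d hd x hx => ?_⟩
    simp only [Finset.mem_filter, Finset.mem_univ, true_and, not_lt] at hd hx
    have hdA : d ∈ A := (hmem d).resolve_right fun hdB => (hmin d hdB).not_gt hd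
    have hdx := hd.trans_le hx
    refine ⟨hdx, ?_⟩
    rcases hmem x with hxA | hxB
    · have hxb : x ≠ b := by
        rintro rfl
        exact Finset.disjoint_left.1 hAB hxA hb
      have h1 : ¬ R x b := fun hR => ((h x hxA b hb).2 hR).not_ge hx
      exact htrans d b x ((h d hdA b hb).1 hd) ((htot b x hxb.symm).2 h1)
    · exact (h d hdA x hxB).1 hdx
  have hne : ∀ a ∈ A, ∀ b ∈ B, a ≠ b := fun a ha b hb hab =>
    Finset.disjoint_left.1 hAB ha (hab ▸ hb)
  rcases lt_or_gt_of_ne (hne _ (A.min'_mem hA) _ (B.min'_mem hB)) with hlt | hlt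
  · exact key A B hA hB hAB hunion h hlt
  · refine key B A hB hA hAB.symm (by rw [Finset.union_comm, hunion]) (fun b hb a ha => ?_) hlt
    have hab := hne a ha b hb
    rw [htot b a hab.symm, ← h a ha b hb, not_lt]
    exact ⟨le_of_lt, fun hle => lt_of_le_of_ne hle hab.symm⟩

/-- A permutation of length at least three that is a direct or skew sum is not prime. -/
theorem not_isPrimeOn_of_cut (hn : 3 ≤ n) {D : Finset (Fin n)} (hD : D.Nonempty)
    (hD' : Dᶜ.Nonempty) (hlt : ∀ d ∈ D, ∀ x ∉ D, d < x)
    (hπ : (∀ d ∈ D, ∀ x ∉ D, π d < π x) ∨ (∀ d ∈ D, ∀ x ∉ D, π x < π d)) :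
    ¬ IsPrimeOn (permStructure π) Finset.univ := by
  intro hprime
  have h1 := hprime D (Finset.subset_univ _) fun s _ hs x hx y hy => by
    refine permStructure_eq_iff.2 ⟨iff_of_false (hlt x hx s hs).not_gt (hlt y hy s hs).not_gt, ?_⟩
    rcases hπ with h | h
    · exact iff_of_false (h x hx s hs).not_gt (h y hy s hs).not_gt
    · exact iff_of_true (h x hx s hs) (h y hy s hs)
  have h2 := hprime Dᶜ (Finset.subset_univ _) fun s _ hs x hx y hy => by
    simp only [Finset.mem_compl, not_not] at hs hx hy
    refine permStructure_eq_iff.2 ⟨iff_of_true (hlt s hs x hx) (hlt s hs y hy), ?_⟩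
    rcases hπ with h | h
    · exact iff_of_true (h s hs x hx) (h s hs y hy)
    · exact iff_of_false (h s hs x hx).not_gt (h s hs y hy).not_gt
  have hcard := Finset.card_add_card_compl D
  rw [Fintype.card_fin] at hcard
  rw [← Finset.card_le_one] at h1 h2
  have h1' := h1.resolve_right fun h => by simp [h] at hD'
  have h2' := h2.resolve_right fun h => by simp_all
  omega

/-- A prime permutation of length at least four contains a prime substructure on four points. -/
theorem IsPrimeOn.exists_card_eq_four (hn : 3 ≤ n)
    (hπ : IsPrimeOn (permStructure π) Finset.univ) :
    ∃ X : Finset (Fin n), IsPrimeOn (permStructure π) X ∧ X.card = 4 := by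
  by_contra! hcon
  have he : ∀ x y : Fin n, (x < y ↔ π x < π y) → (y < x ↔ π y < π x) := by
    intro x y h
    by_cases hxy : x = y
    · simp [hxy]
    · have := π.injective.ne hxy
      omega
  rcases isDisconnectedOn_or_compl (e := fun x y : Fin n => (x < y ↔ π x < π y)) he
    (fun b a v w _ _ _ hp => by
      have := hp.isPrimeOn (c := permStructure π) (by simp) he (fun s x y h => by
        have := permStructure_eq_iff.1 h
        tauto)
      exact hcon _ this.1 this.2) Finset.univ (by simpa using by omega) with h | h
  · obtain ⟨A, B, hA, hB, hAB, hunion, h⟩ := h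
    obtain ⟨D, hD, hD', hcut⟩ := exists_cut (R := fun x y => π y < π x)
      (fun x y z h1 h2 => h2.trans h1) (fun x y hxy => by
        have := π.injective.ne hxy
        omega) hA hB hAB hunion (fun a ha b hb => by
        have hab : a ≠ b := fun hab => Finset.disjoint_left.1 hAB ha (hab ▸ hb)
        have := π.injective.ne hab
        have := h a ha b hb
        omega)
    exact not_isPrimeOn_of_cut hn hD hD' (fun d hd x hx => (hcut d hd x hx).1)
      (Or.inr fun d hd x hx => (hcut d hd x hx).2) hπ
  · obtain ⟨A, B, hA, hB, hAB, hunion, h⟩ := h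
    obtain ⟨D, hD, hD', hcut⟩ := exists_cut (R := fun x y => π x < π y)
      (fun x y z h1 h2 => h1.trans h2) (fun x y hxy => by
        have := π.injective.ne hxy
        omega) hA hB hAB hunion (fun a ha b hb => not_not.1 (h a ha b hb))
    exact not_isPrimeOn_of_cut hn hD hD' (fun d hd x hx => (hcut d hd x hx).1)
      (Or.inl fun d hd x hx => (hcut d hd x hx).2) hπ

/-- A simple permutation of length `n ≥ 4` contains a simple permutation of length `n - 1` or
`n - 2`. -/
theorem IsSimple.exists_contains (hπ : IsSimple π) (hn : 4 ≤ n) :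
    ∃ (m : ℕ) (σ : Perm m), IsSimple σ ∧ Contains σ π ∧ n ≤ m + 2 ∧ m < n := by
  have hprime := hπ.isPrimeOn
  suffices h : ∃ Y : Finset (Fin n), IsPrimeOn (permStructure π) Y ∧ n ≤ Y.card + 2 ∧
      Y.card < n by
    obtain ⟨Y, hY, h1, h2⟩ := h
    obtain ⟨σ, hσ, hσπ⟩ := hY.exists_isSimple_contains
    exact ⟨_, σ, hσ, hσπ, h1, h2⟩
  rcases hn.eq_or_lt with rfl | hn
  · obtain ⟨Y, -, hY⟩ := Finset.exists_subset_card_eq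
      (by simp : 2 ≤ (Finset.univ : Finset (Fin 4)).card)
    exact ⟨Y, isPrimeOn_of_card_eq_two hY, by omega, by omega⟩
  · obtain ⟨X, hX, hX4⟩ := hprime.exists_card_eq_four (by omega)
    simpa using hprime.exists_card_add_two isReversible_permStructure hX (by omega)
      (by simpa [hX4] using hn)

theorem Contains.le {m : ℕ} {σ : Perm m} (h : Contains σ π) : m ≤ n := by
  obtain ⟨f, hf, -⟩ := h
  simpa using Fintype.card_le_of_injective f hf.injective

theorem Contains.refl (π : Perm n) : Contains π π :=
  ⟨id, strictMono_id, fun _ _ => Iff.rfl⟩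

theorem Contains.eq {σ : Perm n} (h : Contains σ π) : σ = π := by
  have huniq : ∀ g : Fin n → Fin n, StrictMono g → g = id := fun g hg =>
    (hg.range_inj strictMono_id).1 (by
      rw [(Finite.injective_iff_surjective.1 hg.injective).range_eq, Set.range_id])
  obtain ⟨f, hf, hfσ⟩ := h
  obtain rfl := huniq f hf
  have := huniq (fun i => π (σ.symm i)) fun i j hij => by
    simpa using (hfσ (σ.symm i) (σ.symm j)).2 (by simpa using hij)
  ext i
  simpa using congrArg Fin.val (congrFun this (σ i)).symm

end Permutations

/-- If every simple permutation in the class `C` has length at most `k` (where `k ≥ 1`),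
then every basis element of the wreath closure of `C` is a simple permutation of length
at most `k + 2`. -/
theorem statement11 (k : ℕ) (hk : 1 ≤ k) (C : ∀ n, Set (Perm n)) (hC : IsPermClass C)
    (hsimple : ∀ (n : ℕ) (π : Perm n), π ∈ C n → IsSimple π → n ≤ k) :
    ∀ (n : ℕ) (β : Perm n), InBasis (WreathClosure C) β → IsSimple β ∧ n ≤ k + 2 := by
  rintro n β ⟨hβ, hmin⟩
  have hlow : ∀ (m : ℕ) (σ : Perm m), IsSimple σ → Contains σ β → ¬ Contains β σ → σ ∈ C m :=
    fun m σ hσ hσβ hβσ => hmin m σ hσβ hβσ m σ hσ (Contains.refl σ)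
  have hβs : IsSimple β := by
    simp only [WreathClosure, Set.mem_ofPred_eq, not_forall] at hβ
    obtain ⟨m, σ, hσ, hσβ, hσC⟩ := hβ
    have hβσ : Contains β σ := by
      by_contra h
      exact hσC (hlow m σ hσ hσβ h)
    obtain rfl : m = n := hσβ.le.antisymm hβσ.le
    exact hβσ.eq ▸ hσ
  refine ⟨hβs, ?_⟩
  by_contra! hn
  obtain ⟨m, σ, hσ, hσβ, h1, h2⟩ := hβs.exists_contains (by omega)
  have := hsimple m σ (hlow m σ hσ hσβ fun h => h2.not_ge h.le) hσ
  omega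
end

section
/- The set of properties {AL, BR, ER, {1}} is query-complete, where AL is the set of alternating permutations, BR is the set of permutations of length at least 2 beginning with a rise, ER is the set of permutations of length at least 2 ending with a rise, and {1} consists of the unique permutation of length 1. -/
/-- `π` is alternating: no entry (other than the first and last) lies strictly
between its two neighbours. -/
def Alternating {n : ℕ} (π : Perm n) : Prop :=
  ∀ (i : ℕ) (h : i + 2 < n),
    ¬(π ⟨i, by omega⟩ < π ⟨i + 1, by omega⟩ ∧ π ⟨i + 1, by omega⟩ < π ⟨i + 2, h⟩) ∧
    ¬(π ⟨i + 2, h⟩ < π ⟨i + 1, by omega⟩ ∧ π ⟨i + 1, by omega⟩ < π ⟨i, by omega⟩)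

/-- The property of being alternating. -/
def AL : ∀ n, Set (Perm n) := fun _ => {π | Alternating π}

/-- The property of having length at least `2` and beginning with a rise. -/
def BR : ∀ n, Set (Perm n) := fun n => {π | ∃ h : 1 < n, π ⟨0, by omega⟩ < π ⟨1, h⟩}

/-- The property of having length at least `2` and ending with a rise. -/
def ER : ∀ n, Set (Perm n) := fun n =>
  {π | ∃ h : 1 < n, π ⟨n - 2, by omega⟩ < π ⟨n - 1, by omega⟩}

/-- The property of being the permutation of length `1`. -/
def OneP : ∀ n, Set (Perm n) := fun n => {_π | n = 1}

/-- `π` has a rise at the (zero-based) position `p`. -/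
def HasRiseAt {n : ℕ} (π : Perm n) (p : ℕ) : Prop :=
  ∃ h : p + 1 < n, π ⟨p, by omega⟩ < π ⟨p + 1, h⟩

theorem alternating_iff_hasRiseAt {n : ℕ} (π : Perm n) :
    Alternating π ↔ ∀ p, p + 2 < n → (HasRiseAt π p ↔ ¬ HasRiseAt π (p + 1)) := by
  refine forall_congr' fun p => forall_congr' fun h => ?_
  have h₁ : π ⟨p, by omega⟩ ≠ π ⟨p + 1, by omega⟩ := fun e => by
    simpa using π.injective e
  have h₂ : π ⟨p + 1, by omega⟩ ≠ π ⟨p + 2, h⟩ := fun e => by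
    simpa using π.injective e
  have e₁ : HasRiseAt π p ↔ π ⟨p, by omega⟩ < π ⟨p + 1, by omega⟩ :=
    ⟨fun ⟨_, h⟩ => h, fun h => ⟨by omega, h⟩⟩
  have e₂ : HasRiseAt π (p + 1) ↔ π ⟨p + 1, by omega⟩ < π ⟨p + 2, h⟩ :=
    ⟨fun ⟨_, h⟩ => h, fun h' => ⟨h, h'⟩⟩
  rw [e₁, e₂]
  grind

/-- The position at which block `i` starts, for blocks of lengths `k`. -/
def blockStart {m : ℕ} (k : Fin m → ℕ) (i : Fin m) : ℕ :=
  ∑ t ∈ Finset.univ.filter fun t => t < i, k t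

theorem sum_filter_lt_add_le {m : ℕ} (σ : Perm m) (k : Fin m → ℕ) {a b : Fin m}
    (h : σ a < σ b) :
    (∑ t ∈ Finset.univ.filter fun t => σ t < σ a, k t) + k a ≤
      ∑ t ∈ Finset.univ.filter fun t => σ t < σ b, k t := by
  rw [add_comm, ← Finset.sum_insert (s := Finset.univ.filter fun t => σ t < σ a) (by simp)]
  refine Finset.sum_le_sum_of_subset fun t ht => ?_
  simp only [Finset.mem_insert, Finset.mem_filter, Finset.mem_univ, true_and] at ht ⊢
  rcases ht with rfl | ht
  · exact h
  · exact ht.trans h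

theorem blockStart_zero {m : ℕ} (k : Fin m → ℕ) (h : 0 < m) : blockStart k ⟨0, h⟩ = 0 := by
  simp [blockStart, Fin.lt_def]

theorem blockStart_succ {m : ℕ} (k : Fin m → ℕ) (i : ℕ) (h : i + 1 < m) :
    blockStart k ⟨i + 1, h⟩ = blockStart k ⟨i, by omega⟩ + k ⟨i, by omega⟩ := by
  rw [blockStart, blockStart, add_comm (Finset.sum _ _), ← Finset.sum_insert (by simp)]
  refine Finset.sum_congr ?_ fun _ _ => rfl
  ext t
  simp only [Finset.mem_insert, Finset.mem_filter, Finset.mem_univ, true_and, Fin.lt_def,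
    Fin.ext_iff]
  omega

theorem blockStart_add_le {m : ℕ} (k : Fin m → ℕ) (i : Fin m) :
    blockStart k i + k i ≤ ∑ t, k t := by
  rw [blockStart, add_comm, ← Finset.sum_insert (by simp)]
  exact Finset.sum_le_sum_of_subset (Finset.subset_univ _)

theorem blockStart_add_last {m : ℕ} (k : Fin m → ℕ) (i : ℕ) (h : i < m) (hi : i + 1 = m) :
    blockStart k ⟨i, h⟩ + k ⟨i, h⟩ = ∑ t, k t := by
  rw [blockStart, add_comm, ← Finset.sum_insert (by simp)]
  refine Finset.sum_congr ?_ fun _ _ => rfl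
  ext t
  simp only [Finset.mem_insert, Finset.mem_filter, Finset.mem_univ, true_and, Fin.lt_def,
    Fin.ext_iff, iff_true]
  omega

theorem exists_eq_blockStart_add {m : ℕ} (k : Fin m → ℕ) (p : ℕ) (hp : p < ∑ t, k t) :
    ∃ (i : ℕ) (hi : i < m) (j : ℕ), j < k ⟨i, hi⟩ ∧ p = blockStart k ⟨i, hi⟩ + j := by
  have hm : 0 < m := by
    rcases Nat.eq_zero_or_pos m with rfl | h
    · simp at hp
    · exact h
  obtain ⟨i, hi, hmax⟩ := Finset.exists_max_image
    (Finset.univ.filter fun i => blockStart k i ≤ p) id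
    ⟨⟨0, hm⟩, by simp [blockStart_zero]⟩
  simp only [Finset.mem_filter, Finset.mem_univ, true_and, id] at hi hmax
  refine ⟨i, i.2, p - blockStart k i, ?_, by simp only [Fin.eta]; omega⟩
  by_contra hlt
  simp only [Fin.eta] at hlt
  by_cases hl : (i : ℕ) + 1 < m
  · have h₁ := blockStart_succ k i hl
    have h₂ := hmax ⟨i + 1, hl⟩ (by simp only [Fin.eta] at h₁; omega)
    simp [Fin.le_def] at h₂
  · have h₁ := blockStart_add_last k i i.2 (by omega)
    simp only [Fin.eta] at h₁
    omega

section Inflation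

variable {N m : ℕ} {k : Fin m → ℕ} {σ : Perm m} {α : ∀ i, Perm (k i)} {π : Perm N}

theorem IsInflation.hasRiseAt_within_block (hI : IsInflation σ α π) {i : Fin m} {j p : ℕ}
    (hj : j + 1 < k i) (hp : p = blockStart k i + j) :
    HasRiseAt π p ↔ HasRiseAt (α i) j := by
  obtain ⟨-, hN, hv⟩ := hI
  have hle := blockStart_add_le k i
  have h₁ := hv i ⟨j, by omega⟩ ⟨p, by omega⟩ hp
  have h₂ := hv i ⟨j + 1, hj⟩ ⟨p + 1, by omega⟩ (by simp only [hp, blockStart, add_assoc])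
  constructor
  · rintro ⟨h, hlt⟩
    refine ⟨hj, ?_⟩
    rw [Fin.lt_def] at hlt ⊢
    omega
  · rintro ⟨h, hlt⟩
    refine ⟨by omega, ?_⟩
    rw [Fin.lt_def] at hlt ⊢
    omega

theorem IsInflation.hasRiseAt_between_blocks (hI : IsInflation σ α π) {i p : ℕ}
    (hi : i + 1 < m) (hp : p + 1 = blockStart k ⟨i, by omega⟩ + k ⟨i, by omega⟩) :
    HasRiseAt π p ↔ σ ⟨i, by omega⟩ < σ ⟨i + 1, hi⟩ := by
  obtain ⟨hk, hN, hv⟩ := hI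
  have hs := blockStart_succ k i hi
  have hle := blockStart_add_le k ⟨i + 1, hi⟩
  have hk₀ := hk ⟨i, by omega⟩
  have hk₁ := hk ⟨i + 1, hi⟩
  have h₁ := hv ⟨i, by omega⟩ ⟨k ⟨i, by omega⟩ - 1, by omega⟩ ⟨p, by omega⟩
    (by change p = blockStart k ⟨i, _⟩ + (k ⟨i, _⟩ - 1); omega)
  have h₂ := hv ⟨i + 1, hi⟩ ⟨0, hk₁⟩ ⟨p + 1, by omega⟩
    (by change p + 1 = blockStart k ⟨i + 1, _⟩ + 0; omega)
  have b₁ := (α ⟨i, by omega⟩ ⟨k ⟨i, by omega⟩ - 1, by omega⟩).2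
  have b₂ := (α ⟨i + 1, hi⟩ ⟨0, hk₁⟩).2
  constructor
  · rintro ⟨h, hlt⟩
    rw [Fin.lt_def] at hlt
    by_contra hσ
    have hne : σ ⟨i + 1, hi⟩ ≠ σ ⟨i, by omega⟩ := fun e => by simpa using σ.injective e
    have := sum_filter_lt_add_le σ k (lt_of_le_of_ne (not_lt.mp hσ) hne)
    omega
  · intro hσ
    refine ⟨by omega, ?_⟩
    rw [Fin.lt_def]
    have := sum_filter_lt_add_le σ k hσ
    omega

theorem IsInflation.alternating_block (hI : IsInflation σ α π) (hπ : Alternating π)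
    (i : Fin m) : Alternating (α i) := by
  rw [alternating_iff_hasRiseAt] at hπ ⊢
  intro j hj
  have hle := blockStart_add_le k i
  have hN := hI.2.1
  rw [← hI.hasRiseAt_within_block (by omega) rfl,
    ← hI.hasRiseAt_within_block hj (add_assoc _ _ _)]
  exact hπ _ (by omega)

variable {N' : ℕ} {k' : Fin m → ℕ} {α' : ∀ i, Perm (k' i)} {π' : Perm N'}

theorem IsInflation.mem_OneP_of_mem_OneP (hI : IsInflation σ α π) (hI' : IsInflation σ α' π')
    (hOne : ∀ i, k i = 1 ↔ k' i = 1) (h : π ∈ OneP N) : π' ∈ OneP N' := by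
  obtain ⟨hk, hN, -⟩ := hI
  obtain ⟨hk', hN', -⟩ := hI'
  have h1 : N = 1 := h
  change N' = 1
  have hk1 : ∀ i, k i = 1 := fun i => by
    have := blockStart_add_le k i
    have := hk i
    omega
  rw [hN', ← h1, hN]
  exact Finset.sum_congr rfl fun i _ => by rw [hk1 i, (hOne i).1 (hk1 i)]

theorem IsInflation.mem_BR_of_mem_BR (hI : IsInflation σ α π) (hI' : IsInflation σ α' π')
    (hOne : ∀ i, k i = 1 ↔ k' i = 1) (hBR : ∀ i, α i ∈ BR (k i) ↔ α' i ∈ BR (k' i))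
    (h : π ∈ BR N) : π' ∈ BR N' := by
  have h1 : 1 < N := h.1
  have hN := hI.2.1
  obtain ⟨i, hm, -⟩ := exists_eq_blockStart_add k 0 (by omega)
  replace hm : 0 < m := by omega
  have hk₀ := hI.1 ⟨0, hm⟩
  have hk₀' := hI'.1 ⟨0, hm⟩
  have hs := blockStart_zero k hm
  have hs' := blockStart_zero k' hm
  have hOne₀ := hOne ⟨0, hm⟩
  change HasRiseAt π 0 at h
  change HasRiseAt π' 0
  by_cases hk1 : k ⟨0, hm⟩ = 1
  · have hm1 : 0 + 1 < m := by
      by_contra hm1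
      have := blockStart_add_last k 0 hm (by omega)
      omega
    rw [hI.hasRiseAt_between_blocks hm1 (by omega)] at h
    rwa [hI'.hasRiseAt_between_blocks hm1 (by omega)]
  · rw [hI.hasRiseAt_within_block (i := ⟨0, hm⟩) (j := 0) (by omega) (by omega)] at h
    rw [hI'.hasRiseAt_within_block (i := ⟨0, hm⟩) (j := 0) (by omega) (by omega)]
    exact (hBR _).1 h

theorem mem_ER_iff_hasRiseAt {n p : ℕ} (π : Perm n) (hp : n = p + 2) :
    π ∈ ER n ↔ HasRiseAt π p := by
  subst hp
  exact ⟨fun ⟨_, h⟩ => ⟨by omega, h⟩, fun ⟨_, h⟩ => ⟨by omega, h⟩⟩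

theorem IsInflation.mem_ER_of_mem_ER (hI : IsInflation σ α π) (hI' : IsInflation σ α' π')
    (hOne : ∀ i, k i = 1 ↔ k' i = 1) (hER : ∀ i, α i ∈ ER (k i) ↔ α' i ∈ ER (k' i))
    (h : π ∈ ER N) : π' ∈ ER N' := by
  have h1 : 1 < N := h.1
  have hN := hI.2.1
  have hN' := hI'.2.1
  obtain ⟨i, hm, -⟩ := exists_eq_blockStart_add k 0 (by omega)
  obtain ⟨l, rfl⟩ : ∃ l, m = l + 1 := ⟨m - 1, by omega⟩
  have hl : l < l + 1 := by omega
  have hk := hI.1 ⟨l, hl⟩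
  have hk' := hI'.1 ⟨l, hl⟩
  have hs := blockStart_add_last k l hl rfl
  have hs' := blockStart_add_last k' l hl rfl
  have hOneₗ := hOne ⟨l, hl⟩
  by_cases hk1 : k ⟨l, hl⟩ = 1
  · obtain ⟨q, rfl⟩ : ∃ q, l = q + 1 := by
      refine ⟨l - 1, ?_⟩
      by_contra hq
      obtain rfl : l = 0 := by omega
      have := blockStart_zero k hl
      omega
    have hq := blockStart_succ k q hl
    have hq' := blockStart_succ k' q hl
    have := hI'.1 ⟨q, by omega⟩
    rw [mem_ER_iff_hasRiseAt π (p := N - 2) (by omega),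
      hI.hasRiseAt_between_blocks hl (by omega)] at h
    rwa [mem_ER_iff_hasRiseAt π' (p := N' - 2) (by omega),
      hI'.hasRiseAt_between_blocks hl (by omega)]
  · have := hER ⟨l, hl⟩
    rw [mem_ER_iff_hasRiseAt π (p := N - 2) (by omega),
      hI.hasRiseAt_within_block (i := ⟨l, hl⟩) (j := k ⟨l, hl⟩ - 2) (by omega) (by omega),
      ← mem_ER_iff_hasRiseAt _ (by omega), this] at h
    rwa [mem_ER_iff_hasRiseAt π' (p := N' - 2) (by omega),
      hI'.hasRiseAt_within_block (i := ⟨l, hl⟩) (j := k' ⟨l, hl⟩ - 2) (by omega) (by omega),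
      ← mem_ER_iff_hasRiseAt _ (by omega)]

theorem IsInflation.mem_AL_of_mem_AL (hI : IsInflation σ α π) (hI' : IsInflation σ α' π')
    (hOne : ∀ i, k i = 1 ↔ k' i = 1) (hAL : ∀ i, α i ∈ AL (k i) ↔ α' i ∈ AL (k' i))
    (hBR : ∀ i, α i ∈ BR (k i) ↔ α' i ∈ BR (k' i))
    (hER : ∀ i, α i ∈ ER (k i) ↔ α' i ∈ ER (k' i))
    (h : π ∈ AL N) : π' ∈ AL N' := by
  have hAL' : ∀ i, Alternating (α' i) := fun i => (hAL i).1 (hI.alternating_block h i)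
  have hN := hI.2.1
  have hN' := hI'.2.1
  change Alternating π at h
  change Alternating π'
  rw [alternating_iff_hasRiseAt] at h ⊢
  intro p hp
  obtain ⟨i, hi, j, hj, hpj⟩ := exists_eq_blockStart_add k' p (by omega)
  have hk := hI.1 ⟨i, hi⟩
  have hOneᵢ := hOne ⟨i, hi⟩
  by_cases hj2 : j + 2 < k' ⟨i, hi⟩
  · rw [hI'.hasRiseAt_within_block (by omega) hpj,
      hI'.hasRiseAt_within_block hj2 (by rw [hpj, add_assoc])]
    exact (alternating_iff_hasRiseAt _).1 (hAL' _) j hj2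
  have hi1 : i + 1 < m := by
    by_contra hi1
    have := blockStart_add_last k' i hi (by omega)
    omega
  have hk₁ := hI.1 ⟨i + 1, hi1⟩
  have hk₁' := hI'.1 ⟨i + 1, hi1⟩
  have hle := blockStart_add_le k ⟨i + 1, hi1⟩
  have hs := blockStart_succ k i hi1
  have hs' := blockStart_succ k' i hi1
  by_cases hj1 : j + 2 = k' ⟨i, hi⟩
  · have key := h (blockStart k ⟨i, hi⟩ + (k ⟨i, hi⟩ - 2)) (by omega)
    rw [hI.hasRiseAt_within_block (by omega) rfl,
      hI.hasRiseAt_between_blocks hi1 (by omega),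
      ← mem_ER_iff_hasRiseAt _ (by omega), hER] at key
    rwa [hI'.hasRiseAt_within_block (by omega) hpj,
      hI'.hasRiseAt_between_blocks hi1 (by omega), ← mem_ER_iff_hasRiseAt _ (by omega)]
  have hOne₁ := hOne ⟨i + 1, hi1⟩
  by_cases hk1 : k' ⟨i + 1, hi1⟩ = 1
  · have hi2 : i + 1 + 1 < m := by
      by_contra hi2
      have := blockStart_add_last k' (i + 1) hi1 (by omega)
      omega
    have := hI.1 ⟨i + 1 + 1, hi2⟩
    have := blockStart_add_le k ⟨i + 1 + 1, hi2⟩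
    have := blockStart_succ k (i + 1) hi2
    have key := h (blockStart k ⟨i, hi⟩ + (k ⟨i, hi⟩ - 1)) (by omega)
    rw [hI.hasRiseAt_between_blocks hi1 (by omega),
      hI.hasRiseAt_between_blocks hi2 (by omega)] at key
    rwa [hI'.hasRiseAt_between_blocks hi1 (by omega),
      hI'.hasRiseAt_between_blocks hi2 (by omega)]
  · have key := h (blockStart k ⟨i, hi⟩ + (k ⟨i, hi⟩ - 1)) (by omega)
    rw [hI.hasRiseAt_between_blocks hi1 (by omega),
      hI.hasRiseAt_within_block (i := ⟨i + 1, hi1⟩) (j := 0) (by omega) (by omega)] at key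
    rw [hI'.hasRiseAt_between_blocks hi1 (by omega),
      hI'.hasRiseAt_within_block (i := ⟨i + 1, hi1⟩) (j := 0) (by omega) (by omega)]
    exact key.trans (not_congr (hBR _))

end Inflation

/-- The set of properties `{AL, BR, ER, {1}}` is query-complete. -/
theorem statement13 : QueryComplete {AL, BR, ER, OneP} := by
  intro m σ k k' α α' hQ P hP N N' π π' hI hI'
  have hAL i := hQ i AL (by simp)
  have hBR i := hQ i BR (by simp)
  have hER i := hQ i ER (by simp)
  have hOne : ∀ i, k i = 1 ↔ k' i = 1 := fun i => hQ i OneP (by simp)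
  have hAL' i := (hAL i).symm
  have hBR' i := (hBR i).symm
  have hER' i := (hER i).symm
  have hOne' i := (hOne i).symm
  rcases hP with rfl | rfl | rfl | rfl
  · exact ⟨hI.mem_AL_of_mem_AL hI' hOne hAL hBR hER,
      hI'.mem_AL_of_mem_AL hI hOne' hAL' hBR' hER'⟩
  · exact ⟨hI.mem_BR_of_mem_BR hI' hOne hBR, hI'.mem_BR_of_mem_BR hI hOne' hBR'⟩
  · exact ⟨hI.mem_ER_of_mem_ER hI' hOne hER, hI'.mem_ER_of_mem_ER hI hOne' hER'⟩
  · exact ⟨hI.mem_OneP_of_mem_OneP hI' hOne, hI'.mem_OneP_of_mem_OneP hI hOne'⟩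
end

section
/- Let f = Σ_{n≥1} s_n xⁿ ∈ ℚ[[x]], where s_n is the number of separable permutations of length n, i.e. permutations of length n avoiding both 2413 and 3142. Then f² + (x − 1)f + x = 0; equivalently, the s_n are the large Schröder numbers. -/
/-- The permutation `2413` (`0`-based values `1, 3, 0, 2`). -/
def p2413 : Perm 4 := ⟨![1, 3, 0, 2], ![2, 0, 3, 1], by intro x; fin_cases x <;> decide,
  by intro x; fin_cases x <;> decide⟩

/-- The permutation `3142` (`0`-based values `2, 0, 3, 1`). -/
def p3142 : Perm 4 := ⟨![2, 0, 3, 1], ![1, 3, 0, 2], by intro x; fin_cases x <;> decide,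
  by intro x; fin_cases x <;> decide⟩

/-- The separable permutations: those avoiding both `2413` and `3142`. -/
def Separables : ∀ n, Set (Perm n) := fun _ =>
  {π | ¬ Contains p2413 π ∧ ¬ Contains p3142 π}

namespace SeparablePerm

open Finset

/-- Separability of a permutation, expressed through four positions. -/
def IsSep {n : ℕ} (π : Perm n) : Prop :=
  ∀ a b c d : Fin n, a < b → b < c → c < d →
    ¬ (π c < π a ∧ π a < π d ∧ π d < π b) ∧ ¬ (π b < π d ∧ π d < π a ∧ π a < π c)

lemma contains_p2413_iff {n : ℕ} (π : Perm n) : Contains p2413 π ↔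
    ∃ a b c d : Fin n, a < b ∧ b < c ∧ c < d ∧ π c < π a ∧ π a < π d ∧ π d < π b := by
  constructor
  · rintro ⟨f, hf, h⟩
    exact ⟨f 0, f 1, f 2, f 3, hf (by decide), hf (by decide), hf (by decide),
      (h 2 0).2 (by decide), (h 0 3).2 (by decide), (h 3 1).2 (by decide)⟩
  · rintro ⟨a, b, c, d, hab, hbc, hcd, h1, h2, h3⟩
    refine ⟨![a, b, c, d], ?_, ?_⟩
    · intro s t hst
      fin_cases s <;> fin_cases t <;> simp at hst ⊢ <;> order
    · intro s t
      fin_cases s <;> fin_cases t <;> simp [p2413] <;> order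

lemma contains_p3142_iff {n : ℕ} (π : Perm n) : Contains p3142 π ↔
    ∃ a b c d : Fin n, a < b ∧ b < c ∧ c < d ∧ π b < π d ∧ π d < π a ∧ π a < π c := by
  constructor
  · rintro ⟨f, hf, h⟩
    exact ⟨f 0, f 1, f 2, f 3, hf (by decide), hf (by decide), hf (by decide),
      (h 1 3).2 (by decide), (h 3 0).2 (by decide), (h 0 2).2 (by decide)⟩
  · rintro ⟨a, b, c, d, hab, hbc, hcd, h1, h2, h3⟩
    refine ⟨![a, b, c, d], ?_, ?_⟩
    · intro s t hst
      fin_cases s <;> fin_cases t <;> simp at hst ⊢ <;> order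
    · intro s t
      fin_cases s <;> fin_cases t <;> simp [p3142] <;> order

lemma mem_separables_iff {n : ℕ} (π : Perm n) : π ∈ Separables n ↔ IsSep π := by
  simp only [Separables, Set.mem_ofPred_eq, contains_p2413_iff, contains_p3142_iff, IsSep]
  constructor
  · rintro ⟨h1, h2⟩ a b c d hab hbc hcd
    exact ⟨fun h => h1 ⟨a, b, c, d, hab, hbc, hcd, h⟩, fun h => h2 ⟨a, b, c, d, hab, hbc, hcd, h⟩⟩
  · intro h
    exact ⟨fun ⟨a, b, c, d, hab, hbc, hcd, h'⟩ => (h a b c d hab hbc hcd).1 h',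
      fun ⟨a, b, c, d, hab, hbc, hcd, h'⟩ => (h a b c d hab hbc hcd).2 h'⟩

/-- The first `n` values of `f` split at `k` into a lower and an upper block. -/
def PrefixCut (f : ℕ → ℤ) (n k : ℕ) : Prop :=
  0 < k ∧ k < n ∧ ∀ i j, i < k → k ≤ j → j < n → f i < f j

lemma PrefixCut.extend {f : ℕ → ℤ} {n k : ℕ} (hk : PrefixCut f n k)
    (hmin : ∀ l < k, ¬ PrefixCut f n l) (hne : ∀ i < n, f i ≠ f n)
    (hav : ∀ a b c, a < b → b < c → c < n → ¬ (f b < f n ∧ f n < f a ∧ f a < f c)) :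
    ∃ l, PrefixCut f (n + 1) l ∨ PrefixCut (fun i => - f i) (n + 1) l := by
  obtain ⟨hk0, hkn, hcut⟩ := hk
  by_cases h1 : ∀ i < k, f i < f n
  · refine ⟨k, Or.inl ⟨hk0, by omega, fun i j hi hj hjn => ?_⟩⟩
    rcases Nat.lt_succ_iff_lt_or_eq.1 hjn with h | rfl
    · exact hcut i j hi hj h
    · exact h1 i hi
  by_cases h2 : ∀ i < n, f n < f i
  · refine ⟨n, Or.inr ⟨by omega, by omega, fun i j hi hj hjn => ?_⟩⟩
    obtain rfl : j = n := by omega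
    simpa using h2 i hi
  exfalso
  push Not at h1
  obtain ⟨a, hak, ha⟩ := h1
  have hex : ∃ a, f n < f a := ⟨a, lt_of_le_of_ne ha (hne a (by omega)).symm⟩
  classical
  set m := Nat.find hex with hm
  have hfm : f n < f m := Nat.find_spec hex
  have hma : m ≤ a := Nat.find_min' hex (lt_of_le_of_ne ha (hne a (by omega)).symm)
  have hlow : ∀ i < m, f i < f n := fun i hi =>
    lt_of_le_of_ne (not_lt.1 (Nat.find_min hex hi)) (hne i (by omega))
  have hmid : ∀ i, m ≤ i → i < k → f n < f i := by
    intro i hmi hik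
    rcases hmi.eq_or_lt with rfl | hmi
    · exact hfm
    by_contra hcon
    exact hav m i k hmi hik hkn ⟨lt_of_le_of_ne (not_lt.1 hcon) (hne i (by omega)), hfm,
      hcut m k (by omega) le_rfl hkn⟩
  have hhigh : ∀ i, m ≤ i → i < n → f n < f i := by
    intro i hmi hin
    rcases lt_or_ge i k with h | h
    · exact hmid i hmi h
    · exact hfm.trans (hcut m i (by omega) h hin)
  refine hmin m (by omega) ⟨?_, by omega, fun i j hi hj hjn => (hlow i hi).trans (hhigh j hj hjn)⟩
  by_contra h0
  exact h2 fun i hi => hhigh i (by omega) hi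

lemma exists_prefixCut (f : ℕ → ℤ) (n : ℕ) (hinj : ∀ i j, i < j → j < n → f i ≠ f j)
    (hav : ∀ a b c d, a < b → b < c → c < d → d < n →
      ¬ (f c < f a ∧ f a < f d ∧ f d < f b) ∧ ¬ (f b < f d ∧ f d < f a ∧ f a < f c))
    (hn : 2 ≤ n) : ∃ k, PrefixCut f n k ∨ PrefixCut (fun i => - f i) n k := by
  classical
  induction n, hn using Nat.le_induction with
  | base =>
    refine ⟨1, (hinj 0 1 (by omega) (by omega)).lt_or_gt.imp ?_ ?_⟩ <;> intro h <;>
    · refine ⟨by omega, by omega, fun i j hi hj hj2 => ?_⟩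
      obtain rfl : i = 0 := by omega
      obtain rfl : j = 1 := by omega
      simpa using h
  | succ n hn ih =>
    obtain ⟨k, hk | hk⟩ := ih (fun i j hij hj => hinj i j hij (by omega))
      (fun a b c d hab hbc hcd hd => hav a b c d hab hbc hcd (by omega))
    · have hex : ∃ k, PrefixCut f n k := ⟨k, hk⟩
      exact (Nat.find_spec hex).extend (fun l hl => Nat.find_min hex hl)
        (fun i hi => hinj i n hi (by omega))
        (fun a b c hab hbc hc => (hav a b c n hab hbc hc (by omega)).2)
    · have hex : ∃ k, PrefixCut (fun i => - f i) n k := ⟨k, hk⟩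
      obtain ⟨l, h⟩ := (Nat.find_spec hex).extend (fun l hl => Nat.find_min hex hl)
        (fun i hi => by simpa using hinj i n hi (by omega))
        (fun a b c hab hbc hc h => (hav a b c n hab hbc hc (by omega)).1
          ⟨by linarith [h.2.2], by linarith [h.2.1], by linarith [h.1]⟩)
      simp only [neg_neg] at h
      exact ⟨l, h.symm⟩

/-- The permutation `π` is a direct sum whose first summand has length `k`. -/
def SumCut {n : ℕ} (π : Perm n) (k : ℕ) : Prop :=
  0 < k ∧ k < n ∧ ∀ i j : Fin n, i.val < k → k ≤ j.val → π i < π j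

/-- The complement of a permutation, reversing the order of its values. -/
def compl {n : ℕ} (π : Perm n) : Perm n := π.trans Fin.revPerm

@[simp] lemma compl_apply {n : ℕ} (π : Perm n) (i : Fin n) : compl π i = (π i).rev := rfl

@[simp] lemma compl_compl {n : ℕ} (π : Perm n) : compl (compl π) = π := by
  ext i; simp

lemma IsSep.compl {n : ℕ} {π : Perm n} (h : IsSep π) : IsSep (compl π) := by
  intro a b c d hab hbc hcd
  have := h a b c d hab hbc hcd
  simp only [compl_apply, Fin.rev_lt_rev]
  tauto

lemma IsSep.exists_sumCut {n : ℕ} {π : Perm n} (h : IsSep π) (hn : 2 ≤ n) :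
    (∃ k, SumCut π k) ∨ ∃ k, SumCut (SeparablePerm.compl π) k := by
  obtain ⟨k, hk⟩ := exists_prefixCut (fun i => if hi : i < n then ((π ⟨i, hi⟩).val : ℤ) else 0) n
    (fun i j hij hj => by
      have hne : π ⟨i, by omega⟩ ≠ π ⟨j, hj⟩ := fun e => by
        have := π.injective e
        simp at this
        omega
      simp only [hj, hij.trans hj, dif_pos]
      exact fun e => hne (Fin.ext (by exact_mod_cast e)))
    (fun a b c d hab hbc hcd hd => by
      have := h ⟨a, by omega⟩ ⟨b, by omega⟩ ⟨c, by omega⟩ ⟨d, hd⟩ hab hbc hcd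
      have hc := hcd.trans hd
      have hb := hbc.trans hc
      have ha := hab.trans hb
      simpa only [ha, hb, hc, hd, dif_pos, Nat.cast_lt, Fin.lt_def] using this) hn
  refine hk.imp ?_ ?_ <;> rintro ⟨hk0, hkn, hcut⟩ <;>
  · refine ⟨k, hk0, hkn, fun i j hi hj => ?_⟩
    have := hcut i j hi hj j.2
    simp only [i.2, j.2, dif_pos, Fin.eta] at this
    simp only [compl_apply, Fin.lt_def, Fin.val_rev]
    omega

lemma SumCut.not_compl {n k l : ℕ} {π : Perm n} (h : SumCut π k) : ¬ SumCut (compl π) l := by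
  intro h'
  obtain ⟨h1, h2, h3⟩ := h
  obtain ⟨h4, h5, h6⟩ := h'
  have e1 := h3 ⟨0, by omega⟩ ⟨n - 1, by omega⟩ h1 (by simp; omega)
  have e2 := h6 ⟨0, by omega⟩ ⟨n - 1, by omega⟩ h4 (by simp; omega)
  simp only [compl_apply, Fin.rev_lt_rev] at e2
  order

/-- The direct sum of two permutations. -/
def directSum {m n : ℕ} (σ : Perm m) (τ : Perm n) : Perm (m + n) :=
  finSumFinEquiv.permCongr (Equiv.Perm.sumCongr σ τ)

section directSum

variable {m n : ℕ} (σ : Perm m) (τ : Perm n)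

@[simp] lemma directSum_castAdd (i : Fin m) :
    directSum σ τ (Fin.castAdd n i) = Fin.castAdd n (σ i) := by
  simp [directSum, Equiv.permCongr_apply]

@[simp] lemma directSum_natAdd (i : Fin n) :
    directSum σ τ (Fin.natAdd m i) = Fin.natAdd m (τ i) := by
  simp [directSum, Equiv.permCongr_apply]

lemma directSum_injective :
    Function.Injective fun p : Perm m × Perm n => directSum p.1 p.2 :=
  finSumFinEquiv.permCongr.injective.comp Equiv.Perm.sumCongrHom_injective

lemma isSep_directSum_iff : IsSep (directSum σ τ) ↔ IsSep σ ∧ IsSep τ := by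
  constructor
  · intro h
    refine ⟨fun a b c d hab hbc hcd => ?_, fun a b c d hab hbc hcd => ?_⟩
    · simpa [Fin.lt_def, -Fin.val_fin_lt] using h (Fin.castAdd n a) (Fin.castAdd n b) (Fin.castAdd n c)
        (Fin.castAdd n d) hab hbc hcd
    · simpa [Fin.lt_def, -Fin.val_fin_lt] using h (Fin.natAdd m a) (Fin.natAdd m b) (Fin.natAdd m c)
        (Fin.natAdd m d) (by simpa using hab) (by simpa using hbc) (by simpa using hcd)
  · rintro ⟨h1, h2⟩ a b c d
    induction a using Fin.addCases <;> induction b using Fin.addCases <;>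
    induction c using Fin.addCases <;> induction d using Fin.addCases <;>
    rename_i a b c d <;>
    first
    | simpa [Fin.lt_def, -Fin.val_fin_lt] using h1 a b c d
    | simpa [Fin.lt_def, -Fin.val_fin_lt] using h2 a b c d
    | (simp only [directSum_castAdd, directSum_natAdd, Fin.lt_def, Fin.val_castAdd,
        Fin.val_natAdd]
       omega)

lemma sumCut_directSum_self (hm : 0 < m) (hn : 0 < n) : SumCut (directSum σ τ) m := by
  refine ⟨hm, by omega, fun i j => ?_⟩
  induction i using Fin.addCases <;> induction j using Fin.addCases <;>
    simp only [directSum_castAdd, directSum_natAdd, Fin.lt_def, Fin.val_castAdd,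
      Fin.val_natAdd] <;>
    omega

lemma sumCut_directSum_iff_of_lt (hn : 0 < n) {k : ℕ} (hk : k < m) :
    SumCut (directSum σ τ) k ↔ SumCut σ k := by
  constructor
  · rintro ⟨h1, h2, h3⟩
    refine ⟨h1, hk, fun i j hi hj => ?_⟩
    simpa [Fin.lt_def, -Fin.val_fin_lt] using h3 (Fin.castAdd n i) (Fin.castAdd n j) hi hj
  · rintro ⟨h1, h2, h3⟩
    refine ⟨h1, by omega, fun i j => ?_⟩
    induction i using Fin.addCases <;> induction j using Fin.addCases <;> rename_i i j
    · simpa [Fin.lt_def, -Fin.val_fin_lt] using h3 i j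
    all_goals (simp [Fin.lt_def, -Fin.val_fin_lt]; omega)

lemma SumCut.exists_directSum {π : Perm (m + n)} (h : SumCut π m) :
    ∃ σ : Perm m, ∃ τ : Perm n, directSum σ τ = π := by
  have hlt : ∀ a : Fin m, (π (Fin.castAdd n a)).val < m := by
    intro a
    by_contra hcon
    have hsub : (univ.image fun b : Fin n => π (Fin.natAdd m b)) ⊆
        Ioi (π (Fin.castAdd n a)) := by
      intro x hx
      obtain ⟨b, -, rfl⟩ := mem_image.1 hx
      exact mem_Ioi.2 (h.2.2 _ _ (by simp) (by simp))
    have hcard := card_le_card hsub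
    have hinj : Function.Injective fun b : Fin n => π (Fin.natAdd m b) :=
      π.injective.comp (Fin.natAdd_injective n m)
    rw [card_image_of_injective _ hinj, Fin.card_Ioi, card_univ, Fintype.card_fin] at hcard
    have := (π (Fin.castAdd n a)).2
    have := h.2.1
    omega
  obtain ⟨⟨σ, τ⟩, hp⟩ : finSumFinEquiv.permCongr.symm π ∈
      (Equiv.Perm.sumCongrHom (Fin m) (Fin n)).range := by
    apply Equiv.Perm.mem_sumCongrHom_range_of_perm_mapsTo_inl
    rintro _ ⟨a, rfl⟩
    refine ⟨⟨_, hlt a⟩, ?_⟩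
    apply finSumFinEquiv.injective
    simp
  refine ⟨σ, τ, ?_⟩
  rw [← Equiv.apply_symm_apply finSumFinEquiv.permCongr π, ← hp]
  rfl

end directSum

/-- The smallest cut of `π` is `k`. -/
def MinSumCut {n : ℕ} (π : Perm n) (k : ℕ) : Prop :=
  SumCut π k ∧ ∀ l < k, ¬ SumCut π l

open scoped Classical in
/-- The separable permutations of length `n`, as a finite set. -/
noncomputable def sep (n : ℕ) : Finset (Perm n) := {π | IsSep π}

open scoped Classical in
/-- The sum-decomposable separable permutations of length `n`. -/
noncomputable def sepDec (n : ℕ) : Finset (Perm n) := {π ∈ sep n | ∃ k, SumCut π k}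

open scoped Classical in
/-- The sum-indecomposable separable permutations of length `n`. -/
noncomputable def sepIndec (n : ℕ) : Finset (Perm n) := {π ∈ sep n | ¬ ∃ k, SumCut π k}

lemma card_sepDec_add_card_sepIndec (n : ℕ) : #(sepDec n) + #(sepIndec n) = #(sep n) := by
  classical
  exact card_filter_add_card_filter_not _

lemma card_sep_of_two_le {n : ℕ} (hn : 2 ≤ n) : #(sep n) = 2 * #(sepDec n) := by
  classical
  have key : #(sepIndec n) = #(sepDec n) := by
    refine card_bij' (fun π _ => compl π) (fun π _ => compl π) ?_ ?_ (by simp) (by simp)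
    · intro π hπ
      simp only [sepIndec, sepDec, sep, mem_filter, mem_univ, true_and] at hπ ⊢
      exact ⟨hπ.1.compl, (hπ.1.exists_sumCut hn).resolve_left hπ.2⟩
    · intro π hπ
      simp only [sepIndec, sepDec, sep, mem_filter, mem_univ, true_and] at hπ ⊢
      exact ⟨hπ.1.compl, fun ⟨l, hl⟩ => hπ.2.elim fun k hk => hk.not_compl hl⟩
  have := card_sepDec_add_card_sepIndec n
  omega

open scoped Classical in
lemma card_filter_minSumCut {m n : ℕ} (hm : 0 < m) (hn : 0 < n) :
    #{π ∈ sep (m + n) | MinSumCut π m} = #(sepIndec m) * #(sep n) := by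
  rw [← card_product, ← card_image_of_injective _ directSum_injective]
  congr 1
  ext π
  simp only [mem_filter, mem_image, mem_product, Prod.exists, sepIndec, sep, mem_univ, true_and]
  have hmin (σ : Perm m) (τ : Perm n) :
      MinSumCut (directSum σ τ) m ↔ ¬ ∃ k, SumCut σ k := by
    simp only [MinSumCut, sumCut_directSum_self σ τ hm hn, true_and, not_exists]
    exact ⟨fun h k hk => h k hk.2.1 ((sumCut_directSum_iff_of_lt σ τ hn hk.2.1).2 hk),
      fun h k hk h' => h k ((sumCut_directSum_iff_of_lt σ τ hn hk).1 h')⟩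
  constructor
  · rintro ⟨h1, h2⟩
    obtain ⟨σ, τ, rfl⟩ := h2.1.exists_directSum
    rw [isSep_directSum_iff] at h1
    exact ⟨σ, τ, ⟨⟨h1.1, (hmin σ τ).1 h2⟩, h1.2⟩, rfl⟩
  · rintro ⟨σ, τ, ⟨⟨h1, h2⟩, h3⟩, rfl⟩
    exact ⟨(isSep_directSum_iff σ τ).2 ⟨h1, h3⟩, (hmin σ τ).2 h2⟩

lemma card_sepDec (n : ℕ) : #(sepDec n) = ∑ p ∈ antidiagonal n,
    if p.1 = 0 ∨ p.2 = 0 then 0 else #(sepIndec p.1) * #(sep p.2) := by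
  classical
  have hunion : sepDec n = (antidiagonal n).biUnion fun p => {π ∈ sep n | MinSumCut π p.1} := by
    ext π
    simp only [sepDec, mem_filter, mem_biUnion, HasAntidiagonal.mem_antidiagonal]
    constructor
    · rintro ⟨h, hex⟩
      have hs := Nat.find_spec hex
      exact ⟨(Nat.find hex, n - Nat.find hex), by have := hs.2.1; dsimp only; omega, h, hs,
        fun l hl => Nat.find_min hex hl⟩
    · rintro ⟨p, -, h, hp⟩
      exact ⟨h, p.1, hp.1⟩
  rw [hunion, card_biUnion]
  · refine sum_congr rfl ?_
    rintro ⟨i, j⟩ hij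
    obtain rfl := HasAntidiagonal.mem_antidiagonal.1 hij
    dsimp only
    split_ifs with h0
    · rw [card_eq_zero, filter_eq_empty_iff]
      rintro π - ⟨⟨h1, h2, -⟩, -⟩
      omega
    · exact card_filter_minSumCut (by omega) (by omega)
  · intro p hp q hq hpq
    refine disjoint_left.2 fun π hπ hπ' => hpq ?_
    have h1 := (mem_filter.1 hπ).2
    have h2 := (mem_filter.1 hπ').2
    have := HasAntidiagonal.mem_antidiagonal.1 hp
    have := HasAntidiagonal.mem_antidiagonal.1 hq
    have e1 : ¬ p.1 < q.1 := fun h => h2.2 _ h h1.1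
    have e2 : ¬ q.1 < p.1 := fun h => h1.2 _ h h2.1
    ext <;> omega

lemma card_separables (n : ℕ) : Nat.card (Separables n) = #(sep n) := by
  classical
  rw [Nat.subtype_card]
  intro π
  simp only [sep, mem_filter, mem_univ, true_and]
  exact (mem_separables_iff π).symm

lemma card_sepDec_of_lt_two {n : ℕ} (hn : n < 2) : #(sepDec n) = 0 := by
  classical
  rw [card_eq_zero, sepDec, filter_eq_empty_iff]
  rintro π - ⟨k, h1, h2, -⟩
  omega

lemma card_sep_one : #(sep 1) = 1 := by
  classical
  rw [sep, filter_true_of_mem, card_univ, Fintype.card_perm, Fintype.card_fin]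
  · rfl
  · intro π _ a b c d hab
    omega

/-- The generating function of the sum-decomposable separable permutations. -/
noncomputable def decGenFun : PowerSeries ℚ := PowerSeries.mk fun n => (#(sepDec n) : ℚ)

lemma genFun_separables_eq : genFun Separables = PowerSeries.X + 2 * decGenFun := by
  rw [two_mul]
  ext n
  simp only [genFun, decGenFun, map_add, PowerSeries.coeff_mk, PowerSeries.coeff_X,
    card_separables]
  rcases Nat.lt_or_ge n 2 with hn | hn
  · interval_cases n <;> simp [card_sepDec_of_lt_two, card_sep_one]
  · rw [if_neg (by omega), if_neg (by omega), card_sep_of_two_le hn]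
    push_cast
    ring

lemma decGenFun_eq : decGenFun = (genFun Separables - decGenFun) * genFun Separables := by
  ext n
  simp only [genFun, decGenFun, PowerSeries.coeff_mul, map_sub, PowerSeries.coeff_mk,
    card_separables]
  rw [card_sepDec, Nat.cast_sum]
  refine sum_congr rfl ?_
  rintro ⟨i, j⟩ -
  dsimp only
  rcases Nat.eq_zero_or_pos i with rfl | hi
  · simp [card_sepDec_of_lt_two]
  rcases Nat.eq_zero_or_pos j with rfl | hj
  · simp
  rw [if_neg (by omega), if_neg (by omega), if_neg (by omega), ← card_sepDec_add_card_sepIndec i]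
  push_cast
  ring

end SeparablePerm

/-- The generating function `f` of the separable permutations satisfies
`f² + (x − 1)·f + x = 0`; equivalently, it counts the large Schröder numbers. -/
theorem statement18 :
    genFun Separables ^ 2 + (PowerSeries.X - 1) * genFun Separables +
      (PowerSeries.X : PowerSeries ℚ) = 0 := by
  linear_combination (-1 - genFun Separables) * SeparablePerm.genFun_separables_eq -
    2 * SeparablePerm.decGenFun_eq
end
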